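/- arXiv:2509.17587 — 2 statements merged into one kernel-verified Lean document; each statement's English description precedes it below -/
import Mathlib

section
/- The subgroup G of the symmetric group on 44 points generated by the four permutations g1 = (1,2)(43,44), g2 = (1,2)(21,22), g3 = (1,39,13,43,25)(2,40,14,44,26)(3,37,15,41,27)(4,38,16,42,28)(5,35,23,17,31)(6,36,24,18,32)(7,33,21,19,29)(8,34,22,20,30), and g4 = (1,23,27,11,41)(2,24,28,12,42)(3,22,26,10,44,4,21,25,9,43)(5,16,20,40,32,6,15,19,39,31)(7,13,17,37,29)(8,14,18,38,30) has order 16609443840. -/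
/-- `(1,2)(43,44)` as a permutation of 44 points (the label `44` denotes `0 : Fin 44`). -/
def g1 : Equiv.Perm (Fin 44) := c[1, 2] * c[43, 44]

/-- `(1,2)(21,22)`. -/
def g2 : Equiv.Perm (Fin 44) := c[1, 2] * c[21, 22]

/-- `(1,39,13,43,25)(2,40,14,44,26)(3,37,15,41,27)(4,38,16,42,28)(5,35,23,17,31)
(6,36,24,18,32)(7,33,21,19,29)(8,34,22,20,30)`. -/
def g3 : Equiv.Perm (Fin 44) :=
  c[1, 39, 13, 43, 25] * c[2, 40, 14, 44, 26] * c[3, 37, 15, 41, 27] * c[4, 38, 16, 42, 28] *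
    c[5, 35, 23, 17, 31] * c[6, 36, 24, 18, 32] * c[7, 33, 21, 19, 29] * c[8, 34, 22, 20, 30]

/-- `(1,23,27,11,41)(2,24,28,12,42)(3,22,26,10,44,4,21,25,9,43)
(5,16,20,40,32,6,15,19,39,31)(7,13,17,37,29)(8,14,18,38,30)`. -/
def g4 : Equiv.Perm (Fin 44) :=
  c[1, 23, 27, 11, 41] * c[2, 24, 28, 12, 42] * c[3, 22, 26, 10, 44, 4, 21, 25, 9, 43] *
    c[5, 16, 20, 40, 32, 6, 15, 19, 39, 31] * c[7, 13, 17, 37, 29] * c[8, 14, 18, 38, 30]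

/-- `G_MacHale` is the subgroup generated by `g1`, `g2`, `g3`, `g4`. -/
def GMacHale : Subgroup (Equiv.Perm (Fin 44)) := Subgroup.closure {g1, g2, g3, g4}

namespace MH

/-- The `i`-th digit in base 47. -/
def get (p i : ℕ) : ℕ := Nat.mod (Nat.div p (Nat.pow (nat_lit 47) i)) (nat_lit 47)

theorem get_def (p i : ℕ) : get p i = p / 47 ^ i % 47 := rfl

/-- Encode a list of digits in base 47. -/
def enc : List ℕ → ℕ
  | [] => 0
  | a :: l => a + 47 * enc l

/-- Index list. -/
def idx : List ℕ := [0, 1, 2, 3, 4, 5, 6, 7, 8, 9, 10, 11, 12, 13, 14, 15, 16, 17, 18, 19, 20, 21,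
  22, 23, 24, 25, 26, 27, 28, 29, 30, 31, 32, 33, 34, 35, 36, 37, 38, 39, 40, 41, 42, 43]

/-- Powers of 47. -/
def pows : List ℕ := [nat_lit 0x1, nat_lit 0x2f, nat_lit 0x8a1, nat_lit 0x1958f, nat_lit 0x4a7541, nat_lit
  0xdab86ef, nat_lit 0x2827dc5e1, nat_lit 0x75f517544f, nat_lit 0x15a7ff487a81, nat_lit
  0x3f9d7de4e7daf, nat_lit 0xbadea1d0691321, nat_lit 0x224edfb5434a830f, nat_lit
  0x64c7b12475aae0fc1, nat_lit 0x1280a985b19a5f4e46f, nat_lit 0x3659f1f8b9b577f5f061,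
  nat_lit 0x9fa836caa1851062721cf, nat_lit 0x1d4fe20f33a76e0212f3501, nat_lit
  0x561aa80ca7bbd32617aabb2f, nat_lit 0xfcee4da52cb7bc3fe58585da1, nat_lit
  0x2e6fc0415335bb8fbb23839308f, nat_lit 0x886844bfe46dd6f635b8527fea41, nat_lit
  0x190b249f3af02a7733dcd7257c01ef, nat_lit 0x4990bb93bd217cbe2858b7fe1c45ae1, nat_lit
  0xd8192701fb925e6e96849c7a730caf4f, nat_lit 0x27ac9e295d2fdf564da258ba7b1f542f81,
  nat_lit 0x748b109981bca00d840ce4a3c9ac074b8af, nat_lit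
  0x1565880c2ed1a1627b3e5dfa12069556de821, nat_lit
  0x3eda3fa3c987ca114a07340e94f356af2d9e0f, nat_lit
  0xb8a11af11ffee192c97528ead58acea296004c1, nat_lit
  0x21e593f244dfcb69f2fc82831d347befd98a0df6f, nat_lit
  0x63926297aa51658739c5bf6125ca2c108f05890561, nat_lit
  0x1247e019d844f1a3d39b4e22d5f01e170a420427fccf, nat_lit
  0x35b3224beb4a85d13d98358654715863ae21ec3576a01, nat_lit
  0x9dbe34bf032ae916a4ef1d3a980cf3a4cf83a5dd0c762f, nat_lit
  0x1cf5ebaf1194e0cb2847e65dc1ea60bb42192b739549b2a1, nat_lit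
  0x5512645243a55454c65334b369a07c261229efa386887cb8f, nat_lit
  0xf9e606b1a6b5a7b906946acf06476cafd55b2ff05b30ee5f41, nat_lit
  0x2de13b3a9d9b59caf8353f9c02271cf4482bbdcd20bdfbc37cef, nat_lit
  0x86c59dfc2ef857c4391c6ada4652e50d94007d8a902e138e3efe1, nat_lit
  0x18be48014c9f981d067c379e12e9380d7e2c170c707875971d90a4f, nat_lit
  0x48aef383d114ced5430ce360578d14a7a2a183b48a61d96be6d8e481, nat_lit
  0xd581eb53362d1f9274f5dbeb012e6cac6dba72e2567f6eacf61d1f3af, nat_lit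
  0x2732da3446f248cbe3792360253785f3a8253b178de16551c12f58bbd21, nat_lit
  0x732560f99067b5d6ec33d7ea6d53197bbded5d9530c619a0277b14a7b90f]

/-- Composition of codes, digit by digit. -/
def go (p q : ℕ) (l : List ℕ) : ℕ :=
  List.rec (nat_lit 0) (fun i _ r => Nat.add (Nat.mod (Nat.div p (Nat.pow (nat_lit 47)
    (Nat.mod (Nat.div q i) (nat_lit 47)))) (nat_lit 47)) (Nat.mul (nat_lit 47) r)) l

/-- Evaluate the argument first. -/
def force {α : Type} (n : ℕ) (f : ℕ → α) : α :=
  Nat.rec (f (nat_lit 0)) (fun k _ => f (Nat.succ k)) n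

theorem force_eq {α : Type} (n : ℕ) (f : ℕ → α) : force n f = f n := by
  cases n <;> rfl

/-- Composition of codes. -/
def comp (p q : ℕ) : ℕ := force p fun p => force q fun q => go p q pows

/-- Code of the identity. -/
def idc : ℕ := nat_lit 0x13c05b7c8c37c558d85cd1b45d2144dd77a5bc0cdaf8099a46d1512cc6984a

theorem get_enc (l : List ℕ) (h : ∀ a ∈ l, a < 47) (i : ℕ) (hi : i < l.length) :
    get (enc l) i = l[i] := by
  induction l generalizing i with
  | nil => simp at hi
  | cons a l ih =>
    have ha := h a (by simp)
    cases i with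
    | zero => simp [get_def, enc]; omega
    | succ i =>
      have := ih (fun b hb => h b (by simp [hb])) i (by simpa using hi)
      simp only [List.getElem_cons_succ]
      rw [← this, get_def, get_def, enc, pow_succ', ← Nat.div_div_eq_div_mul]
      congr 3
      omega

theorem idx_eq : idx = List.range 44 := by decide

theorem go_eq (p q : ℕ) (l : List ℕ) :
    go p q (l.map fun i => 47 ^ i) = enc (l.map fun i => get p (get q i)) := by
  induction l with
  | nil => rfl
  | cons a l ih =>
    simp only [List.map_cons, enc]
    rw [← ih]
    rfl

theorem pows_eq : pows = idx.map fun i => 47 ^ i := by decide +kernel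

theorem comp_eq (p q : ℕ) : comp p q = enc (idx.map fun i => get p (get q i)) := by
  rw [comp, force_eq, force_eq, pows_eq, go_eq]

theorem get_comp (p q i : ℕ) (hi : i < 44) : get (comp p q) i = get p (get q i) := by
  rw [comp_eq, get_enc]
  · simp [idx_eq]
  · intro a ha
    simp only [List.mem_map] at ha
    obtain ⟨j, -, rfl⟩ := ha
    exact Nat.mod_lt _ (by norm_num)
  · simpa [idx_eq] using hi

abbrev P := Equiv.Perm (Fin 44)

/-- The code `p` represents the permutation `σ`. -/
def Rep (p : ℕ) (σ : P) : Prop := ∀ i : Fin 44, get p i.val = (σ i).val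

theorem Rep.inj {p : ℕ} {σ τ : P} (h : Rep p σ) (h' : Rep p τ) : σ = τ := by
  ext i
  rw [← h i, ← h' i]

theorem Rep.comp {p q : ℕ} {σ τ : P} (h : Rep p σ) (h' : Rep q τ) : Rep (comp p q) (σ * τ) := by
  intro i
  rw [get_comp _ _ _ i.2, h' i, h (τ i)]
  rfl

theorem rep_id : Rep idc 1 := by
  unfold Rep
  decide +kernel

theorem Rep.inv {p q : ℕ} {σ : P} (h : Rep p σ) (h' : MH.comp q p = idc) : Rep q σ⁻¹ := by
  intro i
  have h1 := get_comp q p (σ⁻¹ i).val (σ⁻¹ i).2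
  rw [h', rep_id, h (σ⁻¹ i)] at h1
  simpa using h1.symm

/-- `p` represents an element of `H`. -/
def Good (H : Subgroup P) (p : ℕ) : Prop := ∃ σ ∈ H, Rep p σ

theorem Good.comp {H : Subgroup P} {p q : ℕ} (h : Good H p) (h' : Good H q) :
    Good H (comp p q) := by
  obtain ⟨σ, hσ, h⟩ := h
  obtain ⟨τ, hτ, h'⟩ := h'
  exact ⟨_, mul_mem hσ hτ, h.comp h'⟩

theorem Good.inv {H : Subgroup P} {p q : ℕ} (h : Good H p) (h' : MH.comp q p = idc) :
    Good H q := by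
  obtain ⟨σ, hσ, h⟩ := h
  exact ⟨_, inv_mem hσ, h.inv h'⟩

theorem good_id (H : Subgroup P) : Good H idc := ⟨1, one_mem H, rep_id⟩

theorem Good.getD {H : Subgroup P} {l : List ℕ} (h : ∀ p ∈ l, Good H p) (i : ℕ) :
    Good H (l.getD i idc) := by
  by_cases hi : i < l.length
  · rw [List.getD_eq_getElem _ _ hi]
    exact h _ (List.getElem_mem hi)
  · rw [List.getD_eq_default _ _ (by omega)]
    exact good_id H

/-- One level of a stabilizer chain: base point, generators, transversal
(code, code of the inverse), instructions for the transversal and for the next generators. -/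
structure Lvl where
  b : ℕ
  A : List ℕ
  T : List (ℕ × ℕ × ℕ)
  I : List (ℕ × ℕ)
  W : List (ℕ × ℕ × ℕ)

/-- Generators at the top of a chain. -/
def gens : List Lvl → List ℕ
  | [] => []
  | L :: _ => L.A

/-- Try the transversal elements whose label is `x`. -/
def tryT (x : ℕ) (f : ℕ → Bool) (l : List (ℕ × ℕ × ℕ)) : Bool :=
  List.rec false (fun t _ r => Bool.rec r (f t.2.1) (Nat.beq t.2.2 x)) l

/-- Sifting. -/
def sift (l : List Lvl) : ℕ → Bool :=
  List.rec (fun p => Nat.beq p idc)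
    (fun L _ r p => force p fun p => force (get p L.b) fun x =>
      Bool.rec (tryT x (fun u => r (comp u p)) L.T) (r p) (Nat.beq x L.b)) l

theorem brec {a b c : Bool} (h : (Bool.rec a b c : Bool) = true) : a = true ∨ b = true := by
  cases c
  · exact Or.inl h
  · exact Or.inr h

theorem try_sound {x : ℕ} {f : ℕ → Bool} {l : List (ℕ × ℕ × ℕ)} (h : tryT x f l = true) :
    ∃ t ∈ l, f t.2.1 = true := by
  induction l with
  | nil => cases h
  | cons t l ih =>
    change (Bool.rec (tryT x f l) (f t.2.1) (Nat.beq t.2.2 x) : Bool) = true at h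
    rcases brec h with h | h
    · obtain ⟨u, hu, h'⟩ := ih h
      exact ⟨u, by simp [hu], h'⟩
    · exact ⟨t, by simp, h⟩

theorem sift_cons {L : Lvl} {ls : List Lvl} {p : ℕ} (h : sift (L :: ls) p = true) :
    sift ls p = true ∨ ∃ t ∈ L.T, sift ls (comp t.2.1 p) = true := by
  change (force p fun p => force (get p L.b) fun x =>
      Bool.rec (tryT x (fun u => sift ls (comp u p)) L.T) (sift ls p) (Nat.beq x L.b)) = true at h
  rw [force_eq, force_eq] at h
  rcases brec h with h | h
  · exact Or.inr (try_sound h)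
  · exact Or.inl h

/-- Check that the transversal is generated by `A`. -/
def chkT (A : List ℕ) : List ℕ → List (ℕ × ℕ × ℕ) → List (ℕ × ℕ) → Bool
  | _, [], _ => true
  | _, _ :: _, [] => false
  | acc, t :: ts, i :: is =>
    Nat.beq (comp (A.getD i.1 idc) (acc.getD i.2 idc)) t.1 && Nat.beq (comp t.2.1 t.1) idc &&
      chkT A (t.1 :: acc) ts is

/-- Check that the next generators are products. -/
def chkW (L : Lvl) : List ℕ → List (ℕ × ℕ × ℕ) → Bool
  | [], _ => true
  | _ :: _, [] => false
  | a :: as, w :: ws =>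
    Nat.beq (comp ((L.T.map fun t => t.2.1).getD w.1 idc)
      (comp (L.A.getD w.2.1 idc) ((L.T.map fun t => t.1).getD w.2.2 idc))) a && chkW L as ws

/-- Distinctness. -/
def chkN : List ℕ → Bool
  | [] => true
  | a :: l => l.all (fun x => !Nat.beq a x) && chkN l

/-- Check of a full chain. -/
def chk : List Lvl → Bool
  | [] => true
  | L :: ls =>
    Nat.ble (Nat.succ L.b) 44 && chkT L.A [] L.T L.I && chkW L (gens ls) L.W &&
    chkN (L.T.map fun t => get t.1 L.b) &&
    (L.T.any fun t => Nat.beq t.1 idc) &&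
    ((gens ls).all fun a => Nat.beq (get a L.b) L.b) &&
    (L.A.all fun s => L.T.all fun t => sift (L :: ls) (comp s t.1)) && chk ls

/-- The group of a chain. -/
def grp (ls : List Lvl) : Subgroup P := Subgroup.closure {σ | ∃ p ∈ gens ls, Rep p σ}

theorem chkT_sound {H : Subgroup P} {A : List ℕ} (hA : ∀ p ∈ A, Good H p) (T : List (ℕ × ℕ × ℕ)) :
    ∀ (acc : List ℕ) (I : List (ℕ × ℕ)), (∀ p ∈ acc, Good H p) → chkT A acc T I = true →
      ∀ t ∈ T, Good H t.1 ∧ comp t.2.1 t.1 = idc := by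
  induction T with
  | nil => simp
  | cons t ts ih =>
    intro acc I hacc h
    cases I with
    | nil => simp [chkT] at h
    | cons i is =>
      simp only [chkT, Bool.and_eq_true, Nat.beq_eq] at h
      obtain ⟨⟨h1, h2⟩, h3⟩ := h
      have g1 : Good H t.1 := h1 ▸ (Good.getD hA _).comp (Good.getD hacc _)
      have := ih (t.1 :: acc) is (by simpa using ⟨g1, hacc⟩) h3
      intro u hu
      rcases List.mem_cons.1 hu with rfl | hu
      · exact ⟨g1, h2⟩
      · exact this u hu

theorem chkW_sound {H : Subgroup P} {L : Lvl} (hA : ∀ p ∈ L.A, Good H p)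
    (hT : ∀ t ∈ L.T, Good H t.1 ∧ comp t.2.1 t.1 = idc) (as : List ℕ) :
    ∀ ws, chkW L as ws = true → ∀ a ∈ as, Good H a := by
  induction as with
  | nil => simp
  | cons a as ih =>
    intro ws h
    cases ws with
    | nil => simp [chkW] at h
    | cons w ws =>
      simp only [chkW, Bool.and_eq_true, Nat.beq_eq] at h
      intro u hu
      rcases List.mem_cons.1 hu with rfl | hu
      · rw [← h.1]
        refine (Good.getD ?_ _).comp ((Good.getD hA _).comp (Good.getD ?_ _))
        · intro p hp
          obtain ⟨t, ht, rfl⟩ := List.mem_map.1 hp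
          exact (hT t ht).1.inv (hT t ht).2
        · intro p hp
          obtain ⟨t, ht, rfl⟩ := List.mem_map.1 hp
          exact (hT t ht).1
      · exact ih ws h.2 u hu

theorem chkN_sound (l : List ℕ) (h : chkN l = true) : l.Nodup := by
  induction l with
  | nil => simp
  | cons a l ih =>
    simp only [chkN, Bool.and_eq_true, List.all_eq_true, Bool.not_eq_true'] at h
    refine List.nodup_cons.2 ⟨fun ha => ?_, ih h.2⟩
    have := h.1 a ha
    simp at this

/-- Validity of the generators. -/
def Valid (ls : List Lvl) : Prop := ∀ p ∈ gens ls, Good (grp ls) p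

theorem valid_of {ls : List Lvl} {H : Subgroup P} (h : ∀ p ∈ gens ls, Good H p) :
    Valid ls ∧ grp ls ≤ H := by
  constructor
  · intro p hp
    obtain ⟨σ, -, h1⟩ := h p hp
    exact ⟨σ, Subgroup.subset_closure ⟨p, hp, h1⟩, h1⟩
  · refine (Subgroup.closure_le _).2 ?_
    rintro σ ⟨p, hp, h1⟩
    obtain ⟨τ, hτ, h2⟩ := h p hp
    rw [h1.inj h2]
    exact hτ

theorem chk_next {L : Lvl} {ls : List Lvl} (hv : Valid (L :: ls)) (h : chk (L :: ls) = true) :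
    (∀ t ∈ L.T, Good (grp (L :: ls)) t.1 ∧ comp t.2.1 t.1 = idc) ∧ Valid ls ∧
      grp ls ≤ grp (L :: ls) := by
  simp only [chk, Bool.and_eq_true] at h
  have hT := chkT_sound hv _ _ _ (by simp) h.1.1.1.1.1.1.2
  exact ⟨hT, valid_of (chkW_sound hv hT _ _ h.1.1.1.1.1.2)⟩

theorem sift_sound (ls : List Lvl) : Valid ls → chk ls = true → ∀ p σ, Rep p σ →
    sift ls p = true → σ ∈ grp ls := by
  induction ls with
  | nil =>
    intro _ _ p σ hp h
    replace h : p = idc := Nat.eq_of_beq_eq_true h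
    subst h
    rw [hp.inj rep_id]
    exact one_mem _
  | cons L ls ih =>
    intro hv hc p σ hp h
    obtain ⟨hT, hv', hle⟩ := chk_next hv hc
    have hc' : chk ls = true := by
      simp only [chk, Bool.and_eq_true] at hc
      exact hc.2
    have ih := ih hv' hc'
    rcases sift_cons h with h | ⟨t, ht, h⟩
    · exact hle (ih p σ hp h)
    · obtain ⟨⟨τ, hτ, h3⟩, h4⟩ := hT t ht
      have := hle (ih _ _ ((h3.inv h4).comp hp) h)
      simpa using mul_mem hτ this

/-- Abstract orbit-stabilizer step. -/
theorem step {H K : Subgroup P} {S : Set P} (hS : H = Subgroup.closure S) (b : Fin 44)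
    (hK : ∀ k ∈ K, k b = b) (hle : K ≤ H) (T : List P) (hT : ∀ t ∈ T, t ∈ H) (h1 : 1 ∈ T)
    (hn : (T.map fun t => t b).Nodup)
    (hs : ∀ s ∈ S, ∀ t ∈ T, ∃ t' ∈ T, t'⁻¹ * (s * t) ∈ K) :
    Nat.card H = T.length * Nat.card K := by
  have key : ∀ g ∈ H, ∃ t ∈ T, t⁻¹ * g ∈ K := by
    intro g hg
    have hfin : ∀ x ∈ Submonoid.closure S, ∃ t ∈ T, t⁻¹ * x ∈ K := by
      intro x hx
      induction hx using Submonoid.closure_induction_left with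
      | one => exact ⟨1, h1, by simp [K.one_mem]⟩
      | mul_left s hs' y _ ih =>
        obtain ⟨t, ht, hk⟩ := ih
        obtain ⟨t', ht', hk'⟩ := hs s hs' t ht
        refine ⟨t', ht', ?_⟩
        have := mul_mem hk' hk
        convert this using 1
        group
    apply hfin
    rw [hS, ← Subgroup.mem_toSubmonoid, Subgroup.closure_toSubmonoid_of_finite] at hg
    exact hg
  have hnT : T.Nodup := hn.of_map _
  let f : {t // t ∈ T} × K → H := fun x =>
    ⟨x.1.1 * x.2.1, mul_mem (hT _ x.1.2) (hle x.2.2)⟩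
  have hf : Function.Bijective f := by
    constructor
    · rintro ⟨⟨t, ht⟩, ⟨k, hk⟩⟩ ⟨⟨t', ht'⟩, ⟨k', hk'⟩⟩ h
      have h2 : t * k = t' * k' := congrArg Subtype.val h
      have h3 : t b = t' b := by
        have := congrArg (fun σ : P => σ b) h2
        simpa [hK k hk, hK k' hk'] using this
      have h4 : t = t' := List.inj_on_of_nodup_map hn ht ht' h3
      subst h4
      have h5 : k = k' := mul_left_cancel h2
      subst h5
      rfl
    · rintro ⟨g, hg⟩
      obtain ⟨t, ht, hk⟩ := key g hg
      exact ⟨⟨⟨t, ht⟩, ⟨_, hk⟩⟩, Subtype.ext (by simp [f])⟩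
  rw [← Nat.card_congr (Equiv.ofBijective f hf), Nat.card_prod]
  congr 1
  rw [Nat.card_eq_fintype_card, Fintype.card_of_subtype T.toFinset (by simp),
    List.toFinset_card_of_nodup hnT]

open Classical in
/-- Decode. -/
noncomputable def dec (p : ℕ) : P := if h : ∃ σ, Rep p σ then h.choose else 1

theorem dec_eq {p : ℕ} {σ : P} (h : Rep p σ) : dec p = σ := by
  have h' : ∃ σ, Rep p σ := ⟨σ, h⟩
  rw [dec, dif_pos h']
  exact h'.choose_spec.inj h

theorem card_grp (ls : List Lvl) : Valid ls → chk ls = true →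
    Nat.card (grp ls) = (ls.map fun L => L.T.length).prod := by
  induction ls with
  | nil =>
    intro _ _
    simp [grp, gens]
  | cons L ls ih =>
    intro hv hc
    obtain ⟨hT, hv', hle⟩ := chk_next hv hc
    have hc0 := hc
    simp only [chk, Bool.and_eq_true] at hc
    obtain ⟨⟨⟨⟨⟨⟨⟨hb, _⟩, _⟩, hN⟩, h1⟩, hfix⟩, hs⟩, hc'⟩ := hc
    have hb : L.b < 44 := Nat.le_of_ble_eq_true hb
    let B : Fin 44 := ⟨L.b, hb⟩
    have hR : ∀ t ∈ L.T, Rep t.1 (dec t.1) := by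
      intro t ht
      obtain ⟨⟨τ, hτ, h3⟩, -⟩ := hT t ht
      rwa [dec_eq h3]
    have hK : ∀ k ∈ grp ls, k B = B := by
      have : grp ls ≤ MulAction.stabilizer P B := by
        refine (Subgroup.closure_le _).2 ?_
        rintro σ ⟨p, hp, h⟩
        have h2 := List.all_eq_true.1 hfix p hp
        rw [Nat.beq_eq] at h2
        replace h2 := (h B).symm.trans h2
        exact Fin.ext h2
      exact fun k hk => this hk
    have := step (H := grp (L :: ls)) (K := grp ls) rfl B hK hle
      (L.T.map fun t => dec t.1) ?_ ?_ ?_ ?_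
    · rw [this, ih hv' hc']
      simp
    · intro t0 ht0
      obtain ⟨t, ht, rfl⟩ := List.mem_map.1 ht0
      obtain ⟨⟨τ, hτ, h3⟩, -⟩ := hT t ht
      rwa [dec_eq h3]
    · obtain ⟨t, ht, h2⟩ := List.any_eq_true.1 h1
      rw [Nat.beq_eq] at h2
      refine List.mem_map.2 ⟨t, ht, ?_⟩
      rw [h2]
      exact dec_eq rep_id
    · have h2 := chkN_sound _ hN
      refine List.Nodup.of_map Fin.val ?_
      convert h2 using 1
      rw [List.map_map, List.map_map]
      refine List.map_congr_left fun t ht => ?_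
      exact (hR t ht B).symm
    · rintro s ⟨p, hp, hsp⟩ t0 ht0
      obtain ⟨t, ht, rfl⟩ := List.mem_map.1 ht0
      have h2 := List.all_eq_true.1 (List.all_eq_true.1 hs p hp) t ht
      have h3 := hsp.comp (hR t ht)
      obtain ⟨u0, hu0, hu1⟩ := List.any_eq_true.1 h1
      rw [Nat.beq_eq] at hu1
      have hone : (1 : P) ∈ L.T.map fun t => dec t.1 :=
        List.mem_map.2 ⟨u0, hu0, by rw [hu1]; exact dec_eq rep_id⟩
      rcases sift_cons h2 with h2 | ⟨u, hu, h⟩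
      · refine ⟨1, hone, ?_⟩
        simpa using sift_sound ls hv' hc' _ _ h3 h2
      · refine ⟨dec u.1, List.mem_map.2 ⟨u, hu, rfl⟩, ?_⟩
        exact sift_sound ls hv' hc' _ _ (((hR u hu).inv (hT u hu).2).comp h3) h

/-- Level 0. -/
def lv0 : Lvl where
  b := nat_lit 43
  A := [nat_lit 0x691432a0f659cdbeb01c6ffcc44f95aebedd54cbc6c34c602fa4b49a7a7e,
    nat_lit 0x13c05b7c8c37c558d85cd1b45d2144d8f7a5277043d0682ef522a8707e36e6,
    nat_lit 0xb84abcfad2c2584c290fe009df0c81b01c0dfc7f1e09ad380a3355813974a,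
    nat_lit 0x15e6d1d231433c13afb0301c4fed1ea88925af5c91b436fac5879035fe626]
  T := [(nat_lit 0x13c05b7c8c37c558d85cd1b45d2144dd77a5bc0cdaf8099a46d1512cc6984a, nat_lit 0x13c05b7c8c37c558d85cd1b45d2144dd77a5bc0cdaf8099a46d1512cc6984a, nat_lit 43),
    (nat_lit 0x691432a0f659cdbeb01c6ffcc44f95aebedd54cbc6c34c602fa4b49a7a7e, nat_lit 0x691432a0f659cdbeb01c6ffcc44f95aebedd54cbc6c34c602fa4b49a7a7e, nat_lit 0),
    (nat_lit 0xb84abcfad2c2584c290fe009df0c81b01c0dfc7f1e09ad380a3355813974a, nat_lit 0x600e183b946c31cd7664257392f5161d284f1eacd29404d8b09e6bc73b74a, nat_lit 25),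
    (nat_lit 0x15e6d1d231433c13afb0301c4fed1ea88925af5c91b436fac5879035fe626, nat_lit 0x42a4f2166dc074418426fd724213a42d1514ae9c145d2421ad1b5f29ee0a6, nat_lit 3),
    (nat_lit 0xbf7d130a6bc8d3a997d31d8885e1b347d7ecd25871160ed20cab06cbb47e6, nat_lit 0x600e13c9637bf608c90eee4cc5712cf954a81ea954bb673c8fb874d4ed53e, nat_lit 26),
    (nat_lit 0x1d1927e1ca49b7711e736d9af6c2504045048535e4c09894c7ff4180796c2, nat_lit 0x42a4f2166dc074418426fd72421136e4c4eefb5744df33646b3b55294f35a, nat_lit 4),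
    (nat_lit 0x7d1a63cb550200354037eff19a8c671f213451f0d48208c5b4c55c005bca, nat_lit 0x11e9bfd210351970cd64c224ff288f270d3a3020947069f1441f5dd35813ca, nat_lit 1),
    (nat_lit 0x42a4e8d02587b07fb30a9ea4712eb0ac3274bb0bff06443627c6bc1df6666, nat_lit 0x42a4fb6100b863900a75a0fb1b0af81dbcff8944f1e251d4d8b5ecabbce26, nat_lit 9),
    (nat_lit 0x1108704e5c12a85cca6ec049353539b3d21f244ac90089b1f0c4a76eaad626, nat_lit 0x332a1c7dee913a08010c16af16db74a8ab79e97282b97c9dd0f15d45489a6, nat_lit 37),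
    (nat_lit 0xa2137439d0e643806cb967d7bcdd736d84cb116fd906df4ba5c2fc2ff3e82, nat_lit 0xb84ac6411b3af13bc904096045409e1b05757adb5bd40806adbacc0bb659a, nat_lit 22),
    (nat_lit 0xf03fc4c4e569b60c2c6bc7dc07df809adf21af8605482265dc4070a80c66, nat_lit 0x11e9bfd210351970cd64c224ff288f270d3a3020943b3809e3c0c2015872fe, nat_lit 2),
    (nat_lit 0x49d73edfbe8e2bdd21cddc231803e243ee5390e55212a5d02a3e6d6871702, nat_lit 0x42a4fb6100b8638fd5e6fcb0cd44c166bca108a0cacffd3e2216db6037b1a, nat_lit 10),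
    (nat_lit 0x117b95af55a31012a15af4211fa28ccd4ddd11a85e314fcb90ec22835286c2, nat_lit 0x332a1c94167574365d31535333924c5f359c4d5d39b4a290c1a28d81a35da, nat_lit 38),
    (nat_lit 0x9ae11e2a37dfc822fdf62a59160841d5c8ec3b9685fa7db1a34b4ae577d02, nat_lit 0xb84ac6411b3af13bc90408ab91c99b1f9d8124504c9c8daeecbc1a6620e42, nat_lit 21),
    (nat_lit 0x11e9bfd210351970cd64c224ff288f270d3a3020947069f1441f5dd35813ca, nat_lit 0x7d1a63cb550200354037eff19a8c671f213451f0d48208c5b4c55c005bca, nat_lit 39),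
    (nat_lit 0xa8cf52ee4d0dfcfce6bd9ceac39596654896e6a14081fcaa06d4c4a2acde6, nat_lit 0x42a533139806868e8a020f2d4fdf1ed81839f4a48a5efed96a238504095a6, nat_lit 23),
    (nat_lit 0x6e23516fb43b724310f2d1321121aee971f5008a3dd18de73abea744eb7a6, nat_lit 0x8b8c8a25bab4b4ae4dcdd38b7eacda7432f7eb31ecbff80b724c0b37689a6, nat_lit 15),
    (nat_lit 0xd5b43b7dcc4d9a67a21bf3557cc07715bcaef3e1a757c8ab8ddf639135242, nat_lit 0xb84a8a1c545b9fa669847f47c3894ca30c9258bc677ab05e0ec72deeb5c82, nat_lit 29),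
    (nat_lit 0x92bf212e30243554e077fe88e4bcb3706075cc47ca2a944faefc13a425302, nat_lit 0xd58dd006d879d96405f79d0f57965783eb60bafc336eb4c9adccab6c746da, nat_lit 20),
    (nat_lit 0x125ce53309c58126a450f5fce995e24088f81d7e29a1300ae446d8e80137fe, nat_lit 0xf04bb7a86b0a569e017009986395627a90a5bd90a6a9f291a55a17a1bb3e, nat_lit 40),
    (nat_lit 0xb001a8fde614785a5580da696a6ac7fd0475bc7a938e5e44094c75ed27e82, nat_lit 0x42a533139806868e8a020f2d504779fd8e8e19a6c1620c677bb7cff957b9a, nat_lit 24),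
    (nat_lit 0x7555a77f4d41eda07fb60eb0b7f6e0812dd3d66390ddef813d36588f66842, nat_lit 0x8b8c8a25bab4b4ae193f2f4130e6a3bd32996f5f5f64fb2d32eed7ea255da, nat_lit 16),
    (nat_lit 0xdce6918d655415c510df30d42395a8ad788dc9bafa642a45905714dbb02de, nat_lit 0xb84a8a1bd074155de56bc4f957d85eec37015886810c9635ebdbcecc94936, nat_lit 30),
    (nat_lit 0x8b8ccb1e971db9f771b4c10a3de781d8a496f66e771e32b5ac846259a9182, nat_lit 0xd58dd006d879d96405f79d0f57965782849547837681899521dc44c9d3642, nat_lit 19),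
    (nat_lit 0x600e183b946c31cd7664257392f5161d284f1eacd29404d8b09e6bc73b74a, nat_lit 0xb84abcfad2c2584c290fe009df0c81b01c0dfc7f1e09ad380a3355813974a, nat_lit 13),
    (nat_lit 0xe3c8bf7fca6e95426fdfc7992892aac6568af43bf8c37eb6c34972b18d866, nat_lit 0x42a4ba63d6f1fba01a6f780c021e4e39493cbc08a5ca0c051bde8e60a87a6, nat_lit 31),
    (nat_lit 0x7d51dba9efa85483b654402214f5ecff7bbb6df138104ad140c9e258b96e6, nat_lit 0x8b667710e300a4ae564c14acee6e930d1938f5d4dc664c8925ae011a0b7a6, nat_lit 17),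
    (nat_lit 0xc6391bb905364ddc9564bfd63521de81d7aa04a6fa58fdb466815c17aa582, nat_lit 0x600e2181ddc42d81264d8941c15b2ffad8fb4d329b8931a5d80ce1d723e82, nat_lit 27),
    (nat_lit 0x12734149d61f3352bf66bb240d797e8237e62ba1dcc431a09090bfdbb9f3a6, nat_lit 0x12733d3a4836ba33aa0219b7434bb47c4286467357a4f998524ed122690c66, nat_lit 41),
    (nat_lit 0x3350756404d5e6100b6883c589915e840a3b60c678e15a44ebc38612cd3c2, nat_lit 0x11060a31b46a700556571db3a3fde73d8e5fbc0c650d20ac7d47c64e1fcb82, nat_lit 7),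
    (nat_lit 0x67406e4b2d72ad2ae52762f239ca47b4e42df48625a06672b3161d11b67e6, nat_lit 0xb84abcfad2c2584c290fe009ca1b84b486be17bd3f4579f59a3930947697e, nat_lit 14),
    (nat_lit 0xeafb158f6375109fdea30517cf67dc5e1269ca154bcfe050c5c123fc08902, nat_lit 0x42a4ba63d6f1fba8ee65108712697ef6591c579b35de93e56fffd02b8ff5a, nat_lit 32),
    (nat_lit 0x848431b988aecfe125177da0bbcb1e97379a43ca8b1cac6b434193a334782, nat_lit 0x8b667710e300a4ae21bd7062a0a85c56190409d01c70761abf7562f9b939a, nat_lit 18),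
    (nat_lit 0xcd6b71c89e3cc93a0427fd54dbf710199388da804d655f4e68f90d622561e, nat_lit 0x600e218159dca338a12f05745cbd914c85bf7354068efaa61ca7066c90b76, nat_lit 28),
    (nat_lit 0x12e666aacfaf9b089652eefbf7e6d19bb3a418ff71f4f7ba30b83af061a442, nat_lit 0x12da58178c45c3be091bd4f196a826877d4ac39d1231fee22495287dcba39a, nat_lit 42),
    (nat_lit 0x3a82cb739ddc616d7a2bc1443066901bc61a369fcbedbbdeee3b375d4845e, nat_lit 0x11060a31b46a700556571db3a3fde73d8e5fbc0a9a098325f0789ee95922b6, nat_lit 8),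
    (nat_lit 0x253b49ff8a654b2211e83e82ad716802c93e0d17a7b2845043e6b2ade20e6, nat_lit 0x9abab7875a15652ebd01bf55973016ed957cf2a1eafc01a0eba1f389a3126, nat_lit 5),
    (nat_lit 0x5093478e565cb4f03fc6c83200612e6fab84dc2b99731d0d36cd0ed09071e, nat_lit 0x33500616052d606a6dbdf0a49673a4e15e6d87cdcd34c902ff82c7b2b0d5e, nat_lit 11),
    (nat_lit 0xf31decdf451f06b3be7e614583122025ace1f32148d3efa01ff1292e7d45a, nat_lit 0x1d19312c5f7fd5d858dd5e9497321bafd9cae9ab7ec50eba9812531f9b342, nat_lit 33),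
    (nat_lit 0x2c6da00f236bc67f80ab7c015446999a851ce2f0fabee5ea465e63f85d182, nat_lit 0x9abab786d62ddae637e31d2e0d97000d0f4c7f639b7e3ff32d8659aca50da, nat_lit 6),
    (nat_lit 0x57c59d9def63304dae8a05b0a73660076763b204ec7f7ea73944c01b0b7ba, nat_lit 0x33500616052d606a6db7d96400eb44aad163de6e59b61aeb82524fbfb8952, nat_lit 12),
    (nat_lit 0xfa5042eede2582112d419ec429e751bd68c0c8fa9be0513a2268da78f84f6, nat_lit 0x1cf2d3d4168c65e9a6c5184eabc774be4b4c9dd81b41fa8aa7f6f908910f6, nat_lit 34),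
    (nat_lit 0x10132392eae105c85c7d54f4e597ef9deb91d1df4857ec47d1ed40fbc214e6, nat_lit 0x3350423ac9dd23d48fe4cf39003754e0d42ae6fcaed55b4513306b3f51ba6, nat_lit 35),
    (nat_lit 0x108648f3e4716d7e336988ccd00542b7674fbf3cdd88b2617214bc1069c582, nat_lit 0x3350423acc6e73efb3837aa6973bb3c6066908df3cc3dae1a2c4f4227d75a, nat_lit 36)]
  I := [(nat_lit 104, nat_lit 0), (nat_lit 0, nat_lit 0), (nat_lit 2, nat_lit 1), (nat_lit 3, nat_lit 2), (nat_lit 2, nat_lit 2), (nat_lit 3, nat_lit 3), (nat_lit 2, nat_lit 3), (nat_lit 3, nat_lit 4), (nat_lit 2, nat_lit 4), (nat_lit 3, nat_lit 5), (nat_lit 2, nat_lit 5), (nat_lit 3,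
    nat_lit 6), (nat_lit 2, nat_lit 6), (nat_lit 3, nat_lit 7), (nat_lit 2, nat_lit 7), (nat_lit 3, nat_lit 8), (nat_lit 2, nat_lit 7), (nat_lit 3, nat_lit 8), (nat_lit 2, nat_lit 8), (nat_lit 2, nat_lit 8), (nat_lit 3, nat_lit 9), (nat_lit 2, nat_lit 8), (nat_lit 3, nat_lit 9),
    (nat_lit 2, nat_lit 9), (nat_lit 2, nat_lit 9), (nat_lit 3, nat_lit 10), (nat_lit 2, nat_lit 10), (nat_lit 3, nat_lit 11), (nat_lit 2, nat_lit 11), (nat_lit 2, nat_lit 11), (nat_lit 2, nat_lit 10), (nat_lit 3, nat_lit 11), (nat_lit 2, nat_lit 11), (nat_lit 3,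
    nat_lit 12), (nat_lit 2, nat_lit 12), (nat_lit 2, nat_lit 12), (nat_lit 2, nat_lit 10), (nat_lit 3, nat_lit 9), (nat_lit 2, nat_lit 8), (nat_lit 2, nat_lit 7), (nat_lit 3, nat_lit 6), (nat_lit 2, nat_lit 5), (nat_lit 2, nat_lit 5), (nat_lit 2, nat_lit 3)]
  W := [(nat_lit 11, nat_lit 2, nat_lit 11), (nat_lit 34, nat_lit 3, nat_lit 40)]

/-- Level 1. -/
def lv1 : Lvl where
  b := nat_lit 42
  A := [nat_lit 0x13c0502f8886631548065b9c6eb4766e93fcb0f7f7e18cbd2b4878cf278b5e,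
    nat_lit 0x13bdf15056b509f1ec42c5273d5353be2d1879d2d4e83c3221d17acc515ed6]
  T := [(nat_lit 0x13c05b7c8c37c558d85cd1b45d2144dd77a5bc0cdaf8099a46d1512cc6984a, nat_lit 0x13c05b7c8c37c558d85cd1b45d2144dd77a5bc0cdaf8099a46d1512cc6984a, nat_lit 42),
    (nat_lit 0x13bdf15056b509f1ec42c5273d5353be2d1879d2d4e83c3221d17acc515ed6, nat_lit 0x13bdeeb0aca140c9c2797cd2e2d79e30ebd33981e1678276f84e536e01fc16, nat_lit 41)]
  I := [(nat_lit 102, nat_lit 0), (nat_lit 1, nat_lit 0)]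
  W := [(nat_lit 0, nat_lit 0, nat_lit 0), (nat_lit 1, nat_lit 0, nat_lit 1)]

/-- Level 2. -/
def lv2 : Lvl where
  b := nat_lit 40
  A := [nat_lit 0x13c0502f8886631548065b9c6eb4766e93fcb0f7f7e18cbd2b4878cf278b5e,
    nat_lit 0x13c0543f1667ec19d10ce536168f5549a58b18dc06a851f9a2700f1ae63572]
  T := [(nat_lit 0x13c05b7c8c37c558d85cd1b45d2144dd77a5bc0cdaf8099a46d1512cc6984a, nat_lit 0x13c05b7c8c37c558d85cd1b45d2144dd77a5bc0cdaf8099a46d1512cc6984a, nat_lit 40),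
    (nat_lit 0x13c0502f8886631548065b9c6eb4766e93fcb0f7f7e18cbd2b4878cf278b5e, nat_lit 0x13c0576cf60ad7220bca912e9820ba1615c91025ac12bb89aecfbd923369de, nat_lit 1),
    (nat_lit 0x13c0543f1667ec19d10ce536168f5549a58b18dc06a851f9a2700f1ae63572, nat_lit 0x13c0523415ab70f604c857a4bd9567d9839eff0ea5ac187ca6f152585750f2, nat_lit 15),
    (nat_lit 0x13c0551ae2c34fb8e21f695fbde31f9058108d44b5eb49211a1539cf5256de, nat_lit 0x13c0519fb96f61bf67471bdbc22a848ff6c276898c445b354e07fe6ce9999e, nat_lit 18),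
    (nat_lit 0x13c052c8c71a724a8323c3b8302fd563207b98bb21bcd5097f70c10da2ba3a, nat_lit 0x13c055af3efe6a76785ce8b534fd160aa01cd19d48c10c4bd795672f90f33a, nat_lit 10),
    (nat_lit 0x13c055fccd8c489a957b6bd18b2113ad71a100d9c32af011cb4029e40d7e72, nat_lit 0x13c05a0c530162400fc16e202097be0125009937286bd40ec638cde89502b2, nat_lit 21),
    (nat_lit 0x13c050c3e4cc802eb80dbe6f096c85f561c52871a747fe6fe4459ace9cbeb2, nat_lit 0x13c053160899e83847d9ed0904c85bdc4c346e4c18c05f1cf536469de399b2, nat_lit 3),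
    (nat_lit 0x13c0519fb96f61bf67471bdbc22a848ff6c276898c445b354e07fe6ce9999e, nat_lit 0x13c0551ae2c34fb8e21f695fbde31f9058108d44b5eb49211a1539cf5256de, nat_lit 6),
    (nat_lit 0x13c058e34d85df9853a52dd7eee252ff6c300c6961fa38543833db775a527a, nat_lit 0x13c0510b1012f69ae7f06151ddc4c491403af7686cc34ea63379c3fddb317a, nat_lit 31),
    (nat_lit 0x13c059bf19e1444056eb0081f42ca261a1ab1c1b016ded2cbfc7cb70b03232, nat_lit 0x13c05316006d63ff5f55578985513ccecfc40dd2f3a3da2f6715041a553cb2, nat_lit 34),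
    (nat_lit 0x13c051588e0ce92191d4f6a1660ab9e45ecdc49c40e7a437a37edf441ebaf2, nat_lit 0x13c0592a7085e29d528f6306969828ed7f7bc59181fb27bcc37aa1569c5d32, nat_lit 5),
    (nat_lit 0x13c0584ee0bad6739ba4363b5c7871908952a431240b44cf95e0c190025856, nat_lit 0x13c052819bdddfcafe0cd8ee90594fb86a0c4591a1445e7c440ff8b5f1cd96, nat_lit 29),
    (nat_lit 0x13c055682437d81c10be5d3b947e7950e67c1c3beb4fc4d658ab0cd29ab5fa, nat_lit 0x13c0584ee9074560e98ec7b67ec64bc4bb31bb6ce080fa621ed9f487ff84fa, nat_lit 19),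
    (nat_lit 0x13c053160899e83847d9ed0904c85bdc4c346e4c18c05f1cf536469de399b2, nat_lit 0x13c050c3e4cc802eb80dbe6f096c85f561c52871a747fe6fe4459ace9cbeb2, nat_lit 11),
    (nat_lit 0x13c0576cf60ad7220bca912e9820ba1615c91025ac12bb89aecfbd923369de, nat_lit 0x13c0502f8886631548065b9c6eb4766e93fcb0f7f7e18cbd2b4878cf278b5e, nat_lit 26),
    (nat_lit 0x13c05aa104ab31d33198a30ffb10e89ac0bb122956832b4e3514d2620b3b96, nat_lit 0x13c05ae81f7bbceb431fb95a5ba315d64f4d32bec04d86ed8371a314d98e16, nat_lit 37),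
    (nat_lit 0x13c0535d2b9bff4a904536d773627da2e448b0d6359a2d07e8c5a8e1b1917a, nat_lit 0x13c0592a685e657254a3a026d2cfc64f80b5e70a188db7c7afb90627b49e7a, nat_lit 12),
    (nat_lit 0x13c054863963f1cc00c11c4081bf24869026bb08a2017c994da25087a44f5e, nat_lit 0x13c0584ee8f85a9fb39148beade0e17bb29baf4594b9dc5b92aafae88d9b9e, nat_lit 16),
    (nat_lit 0x13c058015a9966c1f6d082fadf6f85c5e6e391335d164b7d5bbb9747da7f3a, nat_lit 0x13c053aab1db5aad1be94bf178f1cbe0552cb021cd90953a619e3e743e513a, nat_lit 28),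
    (nat_lit 0x13c05725db503dc8da4e194bb479a2f8ece1d774bbafa3d636175983d5234e, nat_lit 0x13c055fcc548c9210637ff9fc01e35f429cd6cccdcb9cecae4e617a057dd8e, nat_lit 25),
    (nat_lit 0x13c05ae81f5edaf4d6a6ac7cb1d1a00d98cf58b471c6ed85641a28813100ce, nat_lit 0x13c05aa104964a83010243f6d3b5038427143c23e677ea72dd96a0d469668e, nat_lit 38),
    (nat_lit 0x13c05281a41b63be3255c901241a4720259d896ce414da6191e8df039f5bb2, nat_lit 0x13c055fcc540ce5ee377757c8de6d4df857189f4e85a66ff11d910078aec72, nat_lit 9),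
    (nat_lit 0x13c05a0c5b44e2c271ec69de6ea18b7824c6b59a92a1ed87eecfc6460ddf0e, nat_lit 0x13c0548631466d5d74879d17ae7d73ec0774fd259725e61847f55d21caa7ce, nat_lit 35),
    (nat_lit 0x13c051ecfac7fcdd5b29aa41aac8959eca3a82d6724bb136e312f96d76ea3a, nat_lit 0x13c05076a35df421c5ac1ef33fad0a421fabf35cd0d32dcdb0148e8eb2ac7a, nat_lit 7),
    (nat_lit 0x13c0523415ab70f604c857a4bd9567d9839eff0ea5ac187ca6f152585750f2, nat_lit 0x13c0543f1667ec19d10ce536168f5549a58b18dc06a851f9a2700f1ae63572, nat_lit 8),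
    (nat_lit 0x13c056d854f6f3549fb15bc929b4c3ed524f3db7b31c8b16100debd21390fa, nat_lit 0x13c057ba377566c81319b86011e6533e29fb4a69176865c34286514841ee7a, nat_lit 24),
    (nat_lit 0x13c053aaa9b0d48aeed06c9f7d957a8dc734d3f09e79e496cf62c35316f00e, nat_lit 0x13c053aab1ee58b6f22bd7751add70e4bfd76b88d34b9e33327be0dc161f8e, nat_lit 13),
    (nat_lit 0x13c05a537e66ce929fac14c99e0963037d0a2f40f6c32777b7cd0d316b4bba, nat_lit 0x13c055fcc54ec4a72a541fae4db66e44dfa69d95017535e48a739e3ae3bc7a, nat_lit 36),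
    (nat_lit 0x13c05643f08e4abf60bdaf672de7b41ff7350a7fd4534bea4bf2d421d32896, nat_lit 0x13c0543f0e16756af3735a8dd269dde6f5ead28bf81fb18bf4642810a86ed6, nat_lit 22),
    (nat_lit 0x13c0510b07e97b2005ca513da0790a0d5c64a95d9f33a37fdc843aee9a87ce, nat_lit 0x13c059bf11a9d1907f9591091b62e95384f0e221667e0d478a85333bcc650e, nat_lit 4),
    (nat_lit 0x13c05b3560d65658c8a746d9c3208617f6c3c53adafa6f970d025407a77b32, nat_lit 0x13c05b3560d561a7900ce8a320d5fa11ef65b16db6a3e1f2c232ec1681d5b2, nat_lit 39),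
    (nat_lit 0x13c0569129be5e27973b828728f2d67966ec6e5b4904958c5e09091bd25dd6, nat_lit 0x13c05158964a6d14b866078fd4c5b17c1397155961d18b7344cfc739681356, nat_lit 23),
    (nat_lit 0x13c053f1d5084ab18250d52df6e62e52f0f4f7f68503950f9519883d156716, nat_lit 0x13c05977f6c553d98e3bbc4ea71bd614a3c0def30b62345a5fca4de0c47796, nat_lit 14),
    (nat_lit 0x13c05977f6c553d98e3bbc4ea71bd614a3c0def30b62345a5fca4de0c47796, nat_lit 0x13c053f1d5084ab18250d52df6e62e52f0f4f7f68503950f9519883d156716, nat_lit 33),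
    (nat_lit 0x13c057ba377566c81319b86011e6533e29fb4a69176865c34286514841ee7a, nat_lit 0x13c056d854f6f3549fb15bc929b4c3ed524f3db7b31c8b16100debd21390fa, nat_lit 27),
    (nat_lit 0x13c05076a35df421c5ac1ef33fad0a421fabf35cd0d32dcdb0148e8eb2ac7a, nat_lit 0x13c051ecfac7fcdd5b29aa41aac8959eca3a82d6724bb136e312f96d76ea3a, nat_lit 2),
    (nat_lit 0x13c0589603efc06a844499295aadd5ebec47e284a264383a325901e117baba, nat_lit 0x13c05a537e65d9fe3ab36985a74c98119b2a61f6075f950c877be755107b7a, nat_lit 30),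
    (nat_lit 0x13c054d3b775d357bff3bbcfc804727fb921cb8f046f909694590ff48860ba, nat_lit 0x13c054d3b775d357bff3bbcfc6b562afffcccd42dd93eb853d7543d461703a, nat_lit 17),
    (nat_lit 0x13c055af4729f9fe3990a0502ccbe89a1ce0d4dfef058ef793811aeaeef272, nat_lit 0x13c05076a351fc28e06d135550b268f4a6de81caddf0ed618a3d7b8de76df2, nat_lit 20),
    (nat_lit 0x13c0592a68685f1c0b8b6da1981d53395e4032b97e3f0b8bf4b463cfba5116, nat_lit 0x13c05977ee9fbfd8b7bb5a5d1b7861c234c0e1be737ef8f1d133491f909356, nat_lit 32)]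
  I := [(nat_lit 102, nat_lit 0), (nat_lit 0, nat_lit 0), (nat_lit 1, nat_lit 1), (nat_lit 0, nat_lit 1), (nat_lit 1, nat_lit 2), (nat_lit 0, nat_lit 2), (nat_lit 1, nat_lit 3), (nat_lit 0, nat_lit 3), (nat_lit 1, nat_lit 4), (nat_lit 0, nat_lit 4), (nat_lit 1, nat_lit 5), (nat_lit 0,
    nat_lit 5), (nat_lit 0, nat_lit 5), (nat_lit 1, nat_lit 6), (nat_lit 0, nat_lit 6), (nat_lit 1, nat_lit 7), (nat_lit 0, nat_lit 7), (nat_lit 0, nat_lit 7), (nat_lit 1, nat_lit 8), (nat_lit 0, nat_lit 8), (nat_lit 1, nat_lit 9), (nat_lit 0, nat_lit 9), (nat_lit 1,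
    nat_lit 10), (nat_lit 0, nat_lit 10), (nat_lit 1, nat_lit 10), (nat_lit 1, nat_lit 10), (nat_lit 1, nat_lit 10), (nat_lit 0, nat_lit 10), (nat_lit 0, nat_lit 10), (nat_lit 1, nat_lit 11), (nat_lit 0, nat_lit 10), (nat_lit 1, nat_lit 11), (nat_lit 1,
    nat_lit 11), (nat_lit 0, nat_lit 11), (nat_lit 0, nat_lit 9), (nat_lit 1, nat_lit 8), (nat_lit 0, nat_lit 7), (nat_lit 1, nat_lit 8), (nat_lit 0, nat_lit 8), (nat_lit 0, nat_lit 7)]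
  W := [(nat_lit 31, nat_lit 0, nat_lit 26), (nat_lit 36, nat_lit 1, nat_lit 38), (nat_lit 37, nat_lit 0, nat_lit 35), (nat_lit 23, nat_lit 1, nat_lit 16)]

/-- Level 3. -/
def lv3 : Lvl where
  b := nat_lit 38
  A := [nat_lit 0x13c05b7c8c1ae37ea1c75655f34bee68ec6e5d5e4f81b9c434e6e85f00933a,
    nat_lit 0x13c05b7c8c28da97ba85650994e5ceb049a11644aec581e96c18ff788be83a,
    nat_lit 0x13c05b7c8c1dd7333a4294f3a60933714c4ac2c52e2f6aab176f888aa9ec5e,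
    nat_lit 0x13c05b7c83d66f378fbfd4b86759f2f9fd6125830a926b0a9d2e0021e3aa2a]
  T := [(nat_lit 0x13c05b7c8c37c558d85cd1b45d2144dd77a5bc0cdaf8099a46d1512cc6984a, nat_lit 0x13c05b7c8c37c558d85cd1b45d2144dd77a5bc0cdaf8099a46d1512cc6984a, nat_lit 38),
    (nat_lit 0x13c05b7c83d66f378fbfd4b86759f2f9fd6125830a926b0a9d2e0021e3aa2a, nat_lit 0x13c05b7c83d66f379308befd0c3656656d670d8d4cce5e8b60a7410f120b6a, nat_lit 37)]
  I := [(nat_lit 104, nat_lit 0), (nat_lit 3, nat_lit 0)]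
  W := [(nat_lit 0, nat_lit 1, nat_lit 0), (nat_lit 0, nat_lit 0, nat_lit 0), (nat_lit 0, nat_lit 2, nat_lit 0)]

/-- Level 4. -/
def lv4 : Lvl where
  b := nat_lit 36
  A := [nat_lit 0x13c05b7c8c28da97ba85650994e5ceb049a11644aec581e96c18ff788be83a,
    nat_lit 0x13c05b7c8c1ae37ea1c75655f34bee68ec6e5d5e4f81b9c434e6e85f00933a,
    nat_lit 0x13c05b7c8c1dd7333a4294f3a60933714c4ac2c52e2f6aab176f888aa9ec5e]
  T := [(nat_lit 0x13c05b7c8c37c558d85cd1b45d2144dd77a5bc0cdaf8099a46d1512cc6984a, nat_lit 0x13c05b7c8c37c558d85cd1b45d2144dd77a5bc0cdaf8099a46d1512cc6984a, nat_lit 36),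
    (nat_lit 0x13c05b7c8c28da97ba85650994e5ceb049a11644aec581e96c18ff788be83a, nat_lit 0x13c05b7c8c28da97ba85650994e5ceb049a11644aec581e96c03cd6e5aca7a, nat_lit 21),
    (nat_lit 0x13c05b7c8c1ae37ea1c75655f34bee68ec6e5d5e4f81b9c434e6e85f00933a, nat_lit 0x13c05b7c8c1bd8137eeaee8ca0e3452cb3ec45033d01ac455e811d90722afa, nat_lit 7),
    (nat_lit 0x13c05b7c8c1dd7333a4294f3a60933714c4ac2c52e2f6aab176f888aa9ec5e, nat_lit 0x13c05b7c8c23d2b9688166e4a613e36064a77e0d2c3b43d5a31586b27ed85e, nat_lit 10),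
    (nat_lit 0x13c05b7c8c2cd7ea787243e70f09a4e10ba8cce37290c091678608bca0c17a, nat_lit 0x13c05b7c8c14e7dc2912283c983f30a4337b76a608ae6fae312b5b1ca8f07a, nat_lit 25),
    (nat_lit 0x13c05b7c8c14e7dc25c93df7f362cd38c3758e9bc63d50703970de6aabf23a, nat_lit 0x13c05b7c8c2cd7ea7bbb2e2bb5351817b5030f247a83a37bd0a23313d362ba, nat_lit 1),
    (nat_lit 0x13c05b7c8c36d0c3f4a764f465d12742d01c04536895cc48d55cfe6893c8de, nat_lit 0x13c05b7c8c36d0c3f4a764f465d12742d01c04536895cc48d55cfe6893c8de, nat_lit 35),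
    (nat_lit 0x13c05b7c8c27cff0161ff2bf9b47cd73a2d1d183299042dd102cf17e20417a, nat_lit 0x13c05b7c8c26db5b35b30ed03e2c7d6cc9ad55a196396c3376d0251ef96a3a, nat_lit 20),
    (nat_lit 0x13c05b7c8c30d5216e3ab718ecc782eeb533fd5ba29ecaa6038e870a0449fa, nat_lit 0x13c05b7c8c31c9b64ea6d814eaab47ac4d80f2d25808a20bdc5520dfa6137a, nat_lit 29),
    (nat_lit 0x13c05b7c8c22de24881545dd5cf8af3495f448f7898a6119cfd58875bcb9ba, nat_lit 0x13c05b7c8c1ce29e59d5b1044a3cf33eabf65880070564f5c898dd223c973a, nat_lit 15),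
    (nat_lit 0x13c05b7c8c26db5b54b6dac62cf5ea4a4968d74dc1821a53a1ab814e7be1fa, nat_lit 0x13c05b7c8c1bd813b9123528b3e823cd6e7267645cb855c39f6b5ac7be80ba, nat_lit 19),
    (nat_lit 0x13c05b7c8c1bd8138233d8d145bfa89823f22d0d7f72cb83563b9a426f3a1e, nat_lit 0x13c05b7c8c1bd8137eeaee8ca0e3452cb3ec45033d01ac455e964f9aa3599e, nat_lit 8),
    (nat_lit 0x13c05b7c8c31c9d287d0e895ecb70c397bdf4bdb0bc4a3524e28c5d0d708de, nat_lit 0x13c05b7c8c29cf2ca518279950bcbe72a5457c929342016a0f4206a9fbca1e, nat_lit 30),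
    (nat_lit 0x13c05b7c8c29cf2c9e3ad1c98c35ec4af12acdfa8b20842dbca5cff24c44de, nat_lit 0x13c05b7c8c28da97bdce4f4e387322508052a4182bb4e9cf4aac8e9fb8215e, nat_lit 22),
    (nat_lit 0x13c05b7c8c1ce29e5d1efcbcf871dcad84ccdb2040af7829edaaef44d6083a, nat_lit 0x13c05b7c8c22de24881545dd5cf8af3495f448f5be5191abdf2d9207b6ffba, nat_lit 9),
    (nat_lit 0x13c05b7c8c15dc70fbc78d0ee09c4edf1ba6f01e2ddb63f2f80456184ff2de, nat_lit 0x13c05b7c8c14e7f8703f392d71a9667e2941929e2a0ace5458ea05baa424de, nat_lit 2),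
    (nat_lit 0x13c05b7c8c2dcc7f5c27b0a70659c27bb33284994eebb6815fadb5079a04ba, nat_lit 0x13c05b7c8c15dc71097eaab7ec01fa9ea453a088681a0a0ca339ce796e31ba, nat_lit 26),
    (nat_lit 0x13c05b7c8c23d2b96bcab29d5448cccf3d7e00ad65e55709c82798d518495e, nat_lit 0x13c05b7c8c1ce28201a89825c1df973071cfb29076ee2ed53cd1980a4f045e, nat_lit 16)]
  I := [(nat_lit 103, nat_lit 0), (nat_lit 0, nat_lit 0), (nat_lit 1, nat_lit 1), (nat_lit 2, nat_lit 2), (nat_lit 1, nat_lit 2), (nat_lit 0, nat_lit 2), (nat_lit 1, nat_lit 3), (nat_lit 0, nat_lit 3), (nat_lit 1, nat_lit 4), (nat_lit 2, nat_lit 5), (nat_lit 2, nat_lit 5), (nat_lit 0,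
    nat_lit 5), (nat_lit 2, nat_lit 6), (nat_lit 0, nat_lit 6), (nat_lit 2, nat_lit 7), (nat_lit 1, nat_lit 5), (nat_lit 1, nat_lit 2), (nat_lit 2, nat_lit 2)]
  W := [(nat_lit 5, nat_lit 1, nat_lit 17), (nat_lit 2, nat_lit 2, nat_lit 8), (nat_lit 4, nat_lit 2, nat_lit 1), (nat_lit 4, nat_lit 0, nat_lit 9), (nat_lit 5, nat_lit 2, nat_lit 2), (nat_lit 3, nat_lit 1, nat_lit 8), (nat_lit 10, nat_lit 1, nat_lit 10), (nat_lit 1, nat_lit 1, nat_lit 4),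
    (nat_lit 13, nat_lit 2, nat_lit 7)]

/-- Level 5. -/
def lv5 : Lvl where
  b := nat_lit 34
  A := [nat_lit 0x13c05b7c8c37c558b9a4e89cd30b324f31805c053cf3a2620eb4cb9ac92db2,
    nat_lit 0x13c05b7c8c37c558d51385f063b4ec006868dad8899b17672e6c46e7981bfa,
    nat_lit 0x13c05b7c8c37c558bcedd2e1769885ef6831da61bab467d4e9fdd832b6d1de,
    nat_lit 0x13c05b7c8c37c558bced716d6e8f0fb7393b2ac40efeb1ff481b72b8c63c1e,
    nat_lit 0x13c05b7c8c37c53c64c0588ee631da7d83916e3544705d6d52b54c04b509ba,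
    nat_lit 0x13c05b7c8c37c53c802ef5edc212dcc86bdde0edc667b07ed17f66f004875e,
    nat_lit 0x13c05b7c8c37c53c64bff71adcd9547e9ac158c4e4fb2a33bad3b3c29c537a,
    nat_lit 0x13c05b7c8c37c558d513e76fb6f5d19dce4a31a110515791ba60f2d176d19e,
    nat_lit 0x13c05b7c8c37c558d51385fbad9d4b9a64f4253b277b691875c4098ba8987a]
  T := [(nat_lit 0x13c05b7c8c37c558d85cd1b45d2144dd77a5bc0cdaf8099a46d1512cc6984a, nat_lit 0x13c05b7c8c37c558d85cd1b45d2144dd77a5bc0cdaf8099a46d1512cc6984a, nat_lit 34),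
    (nat_lit 0x13c05b7c8c37c53c64c0588ee631da7d83916e3544705d6d52b54c04b509ba, nat_lit 0x13c05b7c8c37c53c64bff71adb8a44aee1f1eb387952a04ba65368cf31a93a, nat_lit 33)]
  I := [(nat_lit 109, nat_lit 0), (nat_lit 4, nat_lit 0)]
  W := [(nat_lit 0, nat_lit 2, nat_lit 0), (nat_lit 1, nat_lit 1, nat_lit 1), (nat_lit 1, nat_lit 7, nat_lit 1), (nat_lit 0, nat_lit 3, nat_lit 0), (nat_lit 1, nat_lit 0, nat_lit 1), (nat_lit 1, nat_lit 3, nat_lit 1), (nat_lit 0, nat_lit 8, nat_lit 0), (nat_lit 0, nat_lit 6, nat_lit 1), (nat_lit 0, nat_lit 5,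
    nat_lit 1)]

/-- Level 6. -/
def lv6 : Lvl where
  b := nat_lit 32
  A := [nat_lit 0x13c05b7c8c37c558bcedd2e1769885ef6831da61bab467d4e9fdd832b6d1de,
    nat_lit 0x13c05b7c8c37c558d85cd1b45bd20e34b94dbe77059565dc7d9ed0901035fa,
    nat_lit 0x13c05b7c8c37c558d85c704052798835cff846adb41c570afa43e7ef84c19e,
    nat_lit 0x13c05b7c8c37c558bced716d6e8f0fb7393b2ac40efeb1ff481b72b8c63c1e,
    nat_lit 0x13c05b7c8c37c558b9a4e8a81e42a1bd686c2c6b1111d501e9375c62181256,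
    nat_lit 0x13c05b7c8c37c558b9a4e8a81cf3b8c6b394ac1fdcededf852053d16001ffa,
    nat_lit 0x13c05b7c8c37c558d51385fbad9d4b9a64f4253b277b691875c4098ba8987a,
    nat_lit 0x13c05b7c8c37c558d85cd1a911e9d56f40b9dc2e3c7258c3b20323e2152696,
    nat_lit 0x13c05b7c8c37c558bcedd2ecc31f2c01dd7513bf0209f9173642b51ad66826]
  T := [(nat_lit 0x13c05b7c8c37c558d85cd1b45d2144dd77a5bc0cdaf8099a46d1512cc6984a, nat_lit 0x13c05b7c8c37c558d85cd1b45d2144dd77a5bc0cdaf8099a46d1512cc6984a, nat_lit 32),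
    (nat_lit 0x13c05b7c8c37c558bcedd2e1769885ef6831da61bab467d4e9fdd832b6d1de, nat_lit 0x13c05b7c8c37c558b9a4e8a81e42c8966d6f2bb4bf98cd84e62311c540091e, nat_lit 24),
    (nat_lit 0x13c05b7c8c37c558b9a4e8a81e42a1bd686c2c6b1111d501e9375c62181256, nat_lit 0x13c05b7c8c37c558b9a48728c8639c808fe0d90871d5e540627d4c79a81996, nat_lit 23),
    (nat_lit 0x13c05b7c8c37c558d51385fbad9d4b9a64f4253b277b691875c4098ba8987a, nat_lit 0x13c05b7c8c37c558d51385fbad9d4b9a64f4253b277b691875c4098ba8987a, nat_lit 31)]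
  I := [(nat_lit 109, nat_lit 0), (nat_lit 0, nat_lit 0), (nat_lit 4, nat_lit 1), (nat_lit 6, nat_lit 2)]
  W := [(nat_lit 0, nat_lit 3, nat_lit 2), (nat_lit 0, nat_lit 1, nat_lit 0), (nat_lit 2, nat_lit 1, nat_lit 1), (nat_lit 2, nat_lit 3, nat_lit 3), (nat_lit 0, nat_lit 8, nat_lit 1), (nat_lit 1, nat_lit 5, nat_lit 3), (nat_lit 3, nat_lit 8, nat_lit 2), (nat_lit 3, nat_lit 4, nat_lit 1), (nat_lit 2, nat_lit 8,
    nat_lit 3), (nat_lit 0, nat_lit 7, nat_lit 0), (nat_lit 3, nat_lit 0, nat_lit 1), (nat_lit 0, nat_lit 2, nat_lit 0), (nat_lit 2, nat_lit 2, nat_lit 1), (nat_lit 1, nat_lit 6, nat_lit 1)]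

/-- Level 7. -/
def lv7 : Lvl where
  b := nat_lit 30
  A := [nat_lit 0x13c05b7c8c37c558d85c704053c8980589d2b6c9cc5fbe8bb72d810ecda5de,
    nat_lit 0x13c05b7c8c37c558d85cd1b45bd20e34b94dbe77059565dc7d9ed0901035fa,
    nat_lit 0x13c05b7c8c37c558d85c70405279af05d4f9fdcc9f851c9fa57f044f440cba,
    nat_lit 0x13c05b7c8c37c558d85cd1a9109ac59b076458c013da2e039d4b3dd1f0d0de,
    nat_lit 0x13c05b7c8c37c558d85cd1b45d211e08f21dd01707c978081529d65389b002,
    nat_lit 0x13c05b7c8c37c558d85c7035074218c31991537d0541e2f50d923ba9c6c0b2,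
    nat_lit 0x13c05b7c8c37c558d85c70350891289752e6e665c34529726d1eaef75404ba,
    nat_lit 0x13c05b7c8c37c558d85cd1b45bd235093e50292251f1259656fb7e59901fde,
    nat_lit 0x13c05b7c8c37c558d85c704052798835cff83734e9b4deffd9f473dcd6133a,
    nat_lit 0x13c05b7c8c37c558d85cd1a911e9d56f40b9dc2e3c7258c3b20323e2152696,
    nat_lit 0x13c05b7c8c37c558d85c703508912892d36bd311e7ecc281a1b0105906a9d6,
    nat_lit 0x13c05b7c8c37c558d85c704052798835cff846adb41c570afa43e7ef84c19e,
    nat_lit 0x13c05b7c8c37c558d85cd1a911e9d56f40b9dc3007ab2831a2c04eced56e7a,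
    nat_lit 0x13c05b7c8c37c558d85c704052798831507d33580d8b20acf4fceacb1b1bfa]
  T := [(nat_lit 0x13c05b7c8c37c558d85cd1b45d2144dd77a5bc0cdaf8099a46d1512cc6984a, nat_lit 0x13c05b7c8c37c558d85cd1b45d2144dd77a5bc0cdaf8099a46d1512cc6984a, nat_lit 30),
    (nat_lit 0x13c05b7c8c37c558d85c704053c8980589d2b6c9cc5fbe8bb72d810ecda5de, nat_lit 0x13c05b7c8c37c558d85c704053c8980589d2b6c9cc5fbe8bb72d810ecda5de, nat_lit 29)]
  I := [(nat_lit 114, nat_lit 0), (nat_lit 0, nat_lit 0)]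
  W := [(nat_lit 1, nat_lit 10, nat_lit 0), (nat_lit 0, nat_lit 7, nat_lit 0), (nat_lit 1, nat_lit 5, nat_lit 0), (nat_lit 1, nat_lit 8, nat_lit 0), (nat_lit 0, nat_lit 4, nat_lit 0), (nat_lit 0, nat_lit 12, nat_lit 0), (nat_lit 1, nat_lit 6, nat_lit 0), (nat_lit 0, nat_lit 9, nat_lit 0), (nat_lit 1,
    nat_lit 11, nat_lit 0), (nat_lit 0, nat_lit 3, nat_lit 0), (nat_lit 0, nat_lit 1, nat_lit 0), (nat_lit 1, nat_lit 13, nat_lit 0), (nat_lit 1, nat_lit 2, nat_lit 0)]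

/-- Level 8. -/
def lv8 : Lvl where
  b := nat_lit 28
  A := [nat_lit 0x13c05b7c8c37c558d85cd1a911e9d56ac13ed854f6850d903153e076ff8b5e,
    nat_lit 0x13c05b7c8c37c558d85cd1b45bd235093e50292251f1259656fb7e59901fde,
    nat_lit 0x13c05b7c8c37c558d85cd1a9109ac59b076458c013da2e039d360bc7bfa23a,
    nat_lit 0x13c05b7c8c37c558d85cd1b45bd2350dbdcb3c77f84d2a0cfbceb01699dac2,
    nat_lit 0x13c05b7c8c37c558d85cd1b45d211e08f21dd01707c978081529d65389b002,
    nat_lit 0x13c05b7c8c37c558d85cd1a911e9d56f40b9dc3007ab2831a2c04eced56e7a,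
    nat_lit 0x13c05b7c8c37c558d85cd1a911e9d56f40b9eba8d1dd747f8ef8eb3117bb5e,
    nat_lit 0x13c05b7c8c37c558d85cd1a911e9d56f40b9dc2e3c7258c3b20323e2152696,
    nat_lit 0x13c05b7c8c37c558d85cd1b45bd2350dbdcb2cff2de5b201db7f3c03eb2c5e,
    nat_lit 0x13c05b7c8c37c558d85cd1a9109ac59b076458c013da2e039d4b3dd1f0d0de,
    nat_lit 0x13c05b7c8c37c558d85cd1b45bd20e34b94dbe77059565dc7d9ed0901035fa,
    nat_lit 0x13c05b7c8c37c558d85cd1b45bd235093e5019a987bedf7296f57683839e9e,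
    nat_lit 0x13c05b7c8c37c558d85cd1b45bd20e34b8c84ca7142da9968ce6d314adedde]
  T := [(nat_lit 0x13c05b7c8c37c558d85cd1b45d2144dd77a5bc0cdaf8099a46d1512cc6984a, nat_lit 0x13c05b7c8c37c558d85cd1b45d2144dd77a5bc0cdaf8099a46d1512cc6984a, nat_lit 28),
    (nat_lit 0x13c05b7c8c37c558d85cd1a911e9d56ac13ed854f6850d903153e076ff8b5e, nat_lit 0x13c05b7c8c37c558d85cd1a911e9d56ac13ed854f6850d903153e076ff8b5e, nat_lit 27)]
  I := [(nat_lit 113, nat_lit 0), (nat_lit 0, nat_lit 0)]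
  W := [(nat_lit 0, nat_lit 11, nat_lit 0), (nat_lit 1, nat_lit 9, nat_lit 0), (nat_lit 0, nat_lit 3, nat_lit 0), (nat_lit 0, nat_lit 1, nat_lit 0), (nat_lit 0, nat_lit 10, nat_lit 0), (nat_lit 1, nat_lit 6, nat_lit 0), (nat_lit 0, nat_lit 8, nat_lit 0), (nat_lit 1, nat_lit 7, nat_lit 0), (nat_lit 1,
    nat_lit 2, nat_lit 0), (nat_lit 0, nat_lit 4, nat_lit 0), (nat_lit 0, nat_lit 12, nat_lit 0), (nat_lit 1, nat_lit 5, nat_lit 0)]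

/-- Level 9. -/
def lv9 : Lvl where
  b := nat_lit 26
  A := [nat_lit 0x13c05b7c8c37c558d85cd1b45bd235093e5019a987bedf7296f57683839e9e,
    nat_lit 0x13c05b7c8c37c558d85cd1b45bd2350dbdcb3c77f84d2a0db29e4a73558082,
    nat_lit 0x13c05b7c8c37c558d85cd1b45bd2350dbdcb3c77f84d2a0cfbceb01699dac2,
    nat_lit 0x13c05b7c8c37c558d85cd1b45bd235093e50292251f1259656fb7e59901fde,
    nat_lit 0x13c05b7c8c37c558d85cd1b45bd20e34b94dbe77059565dc7d9ed0901035fa,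
    nat_lit 0x13c05b7c8c37c558d85cd1b45d2144d8f71fa62788012db300eea659ebca02,
    nat_lit 0x13c05b7c8c37c558d85cd1b45bd2350dbdcb2cff2de5b201db7f3c03eb2c5e,
    nat_lit 0x13c05b7c8c37c558d85cd1b45d2144d8f71f96acf29611f72423431eb9c23a,
    nat_lit 0x13c05b7c8c37c558d85cd1b45bd2350dbdcb3c77f84d2a0db2b37c7d86af26,
    nat_lit 0x13c05b7c8c37c558d85cd1b45d211e08f21dd01707c978081529d65389b002,
    nat_lit 0x13c05b7c8c37c558d85cd1b45bd20e34b8c84ca7142da9968ce6d314adedde,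
    nat_lit 0x13c05b7c8c37c558d85cd1b45d2144d8f71f96aebdcee16514e06e0c0bb89e]
  T := [(nat_lit 0x13c05b7c8c37c558d85cd1b45d2144dd77a5bc0cdaf8099a46d1512cc6984a, nat_lit 0x13c05b7c8c37c558d85cd1b45d2144dd77a5bc0cdaf8099a46d1512cc6984a, nat_lit 26),
    (nat_lit 0x13c05b7c8c37c558d85cd1b45bd235093e5019a987bedf7296f57683839e9e, nat_lit 0x13c05b7c8c37c558d85cd1b45bd235093e5019a987bedf7296f57683839e9e, nat_lit 25)]
  I := [(nat_lit 112, nat_lit 0), (nat_lit 0, nat_lit 0)]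
  W := [(nat_lit 1, nat_lit 4, nat_lit 0), (nat_lit 1, nat_lit 2, nat_lit 0), (nat_lit 1, nat_lit 1, nat_lit 0), (nat_lit 1, nat_lit 6, nat_lit 0), (nat_lit 0, nat_lit 11, nat_lit 0), (nat_lit 0, nat_lit 5, nat_lit 0), (nat_lit 0, nat_lit 9, nat_lit 0), (nat_lit 1, nat_lit 3, nat_lit 0), (nat_lit 1,
    nat_lit 10, nat_lit 0), (nat_lit 0, nat_lit 7, nat_lit 0), (nat_lit 1, nat_lit 8, nat_lit 0)]

/-- Level 10. -/
def lv10 : Lvl where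
  b := nat_lit 24
  A := [nat_lit 0x13c05b7c8c37c558d85cd1b45d211e08f2a360d6c2c754f59ec9950aab91fa,
    nat_lit 0x13c05b7c8c37c558d85cd1b45d2144d8f71f96acf2cb4a096784067b7e6ade,
    nat_lit 0x13c05b7c8c37c558d85cd1b45d2144d8f71f96acf2cb4a08b0b4710867321e,
    nat_lit 0x13c05b7c8c37c558d85cd1b45d2144d8f71fa625bcc85e45c71642ea2b015e,
    nat_lit 0x13c05b7c8c37c558d85cd1b45d2144d8f71f96aebdcee16514e06e0c0bb89e,
    nat_lit 0x13c05b7c8c37c558d85cd1b45d2144d8f71fa62788012db300eea659ebca02,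
    nat_lit 0x13c05b7c8c37c558d85cd1b45d211e08f21dd01707c978081529d65389b002,
    nat_lit 0x13c05b7c8c37c558d85cd1b45d2144dd77a5ac9410c5c37686cb446d158842,
    nat_lit 0x13c05b7c8c37c558d85cd1b45d211e08f21dd0153cfb0c682e2fe70dee04fa,
    nat_lit 0x13c05b7c8c37c558d85cd1b45d2144d8f71f96acf29611f72423431eb9c23a,
    nat_lit 0x13c05b7c8c37c558d85cd1b45d2144d8f71f96acf2cb4a08b09f3efe36145e]
  T := [(nat_lit 0x13c05b7c8c37c558d85cd1b45d2144dd77a5bc0cdaf8099a46d1512cc6984a, nat_lit 0x13c05b7c8c37c558d85cd1b45d2144dd77a5bc0cdaf8099a46d1512cc6984a, nat_lit 24),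
    (nat_lit 0x13c05b7c8c37c558d85cd1b45d211e08f2a360d6c2c754f59ec9950aab91fa, nat_lit 0x13c05b7c8c37c558d85cd1b45d211e08f2a360d6c2c754f59ec9950aab91fa, nat_lit 23)]
  I := [(nat_lit 111, nat_lit 0), (nat_lit 0, nat_lit 0)]
  W := [(nat_lit 1, nat_lit 6, nat_lit 0), (nat_lit 0, nat_lit 9, nat_lit 0), (nat_lit 0, nat_lit 4, nat_lit 0), (nat_lit 0, nat_lit 7, nat_lit 0), (nat_lit 0, nat_lit 10, nat_lit 0), (nat_lit 0, nat_lit 1, nat_lit 0), (nat_lit 1, nat_lit 8, nat_lit 0), (nat_lit 0, nat_lit 2, nat_lit 0), (nat_lit 0,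
    nat_lit 3, nat_lit 0), (nat_lit 0, nat_lit 5, nat_lit 0)]

/-- Level 11. -/
def lv11 : Lvl where
  b := nat_lit 22
  A := [nat_lit 0x13c05b7c8c37c558d85cd1b45d2144dd77202b4989f2e549d61b532dffc1fa,
    nat_lit 0x13c05b7c8c37c558d85cd1b45d2144d8f71f96acf29611f72423431eb9c23a,
    nat_lit 0x13c05b7c8c37c558d85cd1b45d2144d8f71f96aebdcee16514e06e0c0bb89e,
    nat_lit 0x13c05b7c8c37c558d85cd1b45d2144dd77a5ac9410c5c37686cb446d158842,
    nat_lit 0x13c05b7c8c37c558d85cd1b45d2144d8f71f96acf2cb4a08b09f3efe36145e,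
    nat_lit 0x13c05b7c8c37c558d85cd1b45d2144d8f71f96acf2cb4a096784067b7e6ade,
    nat_lit 0x13c05b7c8c37c558d85cd1b45d2144dd77202b4b54c150e9bd1542739b5c1e,
    nat_lit 0x13c05b7c8c37c558d85cd1b45d2144d8f71f96acf2cb4a08b0b4710867321e,
    nat_lit 0x13c05b7c8c37c558d85cd1b45d2144d8f71fa625bcc85e45c71642ea2b015e,
    nat_lit 0x13c05b7c8c37c558d85cd1b45d2144d8f71fa62788012db300eea659ebca02]
  T := [(nat_lit 0x13c05b7c8c37c558d85cd1b45d2144dd77a5bc0cdaf8099a46d1512cc6984a, nat_lit 0x13c05b7c8c37c558d85cd1b45d2144dd77a5bc0cdaf8099a46d1512cc6984a, nat_lit 22),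
    (nat_lit 0x13c05b7c8c37c558d85cd1b45d2144d8f71f96acf29611f72423431eb9c23a, nat_lit 0x13c05b7c8c37c558d85cd1b45d2144d8f71f96acf29611f72423431eb9c23a, nat_lit 21)]
  I := [(nat_lit 110, nat_lit 0), (nat_lit 1, nat_lit 0)]
  W := [(nat_lit 1, nat_lit 5, nat_lit 0), (nat_lit 1, nat_lit 4, nat_lit 0), (nat_lit 1, nat_lit 7, nat_lit 0), (nat_lit 0, nat_lit 3, nat_lit 0), (nat_lit 1, nat_lit 9, nat_lit 0), (nat_lit 1, nat_lit 2, nat_lit 0), (nat_lit 0, nat_lit 6, nat_lit 0), (nat_lit 0, nat_lit 0, nat_lit 0), (nat_lit 1, nat_lit 8,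
    nat_lit 0)]

/-- Level 12. -/
def lv12 : Lvl where
  b := nat_lit 20
  A := [nat_lit 0x13c05b7c8c37c558d85cd1b45d2144dd77a5bc0cdac2d188034624d1fb255e,
    nat_lit 0x13c05b7c8c37c558d85cd1b45d2144dd77a5bc0cdac2d188ba2af138e7f9c2,
    nat_lit 0x13c05b7c8c37c558d85cd1b45d2144dd77a5bc0cdac2d188ba402343191782,
    nat_lit 0x13c05b7c8c37c558d85cd1b45d2144dd77a5ac9410c5c37686cb446d158842,
    nat_lit 0x13c05b7c8c37c558d85cd1b45d2144dd77a5ac92458cedde69db89dd32441e,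
    nat_lit 0x13c05b7c8c37c558d85cd1b45d2144dd77a5bc0b0fbf3a2c5614263f749102,
    nat_lit 0x13c05b7c8c37c558d85cd1b45d2144dd77202b4b54c150e9bd1542739b5c1e,
    nat_lit 0x13c05b7c8c37c558d85cd1b45d2144dd77202b4989f2e549d61b532dffc1fa,
    nat_lit 0x13c05b7c8c37c558d85cd1b45d2144dd77a5ac9410c5bd4ba3b3e8634e8ede]
  T := [(nat_lit 0x13c05b7c8c37c558d85cd1b45d2144dd77a5bc0cdaf8099a46d1512cc6984a, nat_lit 0x13c05b7c8c37c558d85cd1b45d2144dd77a5bc0cdaf8099a46d1512cc6984a, nat_lit 20),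
    (nat_lit 0x13c05b7c8c37c558d85cd1b45d2144dd77202b4b54c150e9bd1542739b5c1e, nat_lit 0x13c05b7c8c37c558d85cd1b45d2144dd77202b4b54c150e9bd1542739b5c1e, nat_lit 19)]
  I := [(nat_lit 109, nat_lit 0), (nat_lit 6, nat_lit 0)]
  W := [(nat_lit 0, nat_lit 3, nat_lit 0), (nat_lit 1, nat_lit 7, nat_lit 0), (nat_lit 0, nat_lit 1, nat_lit 0), (nat_lit 0, nat_lit 8, nat_lit 0), (nat_lit 0, nat_lit 2, nat_lit 0), (nat_lit 0, nat_lit 0, nat_lit 0), (nat_lit 0, nat_lit 4, nat_lit 0), (nat_lit 0, nat_lit 5, nat_lit 0)]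

/-- Level 13. -/
def lv13 : Lvl where
  b := nat_lit 18
  A := [nat_lit 0x13c05b7c8c37c558d85cd1b45d2144dd77a5ac9410c5c37686cb446d158842,
    nat_lit 0x13c05b7c8c37c558d85cd1b45d2144dd77a5bc0b0fbf3a2b9f1a2a4328d55e,
    nat_lit 0x13c05b7c8c37c558d85cd1b45d2144dd77a5bc0cdac2d188ba2af138e7f9c2,
    nat_lit 0x13c05b7c8c37c558d85cd1b45d2144dd77a5ac9410c5bd4ba3b3e8634e8ede,
    nat_lit 0x13c05b7c8c37c558d85cd1b45d2144dd77a5bc0cdac2d188ba402343191782,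
    nat_lit 0x13c05b7c8c37c558d85cd1b45d2144dd77a5bc0cdac2d188034624d1fb255e,
    nat_lit 0x13c05b7c8c37c558d85cd1b45d2144dd77a5ac92458cedde69db89dd32441e,
    nat_lit 0x13c05b7c8c37c558d85cd1b45d2144dd77a5bc0b0fbf3a2c5614263f749102]
  T := [(nat_lit 0x13c05b7c8c37c558d85cd1b45d2144dd77a5bc0cdaf8099a46d1512cc6984a, nat_lit 0x13c05b7c8c37c558d85cd1b45d2144dd77a5bc0cdaf8099a46d1512cc6984a, nat_lit 18),
    (nat_lit 0x13c05b7c8c37c558d85cd1b45d2144dd77a5ac9410c5c37686cb446d158842, nat_lit 0x13c05b7c8c37c558d85cd1b45d2144dd77a5ac9410c5c37686cb446d158842, nat_lit 17)]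
  I := [(nat_lit 108, nat_lit 0), (nat_lit 0, nat_lit 0)]
  W := [(nat_lit 1, nat_lit 3, nat_lit 0), (nat_lit 0, nat_lit 7, nat_lit 0), (nat_lit 0, nat_lit 1, nat_lit 0), (nat_lit 0, nat_lit 5, nat_lit 0), (nat_lit 1, nat_lit 6, nat_lit 0), (nat_lit 0, nat_lit 4, nat_lit 0), (nat_lit 0, nat_lit 2, nat_lit 0)]

/-- Level 14. -/
def lv14 : Lvl where
  b := nat_lit 16
  A := [nat_lit 0x13c05b7c8c37c558d85cd1b45d2144dd77a5bc0cdaf8036f63b9f522ff8e02,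
    nat_lit 0x13c05b7c8c37c558d85cd1b45d2144dd77a5bc0b0fbf3a2c5614263f749102,
    nat_lit 0x13c05b7c8c37c558d85cd1b45d2144dd77a5bc0b0fbf3a2b9f1a2a4328d55e,
    nat_lit 0x13c05b7c8c37c558d85cd1b45d2144dd77a5bc0cdac2d188034624d1fb255e,
    nat_lit 0x13c05b7c8c37c558d85cd1b45d2144dd77a5bc0b0fbf340229e191b33ec55e,
    nat_lit 0x13c05b7c8c37c558d85cd1b45d2144dd77a5bc0cdac2d188ba402343191782,
    nat_lit 0x13c05b7c8c37c558d85cd1b45d2144dd77a5bc0cdac2d188ba2af138e7f9c2]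
  T := [(nat_lit 0x13c05b7c8c37c558d85cd1b45d2144dd77a5bc0cdaf8099a46d1512cc6984a, nat_lit 0x13c05b7c8c37c558d85cd1b45d2144dd77a5bc0cdaf8099a46d1512cc6984a, nat_lit 16),
    (nat_lit 0x13c05b7c8c37c558d85cd1b45d2144dd77a5bc0b0fbf3a2c5614263f749102, nat_lit 0x13c05b7c8c37c558d85cd1b45d2144dd77a5bc0b0fbf3a2c5614263f749102, nat_lit 15)]
  I := [(nat_lit 107, nat_lit 0), (nat_lit 1, nat_lit 0)]
  W := [(nat_lit 0, nat_lit 6, nat_lit 0), (nat_lit 0, nat_lit 0, nat_lit 0), (nat_lit 0, nat_lit 3, nat_lit 0), (nat_lit 0, nat_lit 5, nat_lit 0), (nat_lit 1, nat_lit 4, nat_lit 0), (nat_lit 1, nat_lit 2, nat_lit 0)]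

/-- Level 15. -/
def lv15 : Lvl where
  b := nat_lit 14
  A := [nat_lit 0x13c05b7c8c37c558d85cd1b45d2144dd77a5bc0cdac2d188ba2af138e7f9c2,
    nat_lit 0x13c05b7c8c37c558d85cd1b45d2144dd77a5bc0cdaf8036f63b9f522ff8e02,
    nat_lit 0x13c05b7c8c37c558d85cd1b45d2144dd77a5bc0cdac2d188034624d1fb255e,
    nat_lit 0x13c05b7c8c37c558d85cd1b45d2144dd77a5bc0cdac2d188ba402343191782,
    nat_lit 0x13c05b7c8c37c558d85cd1b45d2144dd77a5bc0cdaf803701a9ebca090cca6,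
    nat_lit 0x13c05b7c8c37c558d85cd1b45d2144dd77a5bc0cdaf809998fd755307adca6]
  T := [(nat_lit 0x13c05b7c8c37c558d85cd1b45d2144dd77a5bc0cdaf8099a46d1512cc6984a, nat_lit 0x13c05b7c8c37c558d85cd1b45d2144dd77a5bc0cdaf8099a46d1512cc6984a, nat_lit 14),
    (nat_lit 0x13c05b7c8c37c558d85cd1b45d2144dd77a5bc0cdac2d188ba2af138e7f9c2, nat_lit 0x13c05b7c8c37c558d85cd1b45d2144dd77a5bc0cdac2d188ba2af138e7f9c2, nat_lit 13)]
  I := [(nat_lit 106, nat_lit 0), (nat_lit 0, nat_lit 0)]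
  W := [(nat_lit 0, nat_lit 1, nat_lit 0), (nat_lit 1, nat_lit 3, nat_lit 0), (nat_lit 1, nat_lit 2, nat_lit 0), (nat_lit 0, nat_lit 5, nat_lit 0), (nat_lit 0, nat_lit 4, nat_lit 0)]

/-- Level 16. -/
def lv16 : Lvl where
  b := nat_lit 12
  A := [nat_lit 0x13c05b7c8c37c558d85cd1b45d2144dd77a5bc0cdaf8036f63b9f522ff8e02,
    nat_lit 0x13c05b7c8c37c558d85cd1b45d2144dd77a5bc0cdaf8099a46bc1f229569a6,
    nat_lit 0x13c05b7c8c37c558d85cd1b45d2144dd77a5bc0cdaf809998fec84c5d9c3e6,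
    nat_lit 0x13c05b7c8c37c558d85cd1b45d2144dd77a5bc0cdaf809998fd755307adca6,
    nat_lit 0x13c05b7c8c37c558d85cd1b45d2144dd77a5bc0cdaf803701a9ebca090cca6]
  T := [(nat_lit 0x13c05b7c8c37c558d85cd1b45d2144dd77a5bc0cdaf8099a46d1512cc6984a, nat_lit 0x13c05b7c8c37c558d85cd1b45d2144dd77a5bc0cdaf8099a46d1512cc6984a, nat_lit 12),
    (nat_lit 0x13c05b7c8c37c558d85cd1b45d2144dd77a5bc0cdaf8036f63b9f522ff8e02, nat_lit 0x13c05b7c8c37c558d85cd1b45d2144dd77a5bc0cdaf8036f63b9f522ff8e02, nat_lit 11)]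
  I := [(nat_lit 105, nat_lit 0), (nat_lit 0, nat_lit 0)]
  W := [(nat_lit 0, nat_lit 2, nat_lit 0), (nat_lit 0, nat_lit 3, nat_lit 0), (nat_lit 1, nat_lit 4, nat_lit 0), (nat_lit 0, nat_lit 1, nat_lit 0)]

/-- Level 17. -/
def lv17 : Lvl where
  b := nat_lit 10
  A := [nat_lit 0x13c05b7c8c37c558d85cd1b45d2144dd77a5bc0cdaf809998fec84c5d9c3e6,
    nat_lit 0x13c05b7c8c37c558d85cd1b45d2144dd77a5bc0cdaf809998fd755307adca6,
    nat_lit 0x13c05b7c8c37c558d85cd1b45d2144dd77a5bc0cdaf809998fec84c590dbc2,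
    nat_lit 0x13c05b7c8c37c558d85cd1b45d2144dd77a5bc0cdaf8099a46bc1f229569a6]
  T := [(nat_lit 0x13c05b7c8c37c558d85cd1b45d2144dd77a5bc0cdaf8099a46d1512cc6984a, nat_lit 0x13c05b7c8c37c558d85cd1b45d2144dd77a5bc0cdaf8099a46d1512cc6984a, nat_lit 10),
    (nat_lit 0x13c05b7c8c37c558d85cd1b45d2144dd77a5bc0cdaf809998fec84c5d9c3e6, nat_lit 0x13c05b7c8c37c558d85cd1b45d2144dd77a5bc0cdaf809998fec84c5d9c3e6, nat_lit 9)]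
  I := [(nat_lit 104, nat_lit 0), (nat_lit 0, nat_lit 0)]
  W := [(nat_lit 0, nat_lit 3, nat_lit 0), (nat_lit 1, nat_lit 1, nat_lit 0), (nat_lit 1, nat_lit 2, nat_lit 0)]

/-- Level 18. -/
def lv18 : Lvl where
  b := nat_lit 8
  A := [nat_lit 0x13c05b7c8c37c558d85cd1b45d2144dd77a5bc0cdaf8099a46bc1f229569a6,
    nat_lit 0x13c05b7c8c37c558d85cd1b45d2144dd77a5bc0cdaf8099a46bc1cadc33326,
    nat_lit 0x13c05b7c8c37c558d85cd1b45d2144dd77a5bc0cdaf8099a46d1512c7db026]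
  T := [(nat_lit 0x13c05b7c8c37c558d85cd1b45d2144dd77a5bc0cdaf8099a46d1512cc6984a, nat_lit 0x13c05b7c8c37c558d85cd1b45d2144dd77a5bc0cdaf8099a46d1512cc6984a, nat_lit 8),
    (nat_lit 0x13c05b7c8c37c558d85cd1b45d2144dd77a5bc0cdaf8099a46bc1f229569a6, nat_lit 0x13c05b7c8c37c558d85cd1b45d2144dd77a5bc0cdaf8099a46bc1f229569a6, nat_lit 7)]
  I := [(nat_lit 103, nat_lit 0), (nat_lit 0, nat_lit 0)]
  W := [(nat_lit 1, nat_lit 1, nat_lit 0), (nat_lit 0, nat_lit 2, nat_lit 0)]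

/-- Level 19. -/
def lv19 : Lvl where
  b := nat_lit 6
  A := [nat_lit 0x13c05b7c8c37c558d85cd1b45d2144dd77a5bc0cdaf8099a46d14eb7f450e6,
    nat_lit 0x13c05b7c8c37c558d85cd1b45d2144dd77a5bc0cdaf8099a46d1512c7db026]
  T := [(nat_lit 0x13c05b7c8c37c558d85cd1b45d2144dd77a5bc0cdaf8099a46d1512cc6984a, nat_lit 0x13c05b7c8c37c558d85cd1b45d2144dd77a5bc0cdaf8099a46d1512cc6984a, nat_lit 6),
    (nat_lit 0x13c05b7c8c37c558d85cd1b45d2144dd77a5bc0cdaf8099a46d14eb7f450e6, nat_lit 0x13c05b7c8c37c558d85cd1b45d2144dd77a5bc0cdaf8099a46d14eb7f450e6, nat_lit 5)]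
  I := [(nat_lit 102, nat_lit 0), (nat_lit 0, nat_lit 0)]
  W := [(nat_lit 0, nat_lit 1, nat_lit 0)]

/-- Level 20. -/
def lv20 : Lvl where
  b := nat_lit 4
  A := [nat_lit 0x13c05b7c8c37c558d85cd1b45d2144dd77a5bc0cdaf8099a46d1512c7db026]
  T := [(nat_lit 0x13c05b7c8c37c558d85cd1b45d2144dd77a5bc0cdaf8099a46d1512cc6984a, nat_lit 0x13c05b7c8c37c558d85cd1b45d2144dd77a5bc0cdaf8099a46d1512cc6984a, nat_lit 4),
    (nat_lit 0x13c05b7c8c37c558d85cd1b45d2144dd77a5bc0cdaf8099a46d1512c7db026, nat_lit 0x13c05b7c8c37c558d85cd1b45d2144dd77a5bc0cdaf8099a46d1512c7db026, nat_lit 3)]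
  I := [(nat_lit 101, nat_lit 0), (nat_lit 0, nat_lit 0)]
  W := []

/-- The chain. -/
def chain : List Lvl := [lv0, lv1, lv2, lv3, lv4, lv5, lv6, lv7, lv8, lv9, lv10, lv11, lv12, lv13, lv14, lv15, lv16, lv17, lv18, lv19, lv20]

theorem rep1 : Rep (nat_lit 0x691432a0f659cdbeb01c6ffcc44f95aebedd54cbc6c34c602fa4b49a7a7e) g1 := by
  unfold Rep
  decide +kernel

theorem rep2 : Rep (nat_lit 0x13c05b7c8c37c558d85cd1b45d2144d8f7a5277043d0682ef522a8707e36e6) g2 := by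
  unfold Rep
  decide +kernel

theorem rep3 : Rep (nat_lit 0xb84abcfad2c2584c290fe009df0c81b01c0dfc7f1e09ad380a3355813974a) g3 := by
  unfold Rep
  decide +kernel

theorem rep4 : Rep (nat_lit 0x15e6d1d231433c13afb0301c4fed1ea88925af5c91b436fac5879035fe626) g4 := by
  unfold Rep
  decide +kernel

theorem chk_chain : chk chain = true := by
  decide +kernel

theorem gens_chain : gens chain = [nat_lit 0x691432a0f659cdbeb01c6ffcc44f95aebedd54cbc6c34c602fa4b49a7a7e,
    nat_lit 0x13c05b7c8c37c558d85cd1b45d2144d8f7a5277043d0682ef522a8707e36e6,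
    nat_lit 0xb84abcfad2c2584c290fe009df0c81b01c0dfc7f1e09ad380a3355813974a,
    nat_lit 0x15e6d1d231433c13afb0301c4fed1ea88925af5c91b436fac5879035fe626] := rfl

theorem grp_chain : Valid chain ∧ grp chain = GMacHale := by
  have h : ∀ p ∈ gens chain, Good GMacHale p := by
    intro p hp
    rw [gens_chain] at hp
    simp only [List.mem_cons, List.not_mem_nil, or_false] at hp
    rcases hp with rfl | rfl | rfl | rfl
    · exact ⟨g1, Subgroup.subset_closure (by simp), rep1⟩
    · exact ⟨g2, Subgroup.subset_closure (by simp), rep2⟩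
    · exact ⟨g3, Subgroup.subset_closure (by simp), rep3⟩
    · exact ⟨g4, Subgroup.subset_closure (by simp), rep4⟩
  obtain ⟨h1, h2⟩ := valid_of h
  refine ⟨h1, le_antisymm h2 ((Subgroup.closure_le _).2 ?_)⟩
  intro σ hσ
  simp only [Set.mem_insert_iff, Set.mem_singleton_iff] at hσ
  rcases hσ with rfl | rfl | rfl | rfl
  · exact Subgroup.subset_closure ⟨_, by simp [gens_chain], rep1⟩
  · exact Subgroup.subset_closure ⟨_, by simp [gens_chain], rep2⟩
  · exact Subgroup.subset_closure ⟨_, by simp [gens_chain], rep3⟩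
  · exact Subgroup.subset_closure ⟨_, by simp [gens_chain], rep4⟩

end MH

/-- The group `G_MacHale` has order `16609443840`. -/
theorem stmt_12 : Nat.card GMacHale = 16609443840 := by
  rw [← MH.grp_chain.2, MH.card_grp _ MH.grp_chain.1 MH.chk_chain]
  decide +kernel
end

section
/- Let G be the subgroup of the symmetric group on 44 points generated by the four permutations g1 = (1,2)(43,44), g2 = (1,2)(21,22), g3 = (1,39,13,43,25)(2,40,14,44,26)(3,37,15,41,27)(4,38,16,42,28)(5,35,23,17,31)(6,36,24,18,32)(7,33,21,19,29)(8,34,22,20,30), and g4 = (1,23,27,11,41)(2,24,28,12,42)(3,22,26,10,44,4,21,25,9,43)(5,16,20,40,32,6,15,19,39,31)(7,13,17,37,29)(8,14,18,38,30). Then G contains exactly one element that is not a commutator, i.e., there is exactly one x ∈ G such that x ≠ a⁻¹b⁻¹ab for all a, b ∈ G. -/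
namespace MH

open Equiv

def look (c i : ℕ) : ℕ := (c >>> (5 * i)) % 32
def C3 : ℕ := 503504076068708394514130431133267
def C4 : ℕ := 41177038664458503184627514154315
def D3 : ℕ := 252263788697106341931457893055916
def D4 : ℕ := 168964637819909680685396628291252

def pr (x : Fin 44) : Fin 22 := ⟨((x.val + 43) % 44) / 2, by omega⟩
def oo (x : Fin 44) : ZMod 2 := if x.val % 2 = 1 then 0 else 1
def mk (i : Fin 22) (e : ZMod 2) : Fin 44 :=
  if e = 0 then ⟨2 * i.val + 1, by omega⟩ else ⟨(2 * i.val + 2) % 44, by omega⟩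
def bk (i : Fin 22) : Fin 11 := ⟨i.val / 2, by omega⟩
def rp (i : Fin 11) : Fin 22 := ⟨2 * i.val, by omega⟩

lemma pr_mk : ∀ i e, pr (mk i e) = i := by decide +kernel
lemma oo_mk : ∀ i e, oo (mk i e) = e := by decide +kernel
lemma mk_pr : ∀ x, mk (pr x) (oo x) = x := by decide +kernel
lemma bk_rp : ∀ i, bk (rp i) = i := by decide +kernel

lemma ext44 {x y : Fin 44} (h1 : pr x = pr y) (h2 : oo x = oo y) : x = y := by
  rw [← mk_pr x, ← mk_pr y, h1, h2]

def q3 : Perm (Fin 22) where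
  toFun i := ⟨look C3 i.val % 22, Nat.mod_lt _ (by norm_num)⟩
  invFun i := ⟨look D3 i.val % 22, Nat.mod_lt _ (by norm_num)⟩
  left_inv := by unfold Function.LeftInverse; decide +kernel
  right_inv := by unfold Function.RightInverse Function.LeftInverse; decide +kernel
def q4 : Perm (Fin 22) where
  toFun i := ⟨look C4 i.val % 22, Nat.mod_lt _ (by norm_num)⟩
  invFun i := ⟨look D4 i.val % 22, Nat.mod_lt _ (by norm_num)⟩
  left_inv := by unfold Function.LeftInverse; decide +kernel
  right_inv := by unfold Function.RightInverse Function.LeftInverse; decide +kernel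
def r3 : Perm (Fin 11) where
  toFun i := bk (q3 (rp i))
  invFun i := bk (q3.symm (rp i))
  left_inv := by unfold Function.LeftInverse; decide +kernel
  right_inv := by unfold Function.RightInverse Function.LeftInverse; decide +kernel
def r4 : Perm (Fin 11) where
  toFun i := bk (q4 (rp i))
  invFun i := bk (q4.symm (rp i))
  left_inv := by unfold Function.LeftInverse; decide +kernel
  right_inv := by unfold Function.RightInverse Function.LeftInverse; decide +kernel

abbrev V := Fin 22 → ZMod 2

/-- Bit vector of a mask. -/
def bv (m : ℕ) : V := fun i => if m.testBit i.val then 1 else 0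

def fl (v : V) : Perm (Fin 44) where
  toFun x := mk (pr x) (oo x + v (pr x))
  invFun x := mk (pr x) (oo x + v (pr x))
  left_inv x := by
    apply ext44 <;> simp only [pr_mk, oo_mk]
    rw [add_assoc, CharTwo.add_self_eq_zero, add_zero]
  right_inv x := by
    apply ext44 <;> simp only [pr_mk, oo_mk]
    rw [add_assoc, CharTwo.add_self_eq_zero, add_zero]

def li (s : Perm (Fin 22)) : Perm (Fin 44) where
  toFun x := mk (s (pr x)) (oo x)
  invFun x := mk (s.symm (pr x)) (oo x)
  left_inv x := by apply ext44 <;> simp [pr_mk, oo_mk]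
  right_inv x := by apply ext44 <;> simp [pr_mk, oo_mk]

lemma pr_fl (v x) : pr (fl v x) = pr x := pr_mk _ _
lemma oo_fl (v x) : oo (fl v x) = oo x + v (pr x) := oo_mk _ _
lemma pr_li (s x) : pr (li s x) = s (pr x) := pr_mk _ _
lemma oo_li (s x) : oo (li s x) = oo x := oo_mk _ _

abbrev Tr := Perm (Fin 44) × Perm (Fin 22) × Perm (Fin 11)

def nu (v : V) : Tr := (fl v, 1, 1)
def lam (x : Tr) : Tr := (li x.2.1, x.2.1, x.2.2)
def l3 : Tr := (li q3, q3, r3)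
def l4 : Tr := (li q4, q4, r4)
def s4 : V := bv 6

def Ga : Subgroup Tr := Subgroup.closure {nu (bv 2097153), nu (bv 1025), l3, (g4, q4, r4)}

lemma g1_eq : g1 = fl (bv 2097153) := by
  ext x; revert x; decide +kernel
lemma g2_eq : g2 = fl (bv 1025) := by
  ext x; revert x; decide +kernel
lemma g3_eq : g3 = li q3 := by
  ext x; revert x; decide +kernel
lemma g4_eq : g4 = li q4 * fl s4 := by
  ext x; revert x; decide +kernel

lemma nu_mul (v w : V) : nu v * nu w = nu (v + w) := by
  refine Prod.ext ?_ (by simp [nu])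
  ext x : 1
  apply ext44
  · simp [nu, pr_fl]
  · simp [nu, pr_fl, oo_fl]; ring
lemma nu_zero : nu 0 = 1 := by
  refine Prod.ext ?_ rfl
  ext x : 1
  apply ext44
  · simp [nu, pr_fl]
  · simp [nu, oo_fl]
lemma v_self (v : V) : v + v = 0 := by funext i; exact CharTwo.add_self_eq_zero _
lemma nu_inv (v : V) : (nu v)⁻¹ = nu v := by
  rw [inv_eq_iff_mul_eq_one, nu_mul, v_self, nu_zero]
lemma nu_inj {v w : V} (h : nu v = nu w) : v = w := by
  funext i
  have h1 : fl v = fl w := congrArg Prod.fst h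
  have h2 := congrArg oo (Equiv.congr_fun h1 (mk i 0))
  simpa [oo_fl, pr_mk, oo_mk] using h2

lemma lam_mul (x y : Tr) : lam (x * y) = lam x * lam y := by
  refine Prod.ext ?_ rfl
  ext a : 1
  apply ext44 <;> simp [lam, pr_li, oo_li]

structure Good_s14 (x : Tr) : Prop where
  h1 : ∀ i, bk (x.2.1 i) = x.2.2 (bk i)
  h2 : ∃ v : V, ∑ i, v i = 0 ∧ x = nu v * lam x

lemma lam_nu (x : Tr) (v : V) : lam x * nu v = nu (v ∘ x.2.1.symm) * lam x := by
  refine Prod.ext ?_ (Prod.ext ((mul_one _).trans (one_mul _).symm) ((mul_one _).trans (one_mul _).symm))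
  ext a : 1
  apply ext44 <;> simp [lam, nu, pr_li, oo_li, pr_fl, oo_fl]

lemma lam_nuv (v : V) : lam (nu v) = 1 := by
  refine Prod.ext ?_ rfl
  ext a : 1
  apply ext44 <;> simp [lam, nu, pr_li, oo_li]

lemma lam_lam (x : Tr) : lam (lam x) = lam x := rfl

lemma sum_comp (v : V) (s : Perm (Fin 22)) : ∑ i, (v ∘ s) i = ∑ i, v i :=
  Equiv.sum_comp s v

lemma Good_s14.nu {v : V} (h : ∑ i, v i = 0) : Good_s14 (nu v) :=
  ⟨fun i => rfl, v, h, by rw [lam_nuv, mul_one]⟩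

lemma Good_s14.mul {x y : Tr} (hx : Good_s14 x) (hy : Good_s14 y) : Good_s14 (x * y) := by
  refine ⟨fun i => by simp [hx.h1, hy.h1], ?_⟩
  obtain ⟨v, hv, ex⟩ := hx.h2
  obtain ⟨w, hw, ey⟩ := hy.h2
  refine ⟨v + w ∘ x.2.1.symm, ?_, ?_⟩
  · simp only [Pi.add_apply, Finset.sum_add_distrib, sum_comp, hv, hw, add_zero]
  · conv_lhs => rw [ex, ey]
    rw [← nu_mul, lam_mul, mul_assoc, ← mul_assoc (lam x), lam_nu]
    simp only [mul_assoc]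

lemma lam_inv (x : Tr) : lam x⁻¹ = (lam x)⁻¹ := by
  rw [eq_inv_iff_mul_eq_one, ← lam_mul, inv_mul_cancel]
  have := lam_nuv 0
  rwa [nu_zero] at this

lemma Good_s14.inv {x : Tr} (hx : Good_s14 x) : Good_s14 x⁻¹ := by
  refine ⟨fun i => ?_, ?_⟩
  · have := hx.h1 (x.2.1⁻¹ i)
    have e : x.2.1 (x.2.1⁻¹ i) = i := x.2.1.apply_symm_apply i
    rw [e] at this
    rw [this]
    exact (x.2.2.symm_apply_apply _).symm
  obtain ⟨v, hv, ex⟩ := hx.h2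
  refine ⟨v ∘ x.2.1, ?_, ?_⟩
  · rw [sum_comp, hv]
  · conv_lhs => rw [ex]
    rw [mul_inv_rev, nu_inv, ← lam_inv, lam_nu]
    rfl

lemma Good_s14.l3 : Good_s14 l3 := ⟨by decide +kernel, 0, by simp, by rw [nu_zero]; rfl⟩
lemma Good_s14.l4 : Good_s14 l4 := ⟨by decide +kernel, 0, by simp, by rw [nu_zero]; rfl⟩

lemma g4t : ((g4, q4, r4) : Tr) = l4 * nu s4 := by
  refine Prod.ext ?_ (by simp [nu, l4])
  simp [nu, l4, g4_eq]

lemma good {x : Tr} (hx : x ∈ Ga) : Good_s14 x := by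
  induction hx using Subgroup.closure_induction with
  | mem x hx =>
    rcases hx with rfl | rfl | rfl | rfl
    · exact Good_s14.nu (by decide +kernel)
    · exact Good_s14.nu (by decide +kernel)
    · exact Good_s14.l3
    · rw [g4t]; exact Good_s14.l4.mul (Good_s14.nu (by decide +kernel))
  | one => rw [← nu_zero]; exact Good_s14.nu (by simp)
  | mul x y _ _ hx hy => exact hx.mul hy
  | inv x _ hx => exact hx.inv

lemma conj_nu {x : Tr} (hx : x ∈ Ga) (v : V) : nu v * x = x * nu (v ∘ x.2.1) := by
  obtain ⟨w, _, ex⟩ := (good hx).h2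
  conv_lhs => rw [ex]
  conv_rhs => rw [ex]
  have e1 : (nu w * lam x).2.1 = x.2.1 := by rw [← ex]
  rw [e1, mul_assoc, lam_nu, ← mul_assoc, ← mul_assoc, nu_mul, nu_mul, add_comm]
  congr 3
  funext i; simp

def wp {M : Type*} [Monoid M] (a b : M) (w : List ℕ) : M :=
  w.foldr (fun l x => (bif l == 0 then a else b) * x) 1

lemma wp_mem {M : Type*} [Group M] (K : Subgroup M) {a b : M} (ha : a ∈ K) (hb : b ∈ K)
    (w : List ℕ) : wp a b w ∈ K := by
  induction w with
  | nil => exact K.one_mem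
  | cons l w ih =>
    refine K.mul_mem ?_ ih
    cases (l == 0) <;> assumption

lemma wp_map {M N : Type*} [Monoid M] [Monoid N] (f : M →* N) (a b : M) (w : List ℕ) :
    f (wp a b w) = wp (f a) (f b) w := by
  induction w with
  | nil => exact f.map_one
  | cons l w ih =>
    change f ((bif l == 0 then a else b) * wp a b w) = (bif l == 0 then f a else f b) * wp (f a) (f b) w
    rw [f.map_mul, ih]
    cases (l == 0) <;> rfl

lemma wp_append {M : Type*} [Monoid M] (a b : M) (u w : List ℕ) :
    wp a b (u ++ w) = wp a b u * wp a b w := by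
  induction u with
  | nil => exact (one_mul _).symm
  | cons l u ih =>
    change (bif l == 0 then a else b) * wp a b (u ++ w) = (bif l == 0 then a else b) * wp a b u * wp a b w
    rw [ih, mul_assoc]

def ev (w : List ℕ) (i : ℕ) : ℕ := w.foldr (fun l j => look (bif l == 0 then C3 else C4) j) i

def W (w : List ℕ) : Perm (Fin 22) := wp q3 q4 w
def R (w : List ℕ) : Perm (Fin 11) := wp r3 r4 w
def om (w : List ℕ) : Tr := wp l3 l4 w

lemma q3_val : ∀ i : Fin 22, (q3 i).val = look C3 i.val := by decide +kernel
lemma q4_val : ∀ i : Fin 22, (q4 i).val = look C4 i.val := by decide +kernel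

lemma W_val (w : List ℕ) (i : Fin 22) : (W w i).val = ev w i.val := by
  induction w with
  | nil => rfl
  | cons l w ih =>
    change ((bif l == 0 then q3 else q4) (W w i)).val = look (bif l == 0 then C3 else C4) (ev w i.val)
    rw [← ih]
    cases (l == 0)
    · exact q4_val _
    · exact q3_val _

def fq : Tr →* Perm (Fin 22) := (MonoidHom.fst _ _).comp (MonoidHom.snd _ _)
def fr : Tr →* Perm (Fin 11) := (MonoidHom.snd _ _).comp (MonoidHom.snd _ _)
lemma fq_def (x : Tr) : fq x = x.2.1 := rfl
lemma fr_def (x : Tr) : fr x = x.2.2 := rfl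

lemma om_q (w : List ℕ) : (om w).2.1 = W w := wp_map fq l3 l4 w
lemma om_r (w : List ℕ) : (om w).2.2 = R w := wp_map fr l3 l4 w
lemma om_append (u w : List ℕ) : om (u ++ w) = om u * om w := wp_append _ _ _ _
lemma W_append (u w : List ℕ) : W (u ++ w) = W u * W w := wp_append _ _ _ _
lemma R_append (u w : List ℕ) : R (u ++ w) = R u * R w := wp_append _ _ _ _

def lamH : Tr →* Tr where
  toFun := lam
  map_one' := by have := lam_nuv 0; rwa [nu_zero] at this
  map_mul' := lam_mul

lemma om_lam (w : List ℕ) : lam (om w) = om w := wp_map lamH l3 l4 w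

def wg (w : List ℕ) : Tr := wp l3 (g4, q4, r4) w
lemma wg_mem (w : List ℕ) : wg w ∈ Ga :=
  wp_mem Ga (Subgroup.subset_closure (by simp)) (Subgroup.subset_closure (by simp)) w
lemma wg_q (w : List ℕ) : (wg w).2.1 = W w := wp_map fq l3 (g4, q4, r4) w
lemma wg_r (w : List ℕ) : (wg w).2.2 = R w := wp_map fr l3 (g4, q4, r4) w

lemma R_val (w : List ℕ) (i : Fin 11) : R w i = bk (W w (rp i)) := by
  have := (good (wg_mem w)).h1 (rp i)
  rw [wg_q, wg_r, bk_rp] at this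
  exact this.symm

def bev (w : List ℕ) (i : ℕ) : ℕ := ev w (2 * i) / 2
lemma R_val' (w : List ℕ) (i : Fin 11) : (R w i).val = bev w i.val := by
  rw [R_val]
  change (W w (rp i)).val / 2 = _
  rw [W_val]; rfl

lemma W_eq {u w : List ℕ} (h : ∀ i : Fin 22, ev u i.val = ev w i.val) : W u = W w := by
  ext i; rw [W_val, W_val]; exact h i

lemma bv_xor (a b : ℕ) : bv a + bv b = bv (a ^^^ b) := by
  funext i
  simp only [bv, Pi.add_apply, Nat.testBit_xor]
  cases a.testBit i <;> cases b.testBit i <;> decide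

lemma bv_comp (m m' : ℕ) (w : List ℕ) (h : ∀ k : Fin 22, m.testBit (ev w k.val) = m'.testBit k.val) :
    bv m ∘ W w = bv m' := by
  funext k
  simp only [bv, Function.comp, W_val, h]

lemma nu_conj_mem {x : Tr} (hx : x ∈ Ga) {v : V} (h : nu (v ∘ x.2.1) ∈ Ga) : nu v ∈ Ga := by
  have := conj_nu hx v
  rw [← eq_mul_inv_iff_mul_eq] at this
  rw [this]
  exact Ga.mul_mem (Ga.mul_mem hx h) (Ga.inv_mem hx)

lemma nu_step (m m' : ℕ) (w : List ℕ) (h : ∀ k : Fin 22, m.testBit (ev w k.val) = m'.testBit k.val)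
    (h' : nu (bv m') ∈ Ga) : nu (bv m) ∈ Ga := by
  apply nu_conj_mem (wg_mem w)
  rw [wg_q, bv_comp m m' w h]; exact h'

def WL : List (List ℕ) := [[0,1,1,0,1,1],[1,1,1,0,1,0,1,1,1],[1,0,1,0,1,0],[1,1,1,0,0,1,0,1,0],
  [1,0,1,1,0,1,0,0],[1,1,0,0,1,0,0,1,0,1,0],[1,0,1,1,0,0,1],[0,1,0,0,1,1,1,1,0,0],[1,1,1,0,1,1,1,1],
  [0,0,1,0,1,0,0,0,0],[1,1,1,1,0,0,0,1,0],[1,1,0,1,1,1],[1,0,1,1,1,0],[1,0,1,0,0,0,1],[1,0,0,1,0,1],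
  [1,0,1,0,0,1,0,0],[1,1,0,0,0,1,1,1],[1,1,1,0,1,0,0,1,1,1],[0,1,1,1,0,0,0],[]]

lemma base_mem : nu (bv 2097153) ∈ Ga := Subgroup.subset_closure (by simp)

lemma WL_ok : ∀ i : Fin 20, ∀ k : Fin 22,
    (1 + 2 ^ (i.val + 2)).testBit (ev (WL.getD i.val []) k.val) = (2097153).testBit k.val := by
  decide +kernel

lemma nu_mem1 : nu (bv 3) ∈ Ga := by
  have h1 : nu (bv (2 + 2^21)) ∈ Ga :=
    nu_step _ 2097153 [0,0,0,1,0,0,0,1] (by decide +kernel) base_mem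
  have := Ga.mul_mem h1 base_mem
  rw [nu_mul, bv_xor] at this
  exact this

lemma bv_single : ∀ i : Fin 20, bv (1 + 2 ^ (i.val + 2)) = Pi.single ⟨i.val + 2, by omega⟩ 1 + Pi.single 0 1 := by
  decide +kernel
lemma bv_single1 : bv 3 = Pi.single 1 1 + Pi.single 0 1 := by
  decide +kernel

lemma span_pairs (P : V → Prop) (h0 : P 0) (ha : ∀ u v, P u → P v → P (u + v)) (o : Fin 22)
    (hp : ∀ i, P (Pi.single i 1 + Pi.single o 1)) {v : V} (hv : ∑ i, v i = 0) : P v := by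
  have e : v = ∑ i, v i • (Pi.single i 1 + Pi.single o 1 : V) := by
    simp only [smul_add, Finset.sum_add_distrib, ← Finset.sum_smul, hv, zero_smul, add_zero]
    funext j
    simp [Finset.sum_apply, Pi.single_apply]
  rw [e]
  apply Finset.sum_induction _ P ha h0
  intro i _
  have : v i = 0 ∨ v i = 1 := by
    generalize v i = t
    revert t; decide
  rcases this with h | h <;> rw [h]
  · rw [zero_smul]; exact h0
  · rw [one_smul]; exact hp i

lemma nu_mem {v : V} (hv : ∑ i, v i = 0) : nu v ∈ Ga := by
  refine span_pairs (fun v => nu v ∈ Ga) ?_ ?_ 0 ?_ hv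
  · show nu 0 ∈ Ga
    rw [nu_zero]; exact Ga.one_mem
  · intro u v hu hv
    show nu _ ∈ Ga
    rw [← nu_mul]; exact Ga.mul_mem hu hv
  · intro i
    show nu _ ∈ Ga
    rcases lt_or_ge i.val 2 with h | h
    · have : i = 0 ∨ i = 1 := by
        rcases i with ⟨i, hi⟩; interval_cases i <;> simp
      rcases this with rfl | rfl
      · rw [v_self, nu_zero]; exact Ga.one_mem
      · rw [← bv_single1]; exact nu_mem1
    · have h3 := nu_step _ _ _ (WL_ok ⟨i.val - 2, by omega⟩) base_mem
      rw [bv_single ⟨i.val - 2, by omega⟩] at h3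
      convert h3 using 4
      apply Fin.ext; simp; omega

lemma l3_mem : l3 ∈ Ga := Subgroup.subset_closure (by simp)
lemma l4_mem : l4 ∈ Ga := by
  have : ((g4, q4, r4) : Tr) ∈ Ga := Subgroup.subset_closure (by simp)
  rw [g4t] at this
  exact (Ga.mul_mem_cancel_right (nu_mem (by decide +kernel))).1 this
lemma om_mem (w : List ℕ) : om w ∈ Ga := wp_mem Ga l3_mem l4_mem w

lemma bk_W (w : List ℕ) (j : Fin 22) : bk (W w j) = R w (bk j) := by
  have := (good (wg_mem w)).h1 j
  rwa [wg_q, wg_r] at this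

def fla (A B w : List ℕ) : List ℕ := w.flatMap (fun l => bif l == 0 then A else B)

lemma W_fla (A B w : List ℕ) : W (fla A B w) = wp (W A) (W B) w := by
  induction w with
  | nil => rfl
  | cons l w ih =>
    change W ((bif l == 0 then A else B) ++ fla A B w) = (bif l == 0 then W A else W B) * wp (W A) (W B) w
    rw [W_append, ih]
    cases (l == 0) <;> rfl

lemma chain_s14 {M : Type*} [Group M] [Finite M] (K : Subgroup M) (a b : M) (U : Set M) (h1 : 1 ∈ U)
    (ha : ∀ u ∈ U, ∃ u' ∈ U, ∃ k ∈ K, a * u = u' * k)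
    (hb : ∀ u ∈ U, ∃ u' ∈ U, ∃ k ∈ K, b * u = u' * k) {g : M} (hg : g ∈ Subgroup.closure {a, b}) :
    ∃ u ∈ U, ∃ k ∈ K, g = u * k := by
  rw [← Subgroup.mem_toSubmonoid, Subgroup.closure_toSubmonoid_of_finite] at hg
  induction hg using Submonoid.closure_induction_left with
  | one => exact ⟨1, h1, 1, K.one_mem, (one_mul 1).symm⟩
  | mul_left x hx y _ ih =>
    obtain ⟨u, hu, k, hk, rfl⟩ := ih
    have : ∃ u' ∈ U, ∃ k ∈ K, x * u = u' * k := by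
      rcases hx with rfl | rfl
      · exact ha u hu
      · exact hb u hu
    obtain ⟨u', hu', k', hk', e⟩ := this
    exact ⟨u', hu', k' * k, K.mul_mem hk' hk, by rw [← mul_assoc, e, mul_assoc]⟩

def GA : ℕ → List ℕ
  | 0 => [0]
  | 1 => [0,1,1]
  | 2 => [1,0,0,0,0,1,1,1,0,0,0]
  | _ => [0,1,1,1,0,0,0,1,0,0,0,0,1,1,1,0,0,0,0,1,1,1,0,0,0]
def GB : ℕ → List ℕ
  | 0 => [1]
  | 1 => [1,0,0,0]
  | 2 => [0,1,1,1,0,0,0,1,0,0,0,0,1,1]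
  | _ => [1,0,0,0,0,1,1,1,0,0,0,0,1,1,1,0,0,0,1,0,0,0,0,1,1,0,1,1,1,0,0,0,1,0,0,0,0,1,1]
def U' : ℕ → List (List ℕ)
  | 0 => [[],[0,1,0],[1,1,1],[0,0],[0,1],[1],[1,1],[1,0],[0,0,1,0],[0],[0,0,0]]
  | 1 => [[],[1,1],[1,0,0,1],[0,0,0],[0,0,1],[1,0],[0],[0,1],[1],[0,0]]
  | 2 => [[],[0,1],[1],[1,0,0],[0,0],[0,0,0,1],[0],[1,1],[0,0,1]]
  | _ => [[],[0,0,0],[1,0],[0,1],[0],[1,0,0],[0,0],[1]]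
/-- flattened transversal words -/
def U (n i : ℕ) : List ℕ := fla (GA n) (GB n) ((U' n).getD i [])

def wit : ℕ → List (List (List ℕ))
  | 0 => [[[9,0,0,0],[8,0,0,0],[2,8,8,5],[10,0,0,0],[7,7,3,6],[4,0,0,0],[0,6,0,0],[1,0,0,0],[5,8,4,5],[3,0,0,0],[6,3,0,0]],[[5,0,0,0],[3,2,1,3],[10,7,7,5],[4,1,2,2],[9,5,0,4],[6,0,0,0],[2,0,0,0],[1,3,3,1],[8,7,0,3],[7,0,0,0],[0,8,0,0]]]
  | 1 => [[[6,0,0],[8,0,2],[2,8,4],[0,0,0],[1,0,3],[5,2,5],[9,0,0],[4,0,0],[7,0,0],[3,0,0]],[[8,0,0],[9,4,5],[4,2,6],[7,3,3],[2,0,0],[3,2,0],[5,0,0],[0,6,0],[1,0,0],[6,2,6]]]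
  | 2 => [[[6,0],[8,0],[1,0],[3,7],[7,5],[2,0],[4,0],[0,7],[5,0]],[[2,0],[1,2],[7,0],[8,3],[3,0],[4,5],[0,4],[6,1],[5,1]]]
  | _ => [[[4],[0],[7],[5],[6],[2],[1],[3]],[[7],[3],[1],[4],[2],[0],[5],[6]]]

def wt (n g i j : ℕ) : ℕ := (((wit n).getD g []).getD i []).getD j 0

def tail (n g i : ℕ) : List ℕ :=
  match n with
  | 0 => U 1 (wt 0 g i 1) ++ (U 2 (wt 0 g i 2) ++ U 3 (wt 0 g i 3))
  | 1 => U 2 (wt 1 g i 1) ++ U 3 (wt 1 g i 2)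
  | 2 => U 3 (wt 2 g i 1)
  | _ => []

lemma witOK : ∀ n : Fin 4, ∀ i : Fin (11 - n.val),
    (wt n 0 i 0 < 11 - n.val ∧ wt n 1 i 0 < 11 - n.val) ∧ ∀ j : Fin 22,
    ev (GA n ++ U n i) j.val = ev (U n (wt n 0 i 0) ++ tail n 0 i) j.val ∧
    ev (GB n ++ U n i) j.val = ev (U n (wt n 1 i 0) ++ tail n 1 i) j.val := by
  decide +kernel

def KK (n : ℕ) : Subgroup (Perm (Fin 22)) :=
  if n < 4 then Subgroup.closure {W (GA n), W (GB n)} else ⊥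

lemma genstep : ∀ n : Fin 3, ∃ u ∈ [[1,0,1],[0,1,1,0],[1,0],[0,1,1],[1,0,0,0]], 
    fla (GA n) (GB n) u = GA (n + 1) := by decide +kernel
lemma genstep' : ∀ n : Fin 3, ∃ u ∈ [[1,0,1],[0,1,1,0],[1,0],[0,1,1],[1,0,0,0]], 
    fla (GA n) (GB n) u = GB (n + 1) := by decide +kernel

lemma U_mem {n : ℕ} (hn : n < 4) (i : ℕ) : W (U n i) ∈ KK n := by
  rw [KK, if_pos hn, U, W_fla]
  exact wp_mem _ (Subgroup.subset_closure (by simp)) (Subgroup.subset_closure (by simp)) _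

lemma KK_le {n : ℕ} (hn : n < 3) : KK (n + 1) ≤ KK n := by
  have a1 : n + 1 < 4 := by omega
  have a2 : n < 4 := by omega
  rw [KK, KK, if_pos a1, if_pos a2, Subgroup.closure_le]
  obtain ⟨u, -, e⟩ := genstep ⟨n, hn⟩
  obtain ⟨u', -, e'⟩ := genstep' ⟨n, hn⟩
  rintro x (rfl | rfl)
  · rw [← e, W_fla]
    exact wp_mem _ (Subgroup.subset_closure (by simp)) (Subgroup.subset_closure (by simp)) _
  · rw [← e', W_fla]
    exact wp_mem _ (Subgroup.subset_closure (by simp)) (Subgroup.subset_closure (by simp)) _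

lemma tail_mem {n : ℕ} (hn : n < 4) (g i : ℕ) : W (tail n g i) ∈ KK (n + 1) := by
  have h32 := @KK_le 2 (by norm_num)
  have h21 := @KK_le 1 (by norm_num)
  interval_cases n
  · simp only [tail, W_append]
    exact Subgroup.mul_mem _ (U_mem (by norm_num) _) (Subgroup.mul_mem _ (h21 (U_mem (by norm_num) _))
      (h21 (h32 (U_mem (by norm_num) _))))
  · simp only [tail, W_append]
    exact Subgroup.mul_mem _ (U_mem (by norm_num) _) (h32 (U_mem (by norm_num) _))
  · exact U_mem (by norm_num) _
  · exact Subgroup.one_mem _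

lemma U_act : ∀ n : Fin 4, ∀ i : Fin (11 - n.val), (∀ j : Fin n.val, bev (U n i) j.val = j.val) ∧
    bev (U n i) n.val = n.val + i.val := by decide +kernel

lemma G_act : ∀ n : Fin 4, ∀ j : Fin n.val, bev (GA n) j.val = j.val ∧ bev (GB n) j.val = j.val := by
  decide +kernel

lemma KK_fix {n : ℕ} (hn : n < 4) {k : Perm (Fin 22)} (hk : k ∈ KK n) (j : Fin 11) (hj : j.val < n) :
    ∀ x, bk x = j → bk (k x) = j := by
  rw [KK, if_pos hn] at hk
  rw [← Subgroup.mem_toSubmonoid, Subgroup.closure_toSubmonoid_of_finite] at hk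
  induction hk using Submonoid.closure_induction with
  | one => intro x hx; exact hx
  | mul a b _ _ iha ihb => intro x hx; exact iha _ (ihb x hx)
  | mem a ha =>
    intro x hx
    have := G_act ⟨n, hn⟩ ⟨j.val, hj⟩
    rcases ha with rfl | rfl <;> rw [bk_W, hx] <;> apply Fin.ext <;> rw [R_val']
    · exact this.1
    · exact this.2

lemma dec_s14 {n : ℕ} (hn : n < 4) {g : Perm (Fin 22)} (hg : g ∈ KK n) :
    ∃ i < 11 - n, ∃ k ∈ KK (n + 1), g = W (U n i) * k := by
  rw [KK, if_pos hn] at hg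
  have := chain_s14 (KK (n + 1)) (W (GA n)) (W (GB n)) {u | ∃ i < 11 - n, u = W (U n i)} ?_ ?_ ?_ hg
  · obtain ⟨u, ⟨i, hi, rfl⟩, k, hk, e⟩ := this
    exact ⟨i, hi, k, hk, e⟩
  · refine ⟨0, by omega, ?_⟩
    interval_cases n <;> rfl
  · rintro u ⟨i, hi, rfl⟩
    obtain ⟨⟨h1, h2⟩, h3⟩ := witOK ⟨n, hn⟩ ⟨i, hi⟩
    refine ⟨_, ⟨_, h1, rfl⟩, _, tail_mem hn 0 i, ?_⟩
    rw [← W_append, ← W_append]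
    exact W_eq fun j => (h3 j).1
  · rintro u ⟨i, hi, rfl⟩
    obtain ⟨⟨h1, h2⟩, h3⟩ := witOK ⟨n, hn⟩ ⟨i, hi⟩
    refine ⟨_, ⟨_, h2, rfl⟩, _, tail_mem hn 1 i, ?_⟩
    rw [← W_append, ← W_append]
    exact W_eq fun j => (h3 j).2

lemma bk_rp' (j : Fin 11) : bk (rp j) = j := bk_rp j

lemma drop {n : ℕ} (hn : n < 4) {g : Perm (Fin 22)} (hg : g ∈ KK n)
    (h : bk (g (rp ⟨n, by omega⟩)) = ⟨n, by omega⟩) : g ∈ KK (n + 1) := by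
  obtain ⟨i, hi, k, hk, rfl⟩ := dec_s14 hn hg
  have e : bk (k (rp ⟨n, by omega⟩)) = ⟨n, by omega⟩ := by
    rcases Nat.lt_or_ge (n + 1) 4 with h4 | h4
    · exact KK_fix h4 hk _ (by simp) _ (bk_rp _)
    · rw [KK, if_neg (by omega)] at hk
      rw [Subgroup.mem_bot.1 hk]; exact bk_rp _
  rw [Perm.mul_apply, bk_W, e] at h
  have h2 := congrArg Fin.val h
  rw [R_val'] at h2
  have h3 := (U_act ⟨n, hn⟩ ⟨i, hi⟩).2
  simp only at h2 h3
  have : i = 0 := by omega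
  subst this
  have : W (U n 0) = 1 := by interval_cases n <;> rfl
  rw [this, one_mul]; exact hk

lemma q_mem {x : Tr} (hx : x ∈ Ga) : x.2.1 ∈ KK 0 := by
  rw [KK, if_pos (by norm_num)]
  induction hx using Subgroup.closure_induction with
  | mem x hx =>
    rcases hx with rfl | rfl | rfl | rfl
    · exact Subgroup.one_mem _
    · exact Subgroup.one_mem _
    · exact Subgroup.subset_closure (Or.inl rfl)
    · exact Subgroup.subset_closure (Or.inr rfl)
  | one => exact Subgroup.one_mem _
  | mul x y _ _ hx hy => exact Subgroup.mul_mem _ hx hy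
  | inv x _ hx => exact Subgroup.inv_mem _ hx

lemma r_of_q {x y : Tr} (hx : x ∈ Ga) (hy : y ∈ Ga) (h : x.2.1 = y.2.1) : x.2.2 = y.2.2 := by
  ext i : 1
  rw [← bk_rp i, ← (good hx).h1, ← (good hy).h1, h]

lemma q_triv {x : Tr} (hx : x ∈ Ga) (h : ∀ n : Fin 11, n.val < 4 → x.2.2 n = n) : x.2.1 = 1 := by
  have key : ∀ n : Fin 11, n.val < 4 → bk (x.2.1 (rp n)) = n := fun n hn => by
    rw [(good hx).h1, bk_rp, h n hn]
  have h0 := q_mem hx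
  have h1 := drop (by norm_num) h0 (key 0 (by decide))
  have h2 := drop (by norm_num) h1 (key 1 (by decide))
  have h3 := drop (by norm_num) h2 (key 2 (by decide))
  have h4 := drop (by norm_num) h3 (key 3 (by decide))
  rw [KK, if_neg (by norm_num)] at h4
  exact Subgroup.mem_bot.1 h4

lemma q_ext {x y : Tr} (hx : x ∈ Ga) (hy : y ∈ Ga) (h : ∀ n : Fin 11, n.val < 4 → x.2.2 n = y.2.2 n) :
    x.2.1 = y.2.1 := by
  have := q_triv (Ga.mul_mem (Ga.inv_mem hx) hy) (fun n hn => by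
    show x.2.2⁻¹ (y.2.2 n) = n
    rw [← h n hn]; exact x.2.2.symm_apply_apply n)
  exact inv_mul_eq_one.1 this

lemma q_ext' {x : Tr} (hx : x ∈ Ga) (w : List ℕ) (h : ∀ n : Fin 11, n.val < 4 → (x.2.2 n).val = bev w n.val) :
    x.2.1 = W w := by
  rw [← om_q]
  refine q_ext hx (om_mem w) fun n hn => ?_
  apply Fin.ext
  rw [h n hn, om_r, R_val']

lemma step1 (n : ℕ) (hn : n < 4) (p : Fin 11) (hp : n ≤ p.val) :
    ∃ w, (∀ j : Fin 11, j.val < n → R w j = j) ∧ R w ⟨n, by omega⟩ = p := by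
  obtain ⟨h1, h2⟩ := U_act ⟨n, hn⟩ ⟨p.val - n, by simp only; omega⟩
  refine ⟨U n (p.val - n), fun j hj => ?_, ?_⟩
  · apply Fin.ext; rw [R_val']; exact h1 ⟨j.val, hj⟩
  · apply Fin.ext; rw [R_val']; simp only at h2 ⊢; omega

lemma four_trans (p q r s : Fin 11) (hpq : p ≠ q) (hpr : p ≠ r) (hps : p ≠ s) (hqr : q ≠ r) (hqs : q ≠ s)
    (hrs : r ≠ s) : ∃ w, R w 0 = p ∧ R w 1 = q ∧ R w 2 = r ∧ R w 3 = s := by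
  obtain ⟨a, -, a0⟩ := step1 0 (by norm_num) p (Nat.zero_le _)
  have inv : ∀ (w : List ℕ) (y : Fin 11), R w ((R w).symm y) = y := fun w y => (R w).apply_symm_apply y
  change R a 0 = p at a0
  obtain ⟨b, b0, b1⟩ := step1 1 (by norm_num) ((R a).symm q) (by
    by_contra hc
    have : (R a).symm q = 0 := by apply Fin.ext; simp only [Fin.val_zero]; omega
    apply hpq; rw [← inv a q, this, a0])
  change R b 1 = _ at b1
  obtain ⟨c, c0, c1⟩ := step1 2 (by norm_num) ((R (a ++ b)).symm r) (by
    by_contra hc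
    have : (R (a ++ b)).symm r = 0 ∨ (R (a ++ b)).symm r = 1 := by omega
    rcases this with e | e <;> rw [Equiv.symm_apply_eq, R_append, Perm.mul_apply] at e
    · rw [b0 0 (by decide), a0] at e; exact hpr e.symm
    · rw [b1, inv] at e; exact hqr e.symm)
  change R c 2 = _ at c1
  obtain ⟨d, d0, d1⟩ := step1 3 (by norm_num) ((R (a ++ b ++ c)).symm s) (by
    by_contra hc
    have : (R (a ++ b ++ c)).symm s = 0 ∨ (R (a ++ b ++ c)).symm s = 1 ∨ (R (a ++ b ++ c)).symm s = 2 := by omega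
    rcases this with e | e | e <;> rw [Equiv.symm_apply_eq, R_append, Perm.mul_apply] at e
    · rw [c0 0 (by decide), R_append, Perm.mul_apply, b0 0 (by decide), a0] at e; exact hps e.symm
    · rw [c0 1 (by decide), R_append, Perm.mul_apply, b1, inv] at e; exact hqs e.symm
    · rw [c1, inv] at e; exact hrs e.symm)
  change R d 3 = _ at d1
  refine ⟨a ++ b ++ c ++ d, ?_, ?_, ?_, ?_⟩ <;> rw [R_append, Perm.mul_apply]
  · rw [d0 0 (by decide), R_append, Perm.mul_apply, c0 0 (by decide), R_append, Perm.mul_apply, b0 0 (by decide), a0]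
  · rw [d0 1 (by decide), R_append, Perm.mul_apply, c0 1 (by decide), R_append, Perm.mul_apply, b1, inv]
  · rw [d0 2 (by decide), R_append, Perm.mul_apply, c1, inv]
  · rw [d1, inv]

def IsC (x : Tr) : Prop := ∃ a ∈ Ga, ∃ b ∈ Ga, x = a⁻¹ * b⁻¹ * a * b

lemma IsC.conj {x g : Tr} (hg : g ∈ Ga) (h : IsC (g⁻¹ * x * g)) : IsC x := by
  obtain ⟨a, ha, b, hb, e⟩ := h
  refine ⟨g * a * g⁻¹, Ga.mul_mem (Ga.mul_mem hg ha) (Ga.inv_mem hg), g * b * g⁻¹,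
    Ga.mul_mem (Ga.mul_mem hg hb) (Ga.inv_mem hg), ?_⟩
  have : x = g * (g⁻¹ * x * g) * g⁻¹ := by group
  rw [this, e]; group

lemma lam_mem {x : Tr} (hx : x ∈ Ga) : lam x ∈ Ga := by
  obtain ⟨v, hv, e⟩ := (good hx).h2
  rw [e] at hx
  exact (Ga.mul_mem_cancel_left (nu_mem hv)).1 hx

lemma lam_ext {x y : Tr} (hx : x ∈ Ga) (hy : y ∈ Ga) (h : x.2.1 = y.2.1) : lam x = lam y := by
  simp only [lam, h, r_of_q hx hy h]

lemma core {x : Tr} (hx : x ∈ Ga) (A B : List ℕ) (hW : W (A ++ B) = W (B ++ A) * x.2.1)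
    (h : ∀ v : V, ∑ i, v i = 0 → x = nu v * lam x → ∃ n m : V, ∑ i, n i = 0 ∧ ∑ i, m i = 0 ∧
      v = (n + n ∘ W B + m + m ∘ W A) ∘ W (B ++ A)) : IsC x := by
  obtain ⟨v, hv, e⟩ := (good hx).h2
  obtain ⟨n, m, hn, hm, ev⟩ := h v hv e
  have hl : om A * om B = om B * om A * lam x := by
    have := lam_ext (Ga.mul_mem (om_mem A) (om_mem B)) (Ga.mul_mem (Ga.mul_mem (om_mem B) (om_mem A)) hx)
      (by
        show (om A).2.1 * (om B).2.1 = (om B).2.1 * (om A).2.1 * x.2.1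
        rw [om_q, om_q, ← W_append, ← W_append, hW])
    rwa [lam_mul, lam_mul, lam_mul, om_lam, om_lam] at this
  set a := om A with ha
  set b := om B with hb
  have cA : ∀ u : V, nu u * a = a * nu (u ∘ W A) := fun u => by
    have := conj_nu (om_mem A) u; rwa [om_q] at this
  have cB : ∀ u : V, nu u * b = b * nu (u ∘ W B) := fun u => by
    have := conj_nu (om_mem B) u; rwa [om_q] at this
  have cBA : ∀ u : V, b * (a * nu (u ∘ W (B ++ A))) = nu u * (b * a) := fun u => by
    rw [← mul_assoc (nu u), cB, mul_assoc, cA, W_append]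
    rfl
  refine ⟨nu (n ∘ W B) * a, Ga.mul_mem (nu_mem (by rw [sum_comp, hn])) (om_mem _),
    nu (m ∘ W A) * b, Ga.mul_mem (nu_mem (by rw [sum_comp, hm])) (om_mem _), ?_⟩
  rw [mul_assoc, ← mul_inv_rev, eq_inv_mul_iff_mul_eq]
  calc nu (m ∘ W A) * b * (nu (n ∘ W B) * a) * x
      = nu (m ∘ W A) * (b * nu (n ∘ W B)) * (a * (nu v * lam x)) := by rw [← e]; simp only [mul_assoc]
    _ = nu (m ∘ W A) * nu n * (b * (a * nu v)) * lam x := by rw [← cB]; simp only [mul_assoc]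
    _ = nu (m ∘ W A) * nu n * nu (n + n ∘ W B + m + m ∘ W A) * (b * a * lam x) := by
        rw [ev, cBA]; simp only [mul_assoc]
    _ = nu (n ∘ W B + m) * (a * b) := by
        rw [← hl, nu_mul, nu_mul]; congr 2
        funext i
        simp only [Pi.add_apply, Function.comp]
        linear_combination CharTwo.add_self_eq_zero (n i) + CharTwo.add_self_eq_zero (m (W A i))
    _ = nu (n ∘ W B) * (nu m * a) * b := by rw [← nu_mul]; simp only [mul_assoc]
    _ = nu (n ∘ W B) * a * (nu (m ∘ W A) * b) := by rw [cA]; simp only [mul_assoc]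

def sm (m : ℕ) (v : V) : ZMod 2 := ∑ k : Fin 22, if m.testBit k.val then v k else 0

lemma sm_add (m : ℕ) (u v : V) : sm m (u + v) = sm m u + sm m v := by
  simp only [sm, ← Finset.sum_add_distrib]
  refine Finset.sum_congr rfl fun k _ => ?_
  cases m.testBit k.val <;> simp
lemma sm_xor (a b : ℕ) (v : V) : sm (a ^^^ b) v = sm a v + sm b v := by
  simp only [sm, ← Finset.sum_add_distrib]
  refine Finset.sum_congr rfl fun k _ => ?_
  rw [Nat.testBit_xor]
  cases a.testBit k.val <;> cases b.testBit k.val <;> simp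
  exact (CharTwo.add_self_eq_zero (v k)).symm
lemma full : ∀ k : Fin 22, (4194303).testBit k.val = true := by decide +kernel
lemma sm_full (v : V) : sm 4194303 v = ∑ i, v i := by
  simp only [sm, full, if_true]
lemma sm_comp (m m' : ℕ) (w : List ℕ) (h : ∀ k : Fin 22, m.testBit k.val = m'.testBit (ev w k.val))
    (v : V) : sm m (v ∘ W w) = sm m' v := by
  simp only [sm, h, ← W_val, Function.comp]
  exact Equiv.sum_comp (W w) (fun k => if m'.testBit k.val then v k else 0)

def t : List ℕ := [0,0,1]
def tp (j : ℕ) : List ℕ := (List.replicate j t).flatten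

lemma tp_succ (j : ℕ) (k : Fin 22) : W (tp (j + 1)) k = W (tp j) (W t k) := by
  have : tp (j + 1) = tp j ++ t := by
    simp only [tp, List.replicate_succ', List.flatten_append]; simp
  rw [this, W_append]; rfl

lemma orbit : ∀ i k : Fin 22, (∑ j : Fin 11, if ev (tp j.val) i.val = k.val then 1 else 0) =
    bif (bif (2464409).testBit i.val then (2464409).testBit k.val else (4194303 ^^^ 2464409).testBit k.val)
      then (1 : ℕ) else 0 := by
  decide +kernel

lemma orbit_sum (v : V) (h0 : ∑ i, v i = 0) (h1 : sm 2464409 v = 0) (i : Fin 22) :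
    ∑ j : Fin 11, v (W (tp j.val) i) = 0 := by
  have e : ∑ j : Fin 11, v (W (tp j.val) i) =
      ∑ k : Fin 22, ((∑ j : Fin 11, if ev (tp j.val) i.val = k.val then 1 else 0 : ℕ) : ZMod 2) * v k := by
    simp only [Nat.cast_sum, Finset.sum_mul]
    rw [Finset.sum_comm]
    refine Finset.sum_congr rfl fun j _ => ?_
    simp only [← W_val, ← Fin.ext_iff]
    simp
  have h2 : sm (4194303 ^^^ 2464409) v = 0 := by rw [sm_xor, sm_full, h0, h1, add_zero]
  rw [e]
  simp only [orbit]
  cases (2464409).testBit i.val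
  · rw [← h2]
    refine Finset.sum_congr rfl fun k _ => ?_
    simp only [cond_false]
    cases (4194303 ^^^ 2464409).testBit k.val <;> simp
  · rw [← h1]
    refine Finset.sum_congr rfl fun k _ => ?_
    simp only [cond_true]
    cases (2464409).testBit k.val <;> simp

lemma tp11 : W (tp 11) = 1 := W_eq (w := []) (by decide +kernel)

lemma t_lemma (v : V) (h0 : ∑ i, v i = 0) (h1 : sm 2464409 v = 0) :
    ∃ m : V, ∑ i, m i = 0 ∧ m + m ∘ W t = v := by
  refine ⟨v ∘ W (tp 0) + v ∘ W (tp 2) + v ∘ W (tp 4) + v ∘ W (tp 6) + v ∘ W (tp 8) + v ∘ W (tp 10), ?_, ?_⟩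
  · simp only [Pi.add_apply, Finset.sum_add_distrib, sum_comp, h0, add_zero]
  · funext i
    have h := orbit_sum v h0 h1 i
    have h11 : v (W (tp 11) i) = v i := by rw [tp11]; rfl
    simp only [Fin.sum_univ_succ, Fin.val_zero, Fin.val_succ, Finset.univ_eq_empty, Finset.sum_empty] at h
    simp only [Pi.add_apply, Function.comp, ← tp_succ]
    norm_num at h ⊢
    linear_combination h + h11

/-- representatives: sixteen patterns, and the involution -/
def cw : List (List ℕ) := [[1,1,0,0,1,1,1,0,0,0], [1,1,1,0,1,1,0,1,0,1,0], [0,1,1,1,0,0,0,1,0,1,1,0,0,1,0],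
  [0,1,1,0,1,0,1,1,1,0,0,0], [0,0,1,1,1,0,1,0,0], [1,0,0,0,1,0,0,1,0],
  [0,1,1,1,0,0,1,0,1,0,1,1,1,0,0], [1,0,1,0,1,1,0,0], [1,0,0,1,1,1,1,0,0,1,1,1,0],
  [1,0,0,1,0,1,1,0,1,0,1,0,1,1,0], [0,0,1,1,0,1,0], [1,0,1,1,0,0,1,0,0,1,0,0,1,0,1],
  [0,1,0,0,0,1,0,0,0,1,0,0,0,0], [1,0,0,0,0,1,1,1,1,0,0], [0,1,0,0,1,1,0,1,1],
  [1,1,1,0,0,1,1,1,0,1,1,0], [0,0,0,0,1,0,1,0,1,0,0]]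
def cW (i : ℕ) : List ℕ := cw.getD i []

lemma cj_r (x : Tr) (w : List ℕ) (i : Fin 11) :
    ((om w)⁻¹ * x * om w).2.2 i = (R w).symm (x.2.2 (R w i)) := by
  show ((om w).2.2)⁻¹ (x.2.2 ((om w).2.2 i)) = _
  rw [om_r]; rfl
lemma cj_mem {x : Tr} (hx : x ∈ Ga) (w : List ℕ) : (om w)⁻¹ * x * om w ∈ Ga :=
  Ga.mul_mem (Ga.mul_mem (Ga.inv_mem (om_mem w)) hx) (om_mem w)

lemma lt4 (P : Fin 11 → Prop) (h0 : P 0) (h1 : P 1) (h2 : P 2) (h3 : P 3) : ∀ n : Fin 11, n.val < 4 → P n := by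
  rintro ⟨n, hn⟩ h
  simp only at h
  interval_cases n <;> assumption

lemma pat1 : ∀ y : Fin 11, y ≠ 1 → y ≠ 2 → y ≠ 3 → ∃ i : Fin 17,
    1 = bev (cW i) 0 ∧ 2 = bev (cW i) 1 ∧ 3 = bev (cW i) 2 ∧ y.val = bev (cW i) 3 := by decide +kernel
lemma pat2 : ∀ y : Fin 11, y ≠ 0 → y ≠ 1 → y ≠ 2 → ∃ i : Fin 17,
    1 = bev (cW i) 0 ∧ 2 = bev (cW i) 1 ∧ 0 = bev (cW i) 2 ∧ y.val = bev (cW i) 3 := by decide +kernel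
lemma other2 : ∀ p q : Fin 11, ∃ s u : Fin 11, s ≠ p ∧ s ≠ q ∧ u ≠ p ∧ u ≠ q ∧ s ≠ u := by decide +kernel
lemma other3 : ∀ p q r : Fin 11, ∃ s : Fin 11, s ≠ p ∧ s ≠ q ∧ s ≠ r := by decide +kernel

lemma classify {x : Tr} (hx : x ∈ Ga) (h : x.2.2 ≠ 1) :
    ∃ w, ∃ i : Fin 17, ((om w)⁻¹ * x * om w).2.1 = W (cW i) := by
  set σ := x.2.2 with hσ
  have inj : ∀ {a b}, σ a = σ b → a = b := fun h => σ.injective h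
  have pt : ∀ {w : List ℕ} {i j : Fin 11} {p q : Fin 11}, R w i = p → R w j = q → σ p = q →
      ((om w)⁻¹ * x * om w).2.2 i = j := by
    intro w i j p q h1 h2 h3
    rw [cj_r, h1, ← hσ, h3, ← h2, Equiv.symm_apply_apply]
  have neq : ∀ {w : List ℕ} {i j k : Fin 11}, ((om w)⁻¹ * x * om w).2.2 i = j → i ≠ k →
      ((om w)⁻¹ * x * om w).2.2 k ≠ j := by
    intro w i j k h1 h2 h3
    exact h2 (((om w)⁻¹ * x * om w).2.2.injective (h1.trans h3.symm))
  by_cases hinv : ∀ p, σ (σ p) = p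
  · have : ∃ p, σ p ≠ p := by
      by_contra hc
      push Not at hc
      exact h (Equiv.ext hc)
    obtain ⟨p, hp⟩ := this
    by_cases hs : ∃ s, s ≠ p ∧ s ≠ σ p ∧ σ s ≠ s
    · obtain ⟨s, h1, h2, h3⟩ := hs
      obtain ⟨w, e0, e1, e2, e3⟩ := four_trans p (σ p) s (σ s) hp.symm h1.symm
        (fun e => h2 (by rw [e, hinv])) h2.symm (fun e => h1 (inj e).symm) h3.symm
      refine ⟨w, 16, q_ext' (cj_mem hx w) _ (lt4 _ ?_ ?_ ?_ ?_)⟩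
      · rw [pt e0 e1 rfl]; decide +kernel
      · rw [pt e1 e0 (hinv p)]; decide +kernel
      · rw [pt e2 e3 rfl]; decide +kernel
      · rw [pt e3 e2 (hinv s)]; decide +kernel
    · exfalso
      push Not at hs
      obtain ⟨s, u, h1, h2, h3, h4, h5⟩ := other2 p (σ p)
      obtain ⟨w, e0, e1, e2, e3⟩ := four_trans p (σ p) s u hp.symm h1.symm h3.symm h2.symm h4.symm h5
      have hq : ((om w)⁻¹ * x * om w).2.1 = W [1,0,1,0,0,0,0,1,0,1,0,0,0,0] := by
        refine q_ext' (cj_mem hx w) _ (lt4 _ ?_ ?_ ?_ ?_)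
        · rw [pt e0 e1 rfl]; decide +kernel
        · rw [pt e1 e0 (hinv p)]; decide +kernel
        · rw [pt e2 e2 (hs s h1 h2)]; decide +kernel
        · rw [pt e3 e3 (hs u h3 h4)]; decide +kernel
      have h6 : ((om w)⁻¹ * x * om w).2.2 4 = 4 := by
        refine pt rfl rfl (hs _ ?_ ?_)
        · rw [← e0]; intro hc; exact absurd ((R w).injective hc) (by decide)
        · rw [← e1]; intro hc; exact absurd ((R w).injective hc) (by decide)
      have h7 := (good (cj_mem hx w)).h1 (rp 4)
      rw [bk_rp, h6, hq] at h7
      rw [← R_val] at h7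
      have h8 := congrArg Fin.val h7
      rw [R_val'] at h8
      exact absurd h8 (by decide +kernel)
  · push Not at hinv
    obtain ⟨p, hp⟩ := hinv
    have hp1 : p ≠ σ p := fun e => hp (by rw [← e, ← e])
    have hp2 : σ p ≠ σ (σ p) := fun e => hp1 (inj e)
    by_cases h3 : σ (σ (σ p)) = p
    · obtain ⟨s, s1, s2, s3⟩ := other3 p (σ p) (σ (σ p))
      obtain ⟨w, e0, e1, e2, e3⟩ := four_trans p (σ p) (σ (σ p)) s hp1 hp.symm s1.symm hp2 s2.symm s3.symm
      have a0 := pt e0 e1 rfl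
      have a1 := pt e1 e2 rfl
      have a2 := pt e2 e0 h3
      obtain ⟨i, b0, b1, b2, b3⟩ := pat2 (((om w)⁻¹ * x * om w).2.2 3) (neq a2 (by decide))
        (neq a0 (by decide)) (neq a1 (by decide))
      refine ⟨w, i, q_ext' (cj_mem hx w) _ (lt4 _ ?_ ?_ ?_ b3)⟩
      · rw [a0]; exact b0
      · rw [a1]; exact b1
      · rw [a2]; exact b2
    · obtain ⟨w, e0, e1, e2, e3⟩ := four_trans p (σ p) (σ (σ p)) (σ (σ (σ p))) hp1 hp.symm (Ne.symm h3) hp2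
        (fun e => hp (inj e).symm) (fun e => hp2 (inj e))
      have a0 := pt e0 e1 rfl
      have a1 := pt e1 e2 rfl
      have a2 := pt e2 e3 rfl
      obtain ⟨i, b0, b1, b2, b3⟩ := pat1 (((om w)⁻¹ * x * om w).2.2 3) 
        (neq a0 (by decide)) (neq a1 (by decide)) (neq a2 (by decide))
      refine ⟨w, i, q_ext' (cj_mem hx w) _ (lt4 _ ?_ ?_ ?_ b3)⟩
      · rw [a0]; exact b0
      · rw [a1]; exact b1
      · rw [a2]; exact b2

/-- conjugators, second elements and indices for the sixteen patterns -/
def gw : List (List ℕ) := [[], [1,1], [1,1,0,1,1,0], [0,1,0,1,0,1,1], [1,1], [1,0], [0,1], [0,1,1,0,1],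
  [0,0], [0,1,0,1], [0,1,1,0,0,1,0], [0,1,1,0,0,0], [1,1,0], [1,1,0], [1,0,1,1,0,0,0], [1,0,1,0,0,0]]
def Bw : List (List ℕ) := [[1,1,0,0,0], [1,1,0,1,1,0,0,0], [0], [1,1,0], [1,0,0,0,0,1,1,1],
  [0,0,0,1,1,1,0,1], [0,1,1,0,0,1,1,1,1], [1,0,1,1,0], [0,1,0,0,1,0,0,1,0,1], [0,1,1,1,0,1,1,0,0,0],
  [1,1,0,1,0,0], [0,1,1], [0,1,0,1,0,1,0,0], [1,0,0,0,0,1,0], [0,1,1,1], [1,1,0]]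
def lw : List ℕ := [2,6,2,2,4,2,2,2,4,4,2,2,6,2,2,2]
def gW (i : ℕ) : List ℕ := gw.getD i []
def BW (i : ℕ) : List ℕ := Bw.getD i []
def nm (i : ℕ) : ℕ := 2 ^ ev (BW i) 0 + 2 ^ ev (BW i) (lw.getD i 0)
def nm' (i : ℕ) : ℕ := 1 + 2 ^ lw.getD i 0

lemma dat : ∀ i : Fin 16, (∀ j : Fin 22, ev (t ++ BW i ++ gW i) j.val = ev (BW i ++ t ++ gW i ++ cW i) j.val) ∧
    (∀ j : Fin 22, (nm i).testBit (ev (BW i) j.val) = (nm' i).testBit j.val) ∧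
    ∑ j : Fin 22, bv (nm i) j = 0 ∧ sm 2464409 (bv (nm i)) + sm 2464409 (bv (nm' i)) = 1 := by
  decide +kernel

lemma z2 (a : ZMod 2) : a = 0 ∨ a = 1 := by revert a; decide

lemma gen_case {x : Tr} (hx : x ∈ Ga) (i : Fin 16) (h : x.2.1 = W (cW i)) : IsC x := by
  obtain ⟨d1, d2, d3, d4⟩ := dat i
  have d2 := bv_comp _ _ _ d2
  have d1 := W_eq d1
  rw [W_append, W_append _ (cW i), ← h, W_append _ (gW i)] at d1
  apply IsC.conj (Ga.inv_mem (om_mem (gW i)))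
  rw [inv_inv]
  refine core (Ga.mul_mem (Ga.mul_mem (om_mem _) hx) (Ga.inv_mem (om_mem _))) t (BW i) ?_ ?_
  · show _ = _ * ((om _).2.1 * x.2.1 * (om _).2.1⁻¹)
    rw [om_q, ← mul_assoc, ← mul_assoc, ← d1]; group
  · intro v hv _
    obtain ⟨w, hw, ew⟩ : ∃ w : V, ∑ i, w i = 0 ∧ v = w ∘ W (BW i ++ t) :=
      ⟨v ∘ (W (BW i ++ t)).symm, by rw [sum_comp, hv], by funext k; simp⟩
    have key : ∃ n : V, ∑ k, n k = 0 ∧ sm 2464409 (w + (n + n ∘ W (BW i))) = 0 := by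
      rcases z2 (sm 2464409 w) with h0 | h0
      · refine ⟨0, by simp, ?_⟩
        have : ((0 : V) ∘ W (BW i)) = 0 := rfl
        rw [this, add_zero, add_zero, h0]
      · refine ⟨bv (nm i), d3, ?_⟩
        rw [d2, sm_add, sm_add, d4, h0]; rfl
    obtain ⟨n, hn, hs⟩ := key
    obtain ⟨m, hm, em⟩ := t_lemma _ (by
      simp only [Pi.add_apply, Finset.sum_add_distrib, sum_comp, hw, hn, add_zero]) hs
    refine ⟨n, m, hn, hm, ?_⟩
    rw [ew]; congr 1
    rw [add_assoc _ m, em, add_comm w, ← add_assoc, v_self, zero_add]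

def h1 : List ℕ := [0,0,1,0,1,0,1,1,0,0,0,1]
def h2 : List ℕ := [1,0,1,1,0,1,1,1,1,0,0,1,1]
def B1 : List ℕ := [0,1,0,1]
def A2 : List ℕ := [0,1,1]
def B2 : List ℕ := [0,1,0,1,0,0,0,1,0,0]

lemma conj_vec {x : Tr} (v : V) (g : List ℕ) (e : x = nu v * lam x) :
    (om g)⁻¹ * x * om g = nu (v ∘ W g) * lam ((om g)⁻¹ * x * om g) := by
  have := conj_nu (om_mem g) v
  rw [om_q] at this
  rw [lam_mul, lam_mul, lam_inv, om_lam]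
  conv_lhs => rw [e]
  have h2 : (om g)⁻¹ * nu v = nu (v ∘ W g) * (om g)⁻¹ := by
    rw [inv_mul_eq_iff_eq_mul, ← mul_assoc, ← this]; group
  rw [← mul_assoc, h2]
  simp only [mul_assoc]

lemma conj_q {x : Tr} {c c' g : List ℕ} (h : x.2.1 = W c)
    (hg : ∀ j : Fin 22, ev (c ++ g) j.val = ev (g ++ c') j.val) : ((om g)⁻¹ * x * om g).2.1 = W c' := by
  have := W_eq hg
  rw [W_append, W_append] at this
  show (om g).2.1⁻¹ * x.2.1 * (om g).2.1 = _
  rw [om_q, h, mul_assoc, this, inv_mul_cancel_left]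

/-- core lemma when the commutator identity and the vector are explicit -/
lemma core2 {x : Tr} (hx : x ∈ Ga) (A B C : List ℕ) (hW : ∀ j : Fin 22, ev (A ++ B) j.val = ev (B ++ A ++ C) j.val)
    (hC : x.2.1 = W C) (v : V) (hv : ∑ i, v i = 0) (e : x = nu v * lam x)
    (h : ∀ w : V, ∑ i, w i = 0 → w ∘ W (B ++ A) = v → ∃ n m : V, ∑ i, n i = 0 ∧ ∑ i, m i = 0 ∧
      w = n + n ∘ W B + m + m ∘ W A) : IsC x := by
  refine core hx A B ?_ ?_
  · have := W_eq hW
    rwa [W_append _ C, ← hC] at this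
  · intro v' _ e'
    have : v' = v := by
      apply nu_inj
      rw [e'] at e
      exact mul_right_cancel (e.trans (by rw [← e']))
    obtain ⟨n, m, hn, hm, e2⟩ := h (v ∘ (W (B ++ A)).symm) (by rw [sum_comp, hv]) (by funext k; simp)
    refine ⟨n, m, hn, hm, ?_⟩
    rw [← e2, this]; funext k; simp

lemma inv_T {x : Tr} (hx : x ∈ Ga) (h : x.2.1 = W (cW 16)) (v : V) (hv : ∑ i, v i = 0) (e : x = nu v * lam x)
    (M : ℕ) (g : List ℕ) (hg : ∀ j : Fin 22, ev (cW 16 ++ g) j.val = ev (g ++ h1) j.val)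
    (hM : ∀ k : Fin 22, (2464409).testBit k.val = M.testBit (ev g k.val)) (hs : sm M v = 0) : IsC x := by
  apply IsC.conj (om_mem g)
  refine core2 (cj_mem hx g) t B1 h1 (by decide +kernel) (conj_q h hg) (v ∘ W g) (by rw [sum_comp, hv])
    (conj_vec v g e) ?_
  intro w hw ew
  have : sm 2464409 w = 0 := by
    rw [← sm_comp 2464409 2464409 (B1 ++ t) (by decide +kernel), ew, sm_comp _ _ _ hM, hs]
  obtain ⟨m, hm, em⟩ := t_lemma w hw this
  refine ⟨0, m, by simp, hm, ?_⟩
  have : ((0 : V) ∘ W B1) = 0 := rfl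
  rw [this, add_zero, zero_add, em]

def bvn (m k : ℕ) : ZMod 2 := if m.testBit k then 1 else 0
def certs : List (ℕ × ℕ) := [(0,0),(4752,1105),(0,0),(4688,1052),(144,68),(4656,1108),(4625,1045),(129,5),(192,68),
  (4752,1108),(4608,1028),(160,36),(513,5),(4945,1045),(1169,85),(6705,1141),(144,1108),(4656,3188),(201,77),
  (4757,1105),(4688,1300),(0,516)]
def cN (i : ℕ) : ℕ := (certs.getD i (0,0)).1
def cM (i : ℕ) : ℕ := (certs.getD i (0,0)).2

lemma cert_ok : ∀ i : Fin 22, (∑ k, bv (cN i) k = 0 ∧ ∑ k, bv (cM i) k = 0) ∧ ∀ j : Fin 22,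
    (Pi.single i 1 + Pi.single 2 1 + sm 3 (Pi.single i 1 + Pi.single 2 1) • (Pi.single 0 1 + Pi.single 2 1) : V) j =
    bvn (cN i) j.val + bvn (cN i) (ev B2 j.val) + bvn (cM i) j.val + bvn (cM i) (ev A2 j.val) := by
  decide +kernel

lemma sm_smul (m : ℕ) (c : ZMod 2) (v : V) : sm m (c • v) = c * sm m v := by
  simp only [sm, Finset.mul_sum]
  refine Finset.sum_congr rfl fun k _ => ?_
  cases m.testBit k.val <;> simp
lemma sm_zero (m : ℕ) : sm m 0 = 0 := by simp [sm]

lemma block_lemma (w : V) (hw : ∑ i, w i = 0) (hs : sm 3 w = 0) : ∃ n m : V, ∑ i, n i = 0 ∧ ∑ i, m i = 0 ∧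
      w = n + n ∘ W B2 + m + m ∘ W A2 := by
  have := span_pairs (fun w => ∃ n m : V, ∑ i, n i = 0 ∧ ∑ i, m i = 0 ∧
      w + sm 3 w • (Pi.single 0 1 + Pi.single 2 1 : V) = n + n ∘ W B2 + m + m ∘ W A2) ?_ ?_ 2 ?_ hw
  · rw [hs, zero_smul, add_zero] at this; exact this
  · refine ⟨0, 0, by simp, by simp, ?_⟩
    rw [sm_zero, zero_smul]; rfl
  · rintro u v ⟨n, m, hn, hm, e⟩ ⟨n', m', hn', hm', e'⟩
    refine ⟨n + n', m + m', ?_, ?_, ?_⟩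
    · simp only [Pi.add_apply, Finset.sum_add_distrib, hn, hn', add_zero]
    · simp only [Pi.add_apply, Finset.sum_add_distrib, hm, hm', add_zero]
    · rw [sm_add, add_smul]
      have c1 : (n + n') ∘ W B2 = n ∘ W B2 + n' ∘ W B2 := rfl
      have c2 : (m + m') ∘ W A2 = m ∘ W A2 + m' ∘ W A2 := rfl
      rw [c1, c2, add_add_add_comm, e, e']; abel
  · intro i
    obtain ⟨⟨c1, c2⟩, c3⟩ := cert_ok i
    refine ⟨bv (cN i), bv (cM i), c1, c2, ?_⟩
    funext j
    rw [c3 j]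
    simp only [Pi.add_apply, Function.comp, bv, bvn, W_val]

lemma inv_B {x : Tr} (hx : x ∈ Ga) (h : x.2.1 = W (cW 16)) (v : V) (hv : ∑ i, v i = 0) (e : x = nu v * lam x)
    (M : ℕ) (g : List ℕ) (hg : ∀ j : Fin 22, ev (cW 16 ++ g) j.val = ev (g ++ h2) j.val)
    (hM : ∀ k : Fin 22, (3).testBit k.val = M.testBit (ev g k.val)) (hs : sm M v = 0) : IsC x := by
  apply IsC.conj (om_mem g)
  refine core2 (cj_mem hx g) A2 B2 h2 (by decide +kernel) (conj_q h hg) (v ∘ W g) (by rw [sum_comp, hv])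
    (conj_vec v g e) ?_
  intro w hw ew
  apply block_lemma w hw
  rw [← sm_comp 3 3 (B2 ++ A2) (by decide +kernel), ew, sm_comp _ _ _ hM, hs]

lemma inv_case {x : Tr} (hx : x ∈ Ga) (h : x.2.1 = W (cW 16)) : IsC x := by
  obtain ⟨v, hv, e⟩ := (good hx).h2
  rcases z2 (sm 2512218 v) with a1 | a1
  · exact inv_T hx h v hv e _ [0,1,1,1,0,1,1] (by decide +kernel) (by decide +kernel) a1
  rcases z2 (sm 2729386 v) with a2 | a2
  · exact inv_T hx h v hv e _ [1,0,0,1,0,1,0,0,0] (by decide +kernel) (by decide +kernel) a2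
  rcases z2 (sm 2516645 v) with a3 | a3
  · exact inv_T hx h v hv e _ [1,1,1,0,0,1,0,1,0] (by decide +kernel) (by decide +kernel) a3
  rcases z2 (sm 1727146 v) with a4 | a4
  · exact inv_T hx h v hv e _ [1,0,0,1,1,0,0,1,1,0] (by decide +kernel) (by decide +kernel) a4
  rcases z2 (sm 768 v) with a5 | a5
  · exact inv_B hx h v hv e _ [1,1,0,0,0,1] (by decide +kernel) (by decide +kernel) a5
  rcases z2 (sm 12288 v) with a6 | a6
  · exact inv_B hx h v hv e _ [0,1,0,0,1,1,1] (by decide +kernel) (by decide +kernel) a6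
  rcases z2 (sm 786432 v) with a7 | a7
  · exact inv_B hx h v hv e _ [1,0,1,1,1,1,0,0,0,0] (by decide +kernel) (by decide +kernel) a7
  exfalso
  have : sm (2512218 ^^^ 2729386 ^^^ 2516645 ^^^ 1727146 ^^^ 768 ^^^ 12288 ^^^ 786432) v = 1 := by
    simp only [sm_xor, a1, a2, a3, a4, a5, a6, a7]; decide
  have e2 : 2512218 ^^^ 2729386 ^^^ 2516645 ^^^ 1727146 ^^^ 768 ^^^ 12288 ^^^ 786432 = 4194303 := by decide
  rw [e2, sm_full, hv] at this
  exact absurd this (by decide)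

lemma nontriv {x : Tr} (hx : x ∈ Ga) (h : x.2.2 ≠ 1) : IsC x := by
  obtain ⟨w, i, e⟩ := classify hx h
  apply IsC.conj (om_mem w)
  rcases lt_or_ge i.val 16 with hi | hi
  · exact gen_case (cj_mem hx w) ⟨i.val, hi⟩ e
  · have : i.val = 16 := by omega
    rw [this] at e
    exact inv_case (cj_mem hx w) e

lemma nu_comm (v m : V) (hm : ∑ i, m i = 0) (B : List ℕ) (h : v = m + m ∘ W B) : IsC (nu v) := by
  refine ⟨nu m, nu_mem hm, om B, om_mem B, ?_⟩
  have := conj_nu (om_mem B) m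
  rw [om_q] at this
  rw [mul_assoc, this, nu_inv, h, ← nu_mul]; group

lemma nu_cj (v : V) (g : List ℕ) (h : IsC (nu (v ∘ W g))) : IsC (nu v) := by
  apply IsC.conj (om_mem g)
  have := conj_nu (om_mem g) v
  rw [om_q] at this
  rw [mul_assoc, this, inv_mul_cancel_left]; exact h

lemma sm3 (v : V) : sm 3 v = v 0 + v 1 := by
  have e : ∀ k : Fin 22, (3).testBit k.val = (decide (k = 0) || decide (k = 1)) := by decide +kernel
  simp only [sm, e]
  rw [Fintype.sum_eq_add 0 1 (by decide)]
  · simp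
  · rintro k ⟨h1, h2⟩; simp [h1, h2]

lemma block0 (v : V) (hv : ∑ i, v i = 0) (h : ∀ g, sm 2464409 (v ∘ W g) = 1) : v 0 = v 1 := by
  have a1 := h [1]
  rw [sm_comp 2464409 2714198 _ (by decide +kernel)] at a1
  have a2 := h [0,1]
  rw [sm_comp 2464409 2512218 _ (by decide +kernel)] at a2
  have a3 := h [1,1]
  rw [sm_comp 2464409 2729386 _ (by decide +kernel)] at a3
  have a4 := h [0,1,1]
  rw [sm_comp 2464409 1414758 _ (by decide +kernel)] at a4
  have a5 := h [1,1,0,0]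
  rw [sm_comp 2464409 1485206 _ (by decide +kernel)] at a5
  have a6 := h [0,0,0,1,1]
  rw [sm_comp 2464409 1727146 _ (by decide +kernel)] at a6
  have : sm (2714198 ^^^ 2512218 ^^^ 2729386 ^^^ 1414758 ^^^ 1485206 ^^^ 1727146 ^^^ 4194303) v = 0 := by
    simp only [sm_xor, a1, a2, a3, a4, a5, a6, sm_full, hv]; decide
  have e2 : 2714198 ^^^ 2512218 ^^^ 2729386 ^^^ 1414758 ^^^ 1485206 ^^^ 1727146 ^^^ 4194303 = 3 := by decide
  rw [e2, sm3] at this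
  exact CharTwo.add_eq_zero.1 this

lemma bk0 : ∀ a : Fin 22, bk a = 0 → a = 0 ∨ a = 1 := by decide +kernel

lemma block_const (v : V) (hv : ∑ i, v i = 0) (h : ∀ g, sm 2464409 (v ∘ W g) = 1) (j : Fin 22) :
    v j = v (rp (bk j)) := by
  obtain ⟨w, -, hw⟩ := step1 0 (by norm_num) (bk j) (Nat.zero_le _)
  change R w 0 = bk j at hw
  have e : v (W w 0) = v (W w 1) := block0 (v ∘ W w) (by rw [sum_comp, hv]) (fun g => by
    have := h (w ++ g)
    rwa [W_append] at this)
  have key : ∀ k, bk k = bk j → v k = v (W w 0) := by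
    intro k hk
    have e1 : W w ((W w).symm k) = k := (W w).apply_symm_apply k
    have e2 : bk ((W w).symm k) = 0 := by
      apply (R w).injective
      rw [← bk_W, e1, hk, hw]
    rcases bk0 _ e2 with h0 | h0 <;> rw [h0] at e1
    · rw [e1]
    · rw [e, e1]
  rw [key j rfl, key (rp (bk j)) (bk_rp _)]

lemma Tone : ∀ p : Fin 11, (∑ k : Fin 22, if (2464409).testBit k.val = true ∧ bk k = p then 1 else 0) = 1 := by
  decide +kernel

lemma sum_c (v : V) (hc : ∀ j, v j = v (rp (bk j))) : sm 2464409 v = ∑ p, v (rp p) := by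
  have : ∀ (p : Fin 11) (c : ZMod 2),
      c = ∑ k : Fin 22, if (2464409).testBit k.val = true ∧ bk k = p then c else 0 := by
    intro p c
    have e : (∑ k : Fin 22, if (2464409).testBit k.val = true ∧ bk k = p then c else 0) =
        ((∑ k : Fin 22, if (2464409).testBit k.val = true ∧ bk k = p then 1 else 0 : ℕ) : ZMod 2) * c := by
      rw [Nat.cast_sum, Finset.sum_mul]
      refine Finset.sum_congr rfl fun k _ => ?_
      split_ifs
      · rw [Nat.cast_one, one_mul]
      · rw [Nat.cast_zero, zero_mul]
    rw [e, Tone, Nat.cast_one, one_mul]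
  rw [Finset.sum_congr rfl fun p _ => this p (v (rp p)), Finset.sum_comm]
  refine Finset.sum_congr rfl fun k _ => ?_
  by_cases h : (2464409).testBit k.val = true
  · simp only [h, true_and, if_true]
    rw [hc k]
    simp
  · simp [h]

lemma fin_case (v : V) (hc : ∀ j, v j = v (rp (bk j))) (w : List ℕ) (S : Finset (Fin 11)) (B : List ℕ) (m : ℕ)
    (hm : ∑ i, bv m i = 0)
    (cert : ∀ j : Fin 22, (if bk j ∈ S then 1 else 0 : ZMod 2) = bvn m j.val + bvn m (ev B j.val))
    (hS : ∀ k, v (rp (R w k)) = if k ∈ S then 1 else 0) : IsC (nu v) := by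
  apply nu_cj v w
  refine nu_comm _ (bv m) hm B ?_
  funext j
  simp only [Function.comp, Pi.add_apply]
  rw [hc, bk_W, hS, cert j]
  simp only [bv, bvn, W_val]

def c5 : List (List ℕ × ℕ) := [([0,1,0,0],1310412), ([0,0,1,1,0,0],3988428), ([0,1,1,0],3357496), ([1,1,0,0],888048),
  ([1,1,0,0],953584), ([0,1,1,0],198904), ([0,1,0,0],2358988)]

lemma cert5 : ∀ y : Fin 11, 4 ≤ y.val →
    (∑ i, bv (c5.getD (y.val - 4) ([],0)).2 i = 0) ∧
    ∀ j : Fin 22, (if bk j ∈ ({y,3,0,1,2} : Finset (Fin 11)) then 1 else 0 : ZMod 2) =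
      bvn (c5.getD (y.val - 4) ([],0)).2 j.val +
      bvn (c5.getD (y.val - 4) ([],0)).2 (ev (c5.getD (y.val - 4) ([],0)).1 j.val) := by
  decide +kernel

lemma other1 : ∀ p : Fin 11, ∃ q r s : Fin 11, p ≠ q ∧ p ≠ r ∧ p ≠ s ∧ q ≠ r ∧ q ≠ s ∧ r ≠ s := by decide +kernel

lemma triv_case (v : V) (hv : ∑ i, v i = 0) (hne : v ≠ fun _ => 1) : IsC (nu v) := by
  by_cases h : ∃ g, sm 2464409 (v ∘ W g) = 0
  · obtain ⟨g, hg⟩ := h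
    apply nu_cj v g
    obtain ⟨m, hm, e⟩ := t_lemma (v ∘ W g) (by rw [sum_comp, hv]) hg
    exact nu_comm _ m hm t e.symm
  have h : ∀ g, sm 2464409 (v ∘ W g) = 1 := fun g =>
    (z2 _).resolve_left fun hc => h ⟨g, hc⟩
  have hc := block_const v hv h
  have hsum : ∑ p, v (rp p) = 1 := by
    rw [← sum_c v hc]; exact h []
  set S : Finset (Fin 11) := Finset.univ.filter (fun p => v (rp p) = 1) with hSdef
  have hS : ∀ p, v (rp p) = if p ∈ S then 1 else 0 := by
    intro p
    rcases z2 (v (rp p)) with h0 | h0 <;> simp [hSdef, h0]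
  have hodd : Odd S.card := by
    rw [← ZMod.natCast_eq_one_iff_odd, ← hsum, Finset.sum_congr rfl fun p _ => hS p]
    simp
  have hle : S.card ≤ 11 := by simpa using S.card_le_univ
  have hn11 : S.card ≠ 11 := by
    intro hc11
    have : S = Finset.univ := Finset.eq_univ_of_card S (by simpa using hc11)
    apply hne
    funext j
    rw [hc j, hS, this]; simp
  have hcompl : Sᶜ.card = 11 - S.card := by rw [Finset.card_compl]; simp
  have h5 : S.card = 1 ∨ S.card = 3 ∨ S.card = 5 ∨ S.card = 7 ∨ S.card = 9 := by
    obtain ⟨k, hk⟩ := hodd; omega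
  rcases h5 with h5 | h5 | h5 | h5 | h5
  · obtain ⟨a, e⟩ := Finset.card_eq_one.1 h5
    obtain ⟨q, r, s, n1, n2, n3, n4, n5, n6⟩ := other1 a
    obtain ⟨w, rfl, rfl, rfl, rfl⟩ := four_trans a q r s n1 n2 n3 n4 n5 n6
    refine fin_case v hc w {0} [0,1,1] 8194 (by decide +kernel) (by decide +kernel) fun k => ?_
    rw [hS, e]; simp
  · obtain ⟨a, b, c, n1, n2, n3, e⟩ := Finset.card_eq_three.1 h5
    obtain ⟨s, s1, s2, s3⟩ := other3 a b c
    obtain ⟨w, rfl, rfl, rfl, rfl⟩ := four_trans a b c s n1 n2 s1.symm n3 s2.symm s3.symm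
    refine fin_case v hc w {0,1,2} [0,1,1,0] 198712 (by decide +kernel) (by decide +kernel) fun k => ?_
    rw [hS, e]; simp
  · obtain ⟨x, S1, hx, e1, h4⟩ := Finset.card_eq_succ.1 h5
    obtain ⟨d, S2, hd, e2, h3⟩ := Finset.card_eq_succ.1 h4
    obtain ⟨a, b, c, n1, n2, n3, e⟩ := Finset.card_eq_three.1 h3
    subst e; subst e2
    simp only [Finset.mem_insert, Finset.mem_singleton, not_or] at hx hd
    obtain ⟨w, rfl, rfl, rfl, rfl⟩ := four_trans a b c d n1 n2 (Ne.symm hd.1) n3 (Ne.symm hd.2.1) (Ne.symm hd.2.2)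
    obtain ⟨y, rfl⟩ := (R w).surjective x
    have hy : 4 ≤ y.val := by
      by_contra hlt
      have : y = 0 ∨ y = 1 ∨ y = 2 ∨ y = 3 := by omega
      rcases this with rfl | rfl | rfl | rfl <;> simp at hx
    obtain ⟨k1, k2⟩ := cert5 y hy
    refine fin_case v hc w {y,3,0,1,2} _ _ k1 k2 fun k => ?_
    rw [hS, ← e1]
    simp only [Finset.mem_insert, Finset.mem_singleton, (R w).injective.eq_iff]
  · rw [h5] at hcompl
    obtain ⟨d, S2, hd, e2, h3⟩ := Finset.card_eq_succ.1 hcompl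
    obtain ⟨a, b, c, n1, n2, n3, e⟩ := Finset.card_eq_three.1 h3
    subst e
    simp only [Finset.mem_insert, Finset.mem_singleton, not_or] at hd
    obtain ⟨w, rfl, rfl, rfl, rfl⟩ := four_trans a b c d n1 n2 (Ne.symm hd.1) n3 (Ne.symm hd.2.1) (Ne.symm hd.2.2)
    refine fin_case v hc w {3,0,1,2}ᶜ [1,0,0,0] 3355824 (by decide +kernel) (by decide +kernel) fun k => ?_
    rw [hS, ← compl_compl S, ← e2]
    simp only [Finset.mem_compl, Finset.mem_insert, Finset.mem_singleton, (R w).injective.eq_iff]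
  · rw [h5] at hcompl
    obtain ⟨a, b, n1, e⟩ := Finset.card_eq_two.1 hcompl
    obtain ⟨s, u, s1, s2, u1, u2, su⟩ := other2 a b
    obtain ⟨w, rfl, rfl, rfl, rfl⟩ := four_trans a b s u n1 s1.symm u1.symm s2.symm u2.symm su
    refine fin_case v hc w {0,1}ᶜ [0,0,1,0,1,1,1] 3948040 (by decide +kernel) (by decide +kernel) fun k => ?_
    rw [hS, ← compl_compl S, e]
    simp only [Finset.mem_compl, Finset.mem_insert, Finset.mem_singleton, (R w).injective.eq_iff]

def one : V := fun _ => 1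
def ze : Tr := nu one

lemma ze_mem : ze ∈ Ga := nu_mem (by decide +kernel)
lemma ze_comm {x : Tr} (hx : x ∈ Ga) : ze * x = x * ze := conj_nu hx one
lemma ze_sq : ze * ze = 1 := by rw [ze, nu_mul, v_self, nu_zero]

structure Bad (a b : Tr) : Prop where
  ha : a ∈ Ga
  hb : b ∈ Ga
  h : a * b = b * a * ze

lemma Bad.symm {a b : Tr} (h : Bad a b) : Bad b a :=
  ⟨h.hb, h.ha, by rw [h.h, mul_assoc, ze_sq, mul_one]⟩

lemma Bad.conj {a b : Tr} (h : Bad a b) (w : List ℕ) :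
    Bad ((om w)⁻¹ * a * om w) ((om w)⁻¹ * b * om w) := by
  refine ⟨cj_mem h.ha w, cj_mem h.hb w, ?_⟩
  have e : (om w)⁻¹ * b * om w * ((om w)⁻¹ * a * om w) * ze = (om w)⁻¹ * (b * a * ze) * om w := by
    rw [mul_assoc, mul_assoc, mul_assoc, mul_assoc, mul_assoc, ← ze_comm (om_mem w)]
    group
  rw [e, ← h.h]; group

lemma Bad.pow {a b : Tr} (h : Bad a b) (k : ℕ) : Bad (a ^ (2 * k + 1)) b := by
  refine ⟨Ga.pow_mem h.ha _, h.hb, ?_⟩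
  induction k with
  | zero => simpa using h.h
  | succ k ih =>
    have e2 : a ^ 2 * b = b * a ^ 2 := by
      rw [pow_two, mul_assoc, h.h, ← mul_assoc, ← mul_assoc, h.h, mul_assoc, mul_assoc (b * a), ← mul_assoc ze,
        ze_comm h.ha, mul_assoc a, ze_sq, mul_one, mul_assoc]
    have : 2 * (k + 1) + 1 = (2 * k + 1) + 2 := by ring
    rw [this, pow_add, mul_assoc, e2, ← mul_assoc, ih, mul_assoc (b * a ^ (2 * k + 1)), ze_comm (Ga.pow_mem h.ha 2)]
    simp only [mul_assoc]

lemma Bad.q {a b : Tr} (h : Bad a b) : a.2.1 * b.2.1 = b.2.1 * a.2.1 := by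
  have := congrArg (fun x : Tr => x.2.1) h.h
  exact this.trans (mul_one _)
lemma Bad.r {a b : Tr} (h : Bad a b) (i : Fin 11) : a.2.2 (b.2.2 i) = b.2.2 (a.2.2 i) := by
  have := congrArg (fun x : Tr => x.2.2 i) h.h
  exact this

lemma eleven (v : V) (s : Perm (Fin 22)) (h : v = v ∘ s + one) : ∑ i, v i ≠ 0 := by
  have h1 : ∀ i, (v i).val + (v (s i)).val = 1 := by
    intro i
    have := congrFun h i
    simp only [Pi.add_apply, Function.comp, one] at this
    rw [this]
    generalize v (s i) = c
    revert c; decide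
  have h2 : ∑ i, (v i).val + ∑ i, (v (s i)).val = 22 := by
    rw [← Finset.sum_add_distrib, Finset.sum_congr rfl fun i _ => h1 i]; simp
  have h3 : ∑ i, (v (s i)).val = ∑ i, (v i).val := Equiv.sum_comp s (fun i => (v i).val)
  have h4 : ∑ i, (v i).val = 11 := by omega
  have h5 : ∑ i, v i = ((∑ i, (v i).val : ℕ) : ZMod 2) := by
    rw [Nat.cast_sum]; simp
  rw [h5, h4]; decide

lemma Bad.c0 {a b : Tr} (h : Bad a b) (k : ℕ) (hk : b.2.1 = a.2.1 ^ k) : False := by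
  have ym : (a ^ k)⁻¹ * b ∈ Ga := Ga.mul_mem (Ga.inv_mem (Ga.pow_mem h.ha k)) h.hb
  obtain ⟨v, hv, e⟩ := (good ym).h2
  have hl : lam ((a ^ k)⁻¹ * b) = 1 := by
    rw [lam_ext ym Ga.one_mem (by
      show (a.2.1 ^ k)⁻¹ * b.2.1 = 1
      rw [hk, inv_mul_cancel])]
    exact lamH.map_one
  rw [hl, mul_one, inv_mul_eq_iff_eq_mul] at e
  have h1 := h.h
  rw [e, mul_assoc, mul_assoc, ← ze_comm h.ha, ← mul_assoc, ← pow_succ', pow_succ, mul_assoc] at h1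
  have h2 := mul_left_cancel h1
  rw [← mul_assoc (nu v), ze, nu_mul, conj_nu h.ha] at h2
  have h3 := nu_inj (mul_left_cancel h2)
  exact eleven v a.2.1 h3 hv

def rep (k : ℕ) (c : List ℕ) : List ℕ := (List.replicate k c).flatten
lemma W_rep (k : ℕ) (c : List ℕ) : W (rep k c) = W c ^ k := by
  induction k with
  | zero => rfl
  | succ k ih =>
    rw [pow_succ', ← ih, ← W_append]; rfl

def Dw (i : ℕ) : List ℕ := bif i == 0 then [1,0,0,1,0,0,0,1,0] else cW i

lemma cyc : ∀ i : Fin 8, i.val = 0 ∨ i.val = 5 ∨ i.val = 7 →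
    (bev (cW i) 0 = 1 ∧ bev (cW i) 1 = 2 ∧ bev (cW i) 2 = 3) ∧
    ∀ p : Fin 11, bev (cW i ++ cW i) p.val = p.val ∨ ∃ j k : Fin 8,
      (∀ m : Fin 4, bev (rep m (cW i)) p.val = bev (rep j (Dw i)) m.val) ∧
      ((∀ l : Fin 22, ev (rep j (Dw i)) l.val = ev (rep k (cW i)) l.val) ∨
       (∀ l : Fin 22, ev (cW i) l.val = ev (rep k (rep j (Dw i))) l.val)) := by
  decide +kernel

lemma R_of {x : Tr} (hx : x ∈ Ga) {c : List ℕ} (h : x.2.1 = W c) : x.2.2 = R c := by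
  rw [← om_q] at h
  rw [r_of_q hx (om_mem c) h, om_r]

lemma Bad.cyc {a b : Tr} (h : Bad a b) (i : Fin 8) (hi : i.val = 0 ∨ i.val = 5 ∨ i.val = 7)
    (ha : a.2.1 = W (cW i)) : False := by
  obtain ⟨⟨c0, c1, c2⟩, H⟩ := MH.cyc i hi
  have hr := R_of h.ha ha
  have e0 : a.2.2 0 = 1 := by rw [hr]; apply Fin.ext; rw [R_val']; exact c0
  have e1 : a.2.2 1 = 2 := by rw [hr]; apply Fin.ext; rw [R_val']; exact c1
  have e2 : a.2.2 2 = 3 := by rw [hr]; apply Fin.ext; rw [R_val']; exact c2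
  have b1 : b.2.2 1 = a.2.2 (b.2.2 0) := by rw [h.r, e0]
  have b2 : b.2.2 2 = a.2.2 (a.2.2 (b.2.2 0)) := by rw [← b1, h.r, e1]
  have b3 : b.2.2 3 = a.2.2 (a.2.2 (a.2.2 (b.2.2 0))) := by rw [← b2, h.r, e2]
  rcases H (b.2.2 0) with h2 | ⟨j, k, h3, h4⟩
  · rw [← R_val', R_append, ← hr] at h2
    have h2 : a.2.2 (a.2.2 (b.2.2 0)) = b.2.2 0 := Fin.ext h2
    rw [← b2] at h2
    exact absurd (b.2.2.injective h2) (by decide)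
  · have hq : b.2.1 = W (rep j (Dw i)) := by
      refine q_ext' h.hb _ (lt4 _ ?_ ?_ ?_ ?_)
      · have := h3 0
        rw [← R_val'] at this
        exact this
      · rw [b1]
        have := h3 1
        rw [← R_val'] at this
        have e : R (rep 1 (cW i)) = a.2.2 := by
          rw [hr]; simp [rep]
        change ((R (rep 1 (cW i))) (b.2.2 0)).val = _ at this
        rw [e] at this; exact this
      · rw [b2]
        have := h3 2
        rw [← R_val'] at this
        have e : R (rep 2 (cW i)) = a.2.2 * a.2.2 := by
          rw [hr, ← R_append]; simp [rep]
        change ((R (rep 2 (cW i))) (b.2.2 0)).val = _ at this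
        rw [e] at this; exact this
      · rw [b3]
        have := h3 3
        rw [← R_val'] at this
        have e : R (rep 3 (cW i)) = a.2.2 * (a.2.2 * a.2.2) := by
          rw [hr, ← R_append, ← R_append]; simp [rep]
        change ((R (rep 3 (cW i))) (b.2.2 0)).val = _ at this
        rw [e] at this; exact this
    rcases h4 with h4 | h4
    · apply h.c0 k.val
      rw [hq, ha, W_eq h4, W_rep]
    · apply h.symm.c0 k.val
      rw [hq, ha, W_eq h4, W_rep]

def od : List ℕ := [0,11,11,6,5,0,5,0,3,3,3,6,6,3,6,6,2]
lemma ords : ∀ i : Fin 17, i.val ≠ 0 → i.val ≠ 5 → i.val ≠ 7 →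
    330 = od.getD i.val 0 * (330 / od.getD i.val 0) ∧ ∀ l : Fin 22, ev (rep (od.getD i.val 0) (cW i)) l.val = l.val := by
  decide +kernel

lemma cj_pow (x : Tr) (w : List ℕ) (n : ℕ) (h : ((om w)⁻¹ * x * om w).2.1 ^ n = 1) : x.2.1 ^ n = 1 := by
  have e : ((om w)⁻¹ * x * om w).2.1 = (W w)⁻¹ * x.2.1 * ((W w)⁻¹)⁻¹ := by
    show (om w).2.1⁻¹ * x.2.1 * (om w).2.1 = _
    rw [om_q, inv_inv]
  rw [e, conj_pow] at h
  have := mul_inv_eq_one.1 h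
  exact mul_eq_left.1 this

lemma Bad.ord {a b : Tr} (h : Bad a b) : a.2.1 ^ 330 = 1 := by
  by_cases ht : a.2.2 = 1
  · rw [q_triv h.ha (fun n _ => by rw [ht]; rfl), one_pow]
  obtain ⟨w, i, e⟩ := classify h.ha ht
  by_cases hi : i.val = 0 ∨ i.val = 5 ∨ i.val = 7
  · exact ((h.conj w).cyc ⟨i.val, by omega⟩ hi e).elim
  push Not at hi
  obtain ⟨o1, o2⟩ := ords i hi.1 hi.2.1 hi.2.2
  apply cj_pow a w
  rw [e, o1, pow_mul, ← W_rep, W_eq (w := []) o2]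
  exact one_pow _

lemma not_inv : ∀ i : Fin 16, ∃ l : Fin 22, ev (cW i ++ cW i) l.val ≠ l.val := by decide +kernel

lemma invol {x : Tr} (hx : x ∈ Ga) (h : x.2.1 ^ 2 = 1) (hr : x.2.2 ≠ 1) :
    ∃ w, ((om w)⁻¹ * x * om w).2.1 = W (cW 16) := by
  obtain ⟨w, i, e⟩ := classify hx hr
  refine ⟨w, ?_⟩
  rcases lt_or_ge i.val 16 with hi | hi
  · exfalso
    have h2 : ((om w)⁻¹ * x * om w).2.1 ^ 2 = 1 := by
      have e : ((om w)⁻¹ * x * om w).2.1 = (W w)⁻¹ * x.2.1 * ((W w)⁻¹)⁻¹ := by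
        show (om w).2.1⁻¹ * x.2.1 * (om w).2.1 = _
        rw [om_q, inv_inv]
      rw [e, conj_pow, h]; group
    obtain ⟨l, hl⟩ := not_inv ⟨i.val, hi⟩
    rw [e, pow_two, ← W_append] at h2
    apply hl
    rw [← W_val]
    simp only
    rw [h2]; rfl
  · have : i.val = 16 := by omega
    rw [this] at e; exact e

lemma fixpair : ∀ k : Fin 22, bev (cW 16) (k.val / 2) = k.val / 2 → ev (cW 16) k.val = k.val := by decide +kernel
lemma fixblk : ∀ p : Fin 11, bev (cW 16) p.val = p.val ↔ p = 4 ∨ p = 6 ∨ p = 9 := by decide +kernel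

lemma invol_fix {x : Tr} (hx : x ∈ Ga) (h : x.2.1 ^ 2 = 1) (p : Fin 11) (hp : x.2.2 p = p) :
    x.2.1 (rp p) = rp p := by
  by_cases ht : x.2.2 = 1
  · rw [q_triv hx (fun n _ => by rw [ht]; rfl)]; rfl
  obtain ⟨w, e⟩ := invol hx h ht
  have hr := R_of (cj_mem hx w) e
  have e' : (W w)⁻¹ * x.2.1 * W w = W (cW 16) := by rw [← e, ← om_q]; rfl
  set k := (W w).symm (rp p) with hk
  have hk' : W w k = rp p := (W w).apply_symm_apply _
  have hb : R w (bk k) = p := by rw [← bk_W, hk', bk_rp]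
  have h1 : R (cW 16) (bk k) = bk k := by
    rw [← hr, cj_r, hb, hp, ← hb, Equiv.symm_apply_apply]
  have h2 : W (cW 16) k = k := by
    apply Fin.ext
    rw [W_val]
    apply fixpair
    have := congrArg Fin.val h1
    rwa [R_val'] at this
  have h3 : x.2.1 * W w = W w * W (cW 16) := by rw [← e']; group
  have h4 := congrArg (fun s : Perm (Fin 22) => s k) h3
  simp only [Perm.mul_apply, h2, hk'] at h4
  exact h4

lemma act {x : Tr} (hx : x ∈ Ga) : ∃ u : V, ∀ y, pr (x.1 y) = x.2.1 (pr y) ∧ oo (x.1 y) = oo y + u (x.2.1 (pr y)) := by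
  obtain ⟨u, -, e⟩ := (good hx).h2
  refine ⟨u, fun y => ?_⟩
  have e1 : x.1 y = fl u (li x.2.1 y) := by
    have := congrArg (fun z : Tr => z.1 y) e
    exact this
  rw [e1, pr_fl, oo_fl, pr_li, oo_li]
  exact ⟨rfl, rfl⟩

lemma Bad.fix {a b : Tr} (h : Bad a b) (j : Fin 22) (ha : a.2.1 j = j) (hb : b.2.1 j = j) : False := by
  obtain ⟨u, hu⟩ := act h.ha
  obtain ⟨v, hv⟩ := act h.hb
  have e := congrArg (fun z : Tr => oo (z.1 (MH.mk j 0))) h.h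
  change oo (a.1 (b.1 (MH.mk j 0))) = oo (b.1 (a.1 (fl one (MH.mk j 0)))) at e
  simp only [(hu _).2, (hv _).2, (hu _).1, (hv _).1, pr_fl, oo_fl, pr_mk, oo_mk, ha, hb, one] at e
  generalize u j = c at e
  generalize v j = d at e
  revert e; revert c d; decide

lemma Bad.false2 {a b : Tr} (h : Bad a b) (ha : a.2.1 ^ 2 = 1) (hb : b.2.1 ^ 2 = 1) : False := by
  by_cases ht : a.2.2 = 1
  · apply h.symm.c0 0
    rw [q_triv h.ha (fun n _ => by rw [ht]; rfl), pow_zero]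
  obtain ⟨w, e⟩ := invol h.ha ha ht
  have key : ∃ p : Fin 11, a.2.2 p = p ∧ b.2.2 p = p := by
    have hr := R_of (cj_mem h.ha w) e
    have h' := h.conj w
    have fx : ∀ p : Fin 11, ((om w)⁻¹ * a * om w).2.2 p = p ↔ p = 4 ∨ p = 6 ∨ p = 9 := by
      intro p
      rw [hr, ← fixblk, ← R_val', Fin.ext_iff]
    have hb2 : ∀ p, ((om w)⁻¹ * b * om w).2.2 (((om w)⁻¹ * b * om w).2.2 p) = p := by
      intro p
      have m2 : b ^ 2 ∈ Ga := Ga.pow_mem h.hb 2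
      have hq : b.2.2 ^ 2 = 1 := r_of_q m2 Ga.one_mem hb
      rw [cj_r, cj_r, Equiv.apply_symm_apply, Equiv.symm_apply_eq, ← Perm.mul_apply, ← pow_two, hq]; rfl
    have perm : ∀ p : Fin 11, (p = 4 ∨ p = 6 ∨ p = 9) →
        (((om w)⁻¹ * b * om w).2.2 p = 4 ∨ ((om w)⁻¹ * b * om w).2.2 p = 6 ∨ ((om w)⁻¹ * b * om w).2.2 p = 9) := by
      intro p hp
      rw [← fx] at hp ⊢
      rw [h'.r, hp]
    have : ∃ p : Fin 11, (p = 4 ∨ p = 6 ∨ p = 9) ∧ ((om w)⁻¹ * b * om w).2.2 p = p := by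
      generalize ((om w)⁻¹ * b * om w).2.2 = τ at *
      have p4 := perm 4 (by decide)
      have p6 := perm 6 (by decide)
      have p9 := perm 9 (by decide)
      rcases p4 with p4 | p4 | p4
      · exact ⟨4, by decide, p4⟩
      · refine ⟨9, by decide, ?_⟩
        rcases p9 with p9 | p9 | p9
        · have := hb2 9; rw [p9, p4] at this; exact absurd this (by decide)
        · exact absurd (τ.injective (p9.trans p4.symm)) (by decide)
        · exact p9
      · refine ⟨6, by decide, ?_⟩
        rcases p6 with p6 | p6 | p6
        · have := hb2 6; rw [p6, p4] at this; exact absurd this (by decide)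
        · exact p6
        · exact absurd (τ.injective (p6.trans p4.symm)) (by decide)
    obtain ⟨p, hp, hbp⟩ := this
    rw [← fx] at hp
    refine ⟨R w p, ?_, ?_⟩
    · rw [cj_r, Equiv.symm_apply_eq] at hp; exact hp
    · rw [cj_r, Equiv.symm_apply_eq] at hbp; exact hbp
  obtain ⟨p, h1, h2⟩ := key
  exact h.fix (rp p) (invol_fix h.ha ha p h1) (invol_fix h.hb hb p h2)

lemma Bad.elim {a b : Tr} (h : Bad a b) : False := by
  have h1 := h.pow 82
  have h2 := (h1.symm).pow 82
  refine h2.symm.false2 ?_ ?_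
  · have := h.ord
    show (a.2.1 ^ 165) ^ 2 = 1
    rw [← pow_mul]; exact this
  · have := h.symm.ord
    show (b.2.1 ^ 165) ^ 2 = 1
    rw [← pow_mul]; exact this

lemma ze_not : ¬ IsC ze := by
  rintro ⟨a, ha, b, hb, e⟩
  apply Bad.elim (a := a) (b := b)
  refine ⟨ha, hb, ?_⟩
  rw [e]; group

lemma all_other {x : Tr} (hx : x ∈ Ga) (h : x ≠ ze) : IsC x := by
  by_cases hr : x.2.2 = 1
  · obtain ⟨v, hv, e⟩ := (good hx).h2
    have hq := q_triv hx (fun n _ => by rw [hr]; rfl)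
    have hl : lam x = 1 := by
      rw [lam_ext hx Ga.one_mem hq]; exact lamH.map_one
    rw [hl, mul_one] at e
    rw [e]
    apply triv_case v hv
    rintro rfl
    exact h e
  · exact nontriv hx hr

lemma inj1 {x y : Tr} (hx : x ∈ Ga) (hy : y ∈ Ga) (h : x.1 = y.1) : x = y := by
  obtain ⟨u, hu⟩ := act hx
  obtain ⟨v, hv⟩ := act hy
  have hq : x.2.1 = y.2.1 := by
    ext i
    have h1 := (hu (mk i 0)).1
    have h2 := (hv (mk i 0)).1
    rw [h, h2, pr_mk] at h1
    rw [h1]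
  exact Prod.ext h (Prod.ext hq (r_of_q hx hy hq))

lemma Ga_map : Ga.map (MonoidHom.fst _ _) = GMacHale := by
  rw [Ga, MonoidHom.map_closure, GMacHale]
  congr 1
  rw [Set.image_insert_eq, Set.image_insert_eq, Set.image_pair, g1_eq, g2_eq, g3_eq]
  rfl

lemma down {x : Tr} (hx : x ∈ Ga) : x.1 ∈ GMacHale := by
  rw [← Ga_map]; exact ⟨x, hx, rfl⟩
lemma up {g : Perm (Fin 44)} (hg : g ∈ GMacHale) : ∃ x ∈ Ga, x.1 = g := by
  rw [← Ga_map] at hg; exact hg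

lemma final : ∃! x : GMacHale, ¬ ∃ a b : GMacHale, x = a⁻¹ * b⁻¹ * a * b := by
  refine ⟨⟨ze.1, down ze_mem⟩, ?_, ?_⟩
  · rintro ⟨⟨a, ha⟩, ⟨b, hb⟩, e⟩
    obtain ⟨x, hx, rfl⟩ := up ha
    obtain ⟨y, hy, rfl⟩ := up hb
    refine ze_not ⟨x, hx, y, hy, inj1 ze_mem ?_ (congrArg Subtype.val e)⟩
    exact Ga.mul_mem (Ga.mul_mem (Ga.mul_mem (Ga.inv_mem hx) (Ga.inv_mem hy)) hx) hy
  · rintro ⟨g, hg⟩ hn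
    obtain ⟨x, hx, rfl⟩ := up hg
    by_cases h : x = ze
    · subst h; rfl
    · obtain ⟨a, ha, b, hb, e⟩ := all_other hx h
      exact (hn ⟨⟨a.1, down ha⟩, ⟨b.1, down hb⟩, Subtype.ext (congrArg Prod.fst e)⟩).elim

end MH

/-- The group `G_MacHale` contains exactly one element which is not a commutator. -/
theorem stmt_14 : ∃! x : GMacHale, ¬ ∃ a b : GMacHale, x = a⁻¹ * b⁻¹ * a * b := by
  exact MH.final
end
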